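/- arXiv:1512.01160 — 7 statements merged into one kernel-verified Lean document; each statement's English description precedes it below -/
import Mathlib

section
/- Let 1 ≤ d ≤ 19 and let 0 < α_1 ≤ α_2 ≤ … ≤ α_{d-1} ≤ α_d = 1. Consider the torus T^d_α = (0, 2π/α_1) × … × (0, 2π/α_{d-1}) × (0, 2π). Let V : ℝ^d → ℝ be continuous, nonnegative, and periodic with period 2π/α_j in the j-th variable, and let γ ≥ 1 be real. Suppose φ_1, …, φ_N : ℝ^d → ℝ are smooth functions, periodic with period 2π/α_j in the j-th variable, orthonormal in L²(T^d_α), and for each n there is λ_n > 0 such that −Δφ_n − P(V · (Pφ_n)) = −λ_n φ_n on ℝ^d. Then ∑_{n=1}^N λ_n^γ ≤ (π/√3)^d · (Γ(γ+1) / (2^d π^{d/2} Γ(γ + d/2 + 1))) · ∫_{T^d_α} V(x)^{γ + d/2} dx. -/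
open Real MeasureTheory

/-- Second partial derivative of `f : ℝ^d → ℝ` with respect to the `i`-th coordinate. -/
noncomputable def pd2 {d : ℕ} (i : Fin d) (f : (Fin d → ℝ) → ℝ) (x : Fin d → ℝ) : ℝ :=
  deriv (fun s => deriv (fun t => f (Function.update x i t)) s) (x i)

/-- The projection removing the average with respect to the `j`-th coordinate over `(0, 2π)`:
`(Pψ)(x) = ψ(x) − (1/(2π)) ∫_0^{2π} ψ(x₁,…,t,…) dt`. -/
noncomputable def projP {d : ℕ} (j : Fin d) (ψ : (Fin d → ℝ) → ℝ) (x : Fin d → ℝ) : ℝ :=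
  ψ x - (1 / (2 * π)) * ∫ t in (0:ℝ)..(2 * π), ψ (Function.update x j t)


open Real MeasureTheory
open scoped ENNReal InnerProductSpace

lemma split_ineq (η : ℝ) (h0 : 0 < η) (h1 : η ≤ 1) (z p : ℂ) :
    (1 - η) * ‖z‖ ^ 2 ≤ ‖z - p‖ ^ 2 + (1 / η - 1) * ‖p‖ ^ 2 := by
  have h : ‖z‖ ≤ ‖z - p‖ + ‖p‖ := by simpa using norm_add_le (z - p) p
  have hz := norm_nonneg z
  have hq := norm_nonneg (z - p)
  have hp := norm_nonneg p
  generalize ‖z‖ = x at *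
  generalize ‖z - p‖ = y at *
  generalize ‖p‖ = v at *
  have h2 : x ^ 2 ≤ (y + v) ^ 2 := by gcongr
  have h3 : (1 - η) * x ^ 2 ≤ (1 - η) * (y + v) ^ 2 := by
    apply mul_le_mul_of_nonneg_left h2; linarith
  have h4 : y ^ 2 + (1 / η - 1) * v ^ 2 - (1 - η) * (y + v) ^ 2
      = (η * y - (1 - η) * v) ^ 2 / η := by field_simp; ring
  have h5 : 0 ≤ (η * y - (1 - η) * v) ^ 2 / η := by positivity
  linarith

lemma inner_self_cplx {H : Type*} [NormedAddCommGroup H] [InnerProductSpace ℂ H] (f : H) :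
    ⟪f, f⟫_ℂ = ((‖f‖ ^ 2 : ℝ) : ℂ) := by
  rw [inner_self_eq_norm_sq_to_K]; push_cast; rfl

lemma lint_sq {X : Type*} [MeasurableSpace X] {μ : Measure X} (f : Lp ℂ 2 μ) :
    ∫⁻ x, ENNReal.ofReal (‖f x‖ ^ 2) ∂μ = ENNReal.ofReal (‖f‖ ^ 2) := by
  rw [← ofReal_integral_eq_lintegral_ofReal]
  · congr 1
    have := L2.inner_def (𝕜 := ℂ) f f
    rw [inner_self_cplx] at this
    have h2 : (fun x => ⟪f x, f x⟫_ℂ) = fun x => ((‖f x‖ ^ 2 : ℝ) : ℂ) := by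
      ext x; rw [inner_self_cplx]
    rw [h2, integral_complex_ofReal] at this
    exact_mod_cast this.symm
  · exact (memLp_two_iff_integrable_sq_norm (Lp.aestronglyMeasurable f)).1 (Lp.memLp f)
  · filter_upwards with x; positivity

lemma parseval_sq {K H : Type*} [NormedAddCommGroup H] [InnerProductSpace ℂ H]
    (b : HilbertBasis K ℂ H) (f : H) :
    ENNReal.ofReal (‖f‖ ^ 2) = ∑' k, ENNReal.ofReal (‖⟪b k, f⟫_ℂ‖ ^ 2) := by
  have h := b.hasSum_inner_mul_inner f f
  have h2 : HasSum (fun k => ‖⟪b k, f⟫_ℂ‖ ^ 2) (‖f‖ ^ 2) := by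
    have h3 : (fun i => ⟪f, b i⟫_ℂ * ⟪b i, f⟫_ℂ) = fun i => ((‖⟪b i, f⟫_ℂ‖ ^ 2 : ℝ) : ℂ) := by
      ext i
      rw [← inner_conj_symm, mul_comm, ]
      rw [Complex.mul_conj, Complex.normSq_eq_norm_sq]
    rw [h3, inner_self_cplx] at h
    exact_mod_cast h
  rw [← h2.tsum_eq, ENNReal.ofReal_tsum_of_nonneg (fun _ => by positivity) h2.summable]

lemma lp_coeFn_sum {X K : Type*} [MeasurableSpace X] {μ : Measure X} (F : Finset K)
    (f : K → Lp ℂ 2 μ) : (∑ k ∈ F, f k : Lp ℂ 2 μ) =ᵐ[μ] fun x => ∑ k ∈ F, f k x := by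
  classical
  induction F using Finset.induction_on with
  | empty => simp only [Finset.sum_empty]; exact Lp.coeFn_zero ℂ 2 μ
  | insert k F hk ih =>
    rw [Finset.sum_insert hk]
    filter_upwards [ih, Lp.coeFn_add (f k) (∑ k ∈ F, f k)] with x hx hx2
    rw [hx2, Pi.add_apply, hx, Finset.sum_insert hk]

lemma fixedE {X K : Type*} [MeasurableSpace X] {μ : Measure X} {N : ℕ}
    (b : HilbertBasis K ℂ (Lp ℂ 2 μ)) (e : K → X → ℂ) (he : ∀ k, b k =ᵐ[μ] e k)
    (he1 : ∀ k x, ‖e k x‖ = 1) (U : Fin N → Lp ℂ 2 μ) (hU : Orthonormal ℂ U)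
    (F : Finset K) (w : K → ℝ) (hw : ∀ k ∉ F, w k = 0) (G : ℝ) (hG : ∑ k ∈ F, w k ^ 2 ≤ G)
    (η : X → ℝ) (h0 : ∀ x, 0 < η x) (h1 : ∀ x, η x ≤ 1) (hm : Measurable η) :
    ∫⁻ x, ENNReal.ofReal ((1 - η x) * ∑ n, ‖U n x‖ ^ 2) ∂μ ≤
      (∑ n, ∑' k, ENNReal.ofReal ((1 - w k) ^ 2 * ‖⟪b k, U n⟫_ℂ‖ ^ 2)) +
      ENNReal.ofReal G * ∫⁻ x, ENNReal.ofReal (1 / η x - 1) ∂μ := by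
  classical
  have hG0 : 0 ≤ G := le_trans (Finset.sum_nonneg fun _ _ => by positivity) hG
  set ψ : Fin N → Lp ℂ 2 μ := fun n => ∑ k ∈ F, ((w k : ℂ) * ⟪b k, U n⟫_ℂ) • b k with hψ
  have hψx : ∀ n, ψ n =ᵐ[μ] fun x => ∑ k ∈ F, ((w k : ℂ) * ⟪b k, U n⟫_ℂ) * e k x := by
    intro n
    have h1 := lp_coeFn_sum (μ := μ) F (fun k => ((w k : ℂ) * ⟪b k, U n⟫_ℂ) • b k)
    have h2 : ∀ᵐ x ∂μ, ∀ k ∈ F, (((w k : ℂ) * ⟪b k, U n⟫_ℂ) • b k : Lp ℂ 2 μ) x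
        = ((w k : ℂ) * ⟪b k, U n⟫_ℂ) * e k x := by
      rw [Filter.eventually_all_finset]
      intro k _
      filter_upwards [Lp.coeFn_smul ((w k : ℂ) * ⟪b k, U n⟫_ℂ) (b k), he k] with x hx hx2
      rw [hx, Pi.smul_apply, hx2, smul_eq_mul]
    filter_upwards [h1, h2] with x hx hx2
    rw [hψ, hx]
    exact Finset.sum_congr rfl hx2
  have bessel : ∀ x, ∑ n, ‖∑ k ∈ F, ((w k : ℂ) * ⟪b k, U n⟫_ℂ) * e k x‖ ^ 2 ≤ G := by
    intro x
    set g : Lp ℂ 2 μ := ∑ k ∈ F, ((w k : ℂ) * (starRingEnd ℂ) (e k x)) • b k with hg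
    have hgU : ∀ n, ⟪U n, g⟫_ℂ = (starRingEnd ℂ) (∑ k ∈ F, ((w k : ℂ) * ⟪b k, U n⟫_ℂ) * e k x) := by
      intro n
      rw [hg, inner_sum, map_sum]
      refine Finset.sum_congr rfl fun k _ => ?_
      rw [inner_smul_right]
      simp
      ring
    have hgn : ‖g‖ ^ 2 = ∑ k ∈ F, w k ^ 2 := by
      have h := b.orthonormal.inner_sum (fun k => ((w k : ℂ) * (starRingEnd ℂ) (e k x)))
        (fun k => ((w k : ℂ) * (starRingEnd ℂ) (e k x))) F
      rw [inner_self_cplx] at h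
      have h2 : ∀ k ∈ F, (starRingEnd ℂ) ((w k : ℂ) * (starRingEnd ℂ) (e k x)) * ((w k : ℂ) * (starRingEnd ℂ) (e k x)) = ((w k ^ 2 : ℝ) : ℂ) := by
        intro k _
        rw [mul_comm, Complex.mul_conj, Complex.normSq_eq_norm_sq]
        simp [he1]
      rw [Finset.sum_congr rfl h2] at h
      exact_mod_cast h
    have := hU.sum_inner_products_le g (s := Finset.univ)
    rw [hgn] at this
    refine le_trans (le_of_eq ?_) (this.trans hG)
    refine Finset.sum_congr rfl fun n _ => ?_
    rw [hgU n, RCLike.norm_conj]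
  have pw : ∀ᵐ x ∂μ, (1 - η x) * ∑ n, ‖U n x‖ ^ 2 ≤
      (∑ n, ‖(U n - ψ n : Lp ℂ 2 μ) x‖ ^ 2) + G * (1 / η x - 1) := by
    have e1 : ∀ᵐ x ∂μ, ∀ n, (U n - ψ n : Lp ℂ 2 μ) x = U n x - ψ n x := by
      rw [ae_all_iff]; intro n; exact Lp.coeFn_sub _ _
    have e2 : ∀ᵐ x ∂μ, ∀ n, ψ n x = ∑ k ∈ F, ((w k : ℂ) * ⟪b k, U n⟫_ℂ) * e k x := by
      rw [ae_all_iff]; exact hψx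
    filter_upwards [e1, e2] with x hx hx2
    have hb := bessel x
    simp only [← hx2] at hb
    have hη : 0 ≤ 1 / η x - 1 := by
      have : 1 ≤ 1 / η x := by rw [le_div_iff₀ (h0 x)]; linarith [h1 x]
      linarith
    calc _ = ∑ n, (1 - η x) * ‖U n x‖ ^ 2 := by rw [Finset.mul_sum]
      _ ≤ ∑ n, (‖U n x - ψ n x‖ ^ 2 + (1 / η x - 1) * ‖ψ n x‖ ^ 2) :=
          Finset.sum_le_sum fun n _ => split_ineq _ (h0 x) (h1 x) _ _
      _ = ∑ n, ‖U n x - ψ n x‖ ^ 2 + (1 / η x - 1) * ∑ n, ‖ψ n x‖ ^ 2 := by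
          rw [Finset.sum_add_distrib, Finset.mul_sum]
      _ ≤ _ := by
          simp only [hx]
          nlinarith [mul_le_mul_of_nonneg_left hb hη]
  calc _ ≤ ∫⁻ x, ((∑ n, ENNReal.ofReal (‖(U n - ψ n : Lp ℂ 2 μ) x‖ ^ 2)) +
        ENNReal.ofReal G * ENNReal.ofReal (1 / η x - 1)) ∂μ := by
        refine lintegral_mono_ae ?_
        filter_upwards [pw] with x hx
        refine (ENNReal.ofReal_le_ofReal hx).trans ?_
        refine ENNReal.ofReal_add_le.trans ?_
        rw [ENNReal.ofReal_sum_of_nonneg (fun _ _ => by positivity), ENNReal.ofReal_mul hG0]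
    _ = _ := by
        rw [lintegral_add_right _ (by fun_prop), lintegral_const_mul _ (by fun_prop)]
        congr 1
        rw [lintegral_finsetSum']
        · refine Finset.sum_congr rfl fun n _ => ?_
          rw [lint_sq, parseval_sq b]
          refine tsum_congr fun k => ?_
          congr 1
          have : ⟪b k, U n - ψ n⟫_ℂ = (1 - (w k : ℂ)) * ⟪b k, U n⟫_ℂ := by
            rw [inner_sub_right]
            have : ⟪b k, ψ n⟫_ℂ = (w k : ℂ) * ⟪b k, U n⟫_ℂ := by
              by_cases hk : k ∈ F
              · rw [hψ]; exact b.orthonormal.inner_right_sum _ hk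
              · rw [hw k hk, hψ, inner_sum]
                simp only [Complex.ofReal_zero, zero_mul]
                refine Finset.sum_eq_zero fun i hi => ?_
                rw [inner_smul_right, orthonormal_iff_ite.1 b.orthonormal k i, if_neg, mul_zero]
                rintro rfl; exact hk hi
            rw [this]; ring
          rw [this, norm_mul, mul_pow]
          congr 1
          rw [← Complex.ofReal_one, ← Complex.ofReal_sub, Complex.norm_real, Real.norm_eq_abs, sq_abs]
        · intro n _
          have := (Lp.aestronglyMeasurable (U n - ψ n)).norm.aemeasurable
          fun_prop

open Real MeasureTheory
open scoped ENNReal InnerProductSpace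

noncomputable def wf (a b c u : ℝ) : ℝ := if u ≤ a then 1 - b * u + c * u ^ 2 else 0

noncomputable def Acon (a b c : ℝ) : ℝ := 1 / a + b ^ 2 * a - b * c * a ^ 2 + c ^ 2 * a ^ 3 / 3

lemma wf_int (a b c κ : ℝ) (ha : 0 < a) (hκ : 0 < κ) :
    ∫⁻ E in Set.Ioi (0:ℝ), ENNReal.ofReal ((1 - wf a b c (κ / E)) ^ 2) ≤
      ENNReal.ofReal (Acon a b c * κ) := by
  set p := κ / a with hp
  have hp0 : 0 < p := by positivity
  have hsplit : Set.Ioi (0:ℝ) = Set.Ioo 0 p ∪ Set.Ici p := by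
    ext x; simp only [Set.mem_Ioi, Set.mem_union, Set.mem_Ioo, Set.mem_Ici]
    constructor
    · intro h; by_cases h2 : x < p
      · left; exact ⟨h, h2⟩
      · right; linarith
    · rintro (h | h)
      · exact h.1
      · linarith
  set g : ℝ → ℝ := fun E => (b * κ / E - c * κ ^ 2 / E ^ 2) ^ 2 with hg
  set f : ℝ → ℝ := fun E => -(b ^ 2 * κ ^ 2) * E⁻¹ + b * c * κ ^ 3 * (E⁻¹) ^ 2
    - c ^ 2 * κ ^ 4 / 3 * (E⁻¹) ^ 3 with hf
  have hder : ∀ x ∈ Set.Ici p, HasDerivAt f (g x) x := by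
    intro x hx
    have hx0 : x ≠ 0 := by have : p ≤ x := hx; linarith
    have h1 := hasDerivAt_inv hx0
    have h2 := ((h1.const_mul (-(b ^ 2 * κ ^ 2))).add ((h1.pow 2).const_mul (b * c * κ ^ 3))).sub
      ((h1.pow 3).const_mul (c ^ 2 * κ ^ 4 / 3))
    refine h2.congr_deriv ?_
    simp only [hg, Nat.add_one_sub_one, Nat.reduceSub, pow_one, Nat.cast_ofNat]
    field_simp
    ring
  have hlim : Filter.Tendsto f Filter.atTop (nhds 0) := by
    have h := tendsto_inv_atTop_zero (𝕜 := ℝ)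
    have h2 := ((h.const_mul (-(b ^ 2 * κ ^ 2))).add ((h.pow 2).const_mul (b * c * κ ^ 3))).sub
      ((h.pow 3).const_mul (c ^ 2 * κ ^ 4 / 3))
    simpa [hf] using h2
  have hgpos : ∀ x ∈ Set.Ioi p, 0 ≤ g x := fun x _ => by simp only [hg]; positivity
  have hint := integrableOn_Ioi_deriv_of_nonneg' hder hgpos hlim
  have hval := integral_Ioi_of_hasDerivAt_of_nonneg' hder hgpos hlim
  rw [hsplit]
  refine (lintegral_union_le _ _ _).trans ?_
  have e1 : ∫⁻ E in Set.Ioo 0 p, ENNReal.ofReal ((1 - wf a b c (κ / E)) ^ 2) ≤ ENNReal.ofReal p := by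
    calc _ ≤ ∫⁻ E in Set.Ioo 0 p, 1 := by
          refine setLIntegral_mono measurable_const fun E hE => ?_
          have : ¬ (κ / E ≤ a) := by
            rw [div_le_iff₀ hE.1, not_le]
            have := hE.2
            rw [hp, lt_div_iff₀ ha] at this
            linarith
          simp [wf, this]
      _ = _ := by simp
  have e2 : ∫⁻ E in Set.Ici p, ENNReal.ofReal ((1 - wf a b c (κ / E)) ^ 2) ≤ ENNReal.ofReal (0 - f p) := by
    rw [← hval, ofReal_integral_eq_lintegral_ofReal hint
      ((ae_restrict_iff' measurableSet_Ioi).2 (Filter.Eventually.of_forall hgpos)),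
      setLIntegral_congr Ioi_ae_eq_Ici.symm]
    refine le_of_eq (setLIntegral_congr_fun measurableSet_Ioi fun E hE => ?_)
    have hE' : p < E := hE
    have hE0 : 0 < E := hp0.trans hE
    have : κ / E ≤ a := by
      rw [div_le_iff₀ hE0]
      rw [hp, div_lt_iff₀ ha] at hE'
      linarith
    simp only [wf, this, if_true, hg]
    congr 1
    field_simp
    ring
  refine (add_le_add e1 e2).trans ?_
  have hfp : 0 ≤ 0 - f p := by
    rw [← hval]; exact setIntegral_nonneg measurableSet_Ioi hgpos
  rw [← ENNReal.ofReal_add hp0.le hfp]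
  refine le_of_eq ?_
  congr 1
  simp only [hf, hp, Acon]
  field_simp
  ring

noncomputable def eta (s M E : ℝ) : ℝ := if E < M then (E / M) ^ s else 1

lemma eta_pos {s M E : ℝ} (hE : 0 < E) : 0 < eta s M E := by
  unfold eta; split_ifs with h
  · have : 0 < M := hE.trans h
    positivity
  · norm_num

lemma eta_le {s M E : ℝ} (hs : 0 < s) (hE : 0 < E) : eta s M E ≤ 1 := by
  unfold eta; split_ifs with h
  · have : 0 < M := hE.trans h
    exact rpow_le_one (by positivity) (by rw [div_le_one this]; exact h.le) hs.le
  · norm_num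

lemma lint_Ioi_split (M : ℝ) (hM : 0 ≤ M) (f g : ℝ → ℝ) (h1 : ∀ E ∈ Set.Ioo 0 M, f E = g E)
    (h0 : ∀ E, M ≤ E → f E = 0) (hg : ∀ E ∈ Set.Ioo 0 M, 0 ≤ g E)
    (hi : IntervalIntegrable g volume 0 M) :
    ∫⁻ E in Set.Ioi (0:ℝ), ENNReal.ofReal (f E) = ENNReal.ofReal (∫ E in (0:ℝ)..M, g E) := by
  have hsplit : Set.Ioi (0:ℝ) = Set.Ioo 0 M ∪ (Set.Ici M ∩ Set.Ioi 0) := by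
    ext x; simp only [Set.mem_Ioi, Set.mem_union, Set.mem_Ioo, Set.mem_Ici, Set.mem_inter_iff]
    constructor
    · intro h; by_cases h2 : x < M
      · left; exact ⟨h, h2⟩
      · right; exact ⟨by linarith, h⟩
    · rintro (h | h)
      · exact h.1
      · exact h.2
  rw [hsplit, lintegral_union (measurableSet_Ici.inter measurableSet_Ioi)]
  · have e2 : ∫⁻ E in Set.Ici M ∩ Set.Ioi 0, ENNReal.ofReal (f E) = 0 := by
      rw [setLIntegral_congr_fun (g := fun _ => 0) (measurableSet_Ici.inter measurableSet_Ioi)]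
      · simp
      · intro E hE; simp [h0 E hE.1]
    rw [e2, add_zero, intervalIntegral.integral_of_le hM, integral_Ioc_eq_integral_Ioo,
      ofReal_integral_eq_lintegral_ofReal]
    · exact setLIntegral_congr_fun measurableSet_Ioo fun E hE => by simp only [h1 E hE]
    · exact ((intervalIntegrable_iff_integrableOn_Ioo_of_le hM).1 hi)
    · exact (ae_restrict_iff' measurableSet_Ioo).2 (Filter.Eventually.of_forall hg)
  · rw [Set.disjoint_left]; rintro x hx ⟨hx2, _⟩
    have : M ≤ x := hx2
    linarith [hx.2]

lemma eta_int1 {s M : ℝ} (hs : 0 < s) (hM : 0 ≤ M) :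
    ∫⁻ E in Set.Ioi (0:ℝ), ENNReal.ofReal (1 - eta s M E) = ENNReal.ofReal (M * s / (1 + s)) := by
  have hi : IntervalIntegrable (fun E : ℝ => E ^ s) volume 0 M :=
    intervalIntegral.intervalIntegrable_rpow' (by linarith)
  rw [lint_Ioi_split M hM _ (fun E => 1 - (M ^ s)⁻¹ * E ^ s)]
  · congr 1
    rw [intervalIntegral.integral_sub (by simp) (hi.const_mul _),
      intervalIntegral.integral_const_mul, integral_rpow (Or.inl (by linarith))]
    rcases hM.eq_or_lt with h | h
    · subst h; simp [zero_rpow (by linarith : s + 1 ≠ 0)]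
    · rw [rpow_add h, zero_rpow (by linarith : s + 1 ≠ 0)]
      have : M ^ s ≠ 0 := by positivity
      simp
      field_simp
      ring
  · intro E hE
    simp only [eta, hE.2, if_true]
    rw [div_rpow hE.1.le hM]; ring
  · intro E hE; simp [eta, not_lt.2 hE]
  · intro E hE
    have h1 := eta_le (M := M) hs hE.1
    simp only [eta, hE.2, if_true] at h1
    rw [div_rpow hE.1.le hM] at h1
    rw [div_eq_inv_mul] at h1
    linarith
  · exact (by simp : IntervalIntegrable (fun _ => (1:ℝ)) volume 0 M).sub (hi.const_mul _)

lemma eta_int2 {s M : ℝ} (hs : 0 < s) (hM : 0 ≤ M) :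
    ∫⁻ E in Set.Ioi (0:ℝ), ENNReal.ofReal (E ^ (2 * s) * (1 / eta s M E - 1)) =
      ENNReal.ofReal (M ^ (1 + 2 * s) * (1 / (1 + s) - 1 / (1 + 2 * s))) := by
  have hi : IntervalIntegrable (fun E : ℝ => E ^ s) volume 0 M :=
    intervalIntegral.intervalIntegrable_rpow' (by linarith)
  have hi2 : IntervalIntegrable (fun E : ℝ => E ^ (2 * s)) volume 0 M :=
    intervalIntegral.intervalIntegrable_rpow' (by linarith)
  have key : ∀ E ∈ Set.Ioo 0 M, E ^ (2 * s) * (1 / eta s M E - 1) = M ^ s * E ^ s - E ^ (2 * s) := by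
    intro E hE
    simp only [eta, hE.2, if_true]
    rw [div_rpow hE.1.le hM, two_mul, rpow_add hE.1]
    have := rpow_pos_of_pos hE.1 s
    have := rpow_pos_of_pos (hE.1.trans hE.2) s
    field_simp
  rw [lint_Ioi_split M hM _ (fun E => M ^ s * E ^ s - E ^ (2 * s))]
  · congr 1
    rw [intervalIntegral.integral_sub (hi.const_mul _) hi2,
      intervalIntegral.integral_const_mul, integral_rpow (Or.inl (by linarith)),
      integral_rpow (Or.inl (by linarith))]
    rcases hM.eq_or_lt with h | h
    · subst h
      simp [zero_rpow (by linarith : s + 1 ≠ 0), zero_rpow (by linarith : 1 + 2 * s ≠ 0),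
        zero_rpow (by linarith : 2 * s + 1 ≠ 0)]
    · rw [zero_rpow (by linarith : s + 1 ≠ 0), zero_rpow (by linarith : 2 * s + 1 ≠ 0)]
      have : M ^ s * M ^ (s + 1) = M ^ (1 + 2 * s) := by
        rw [← rpow_add h]; congr 1; ring
      rw [sub_zero, sub_zero, ← mul_div_assoc, this, add_comm (2 * s) 1, add_comm s 1]
      ring
  · exact key
  · intro E hE; simp [eta, not_lt.2 hE]
  · intro E hE
    rw [← key E hE]
    have h1 := eta_le (M := M) hs hE.1
    have h2 := eta_pos (s := s) (M := M) hE.1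
    have h3 : 1 ≤ 1 / eta s M E := by rw [le_div_iff₀ h2]; linarith
    have := rpow_pos_of_pos hE.1 (2 * s)
    exact mul_nonneg this.le (by linarith)
  · exact (hi.const_mul _).sub hi2

lemma core {X K : Type*} [MeasurableSpace X] {μ : Measure X} [SFinite μ] [Countable K] {N : ℕ}
    (bs : HilbertBasis K ℂ (Lp ℂ 2 μ)) (e : K → X → ℂ) (he : ∀ k, bs k =ᵐ[μ] e k)
    (he1 : ∀ k x, ‖e k x‖ = 1) (U : Fin N → Lp ℂ 2 μ) (hU : Orthonormal ℂ U)
    (κ : K → ℝ) (Q : K → Prop) (hκ : ∀ k, Q k → 0 < κ k) (hQ : ∀ n k, ¬ Q k → ⟪bs k, U n⟫_ℂ = 0)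
    (a b c : ℝ) (ha : 0 < a) (s : ℝ) (hs : 0 < s) (C : ℝ) (hC0 : 0 ≤ C)
    (hfin : ∀ E > 0, {k | Q k ∧ κ k ≤ a * E}.Finite)
    (hC : ∀ E > 0, ∀ F : Finset K, (∀ k ∈ F, Q k) →
      ∑ k ∈ F, (wf a b c (κ k / E)) ^ 2 ≤ C * E ^ (2 * s))
    (W : X → ℝ) (hW : Measurable W) (hW0 : ∀ x, 0 ≤ W x) (hA : 0 < Acon a b c) :
    ∫⁻ x, ENNReal.ofReal (Acon a b c * W x * ∑ n, ‖U n x‖ ^ 2) ∂μ ≤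
      (∑ n, ∑' k, ENNReal.ofReal (Acon a b c * κ k * ‖⟪bs k, U n⟫_ℂ‖ ^ 2)) +
      ENNReal.ofReal C * ∫⁻ x, ENNReal.ofReal ((Acon a b c * W x * (1 + s) / s) ^ (1 + 2 * s)
        * (1 / (1 + s) - 1 / (1 + 2 * s))) ∂μ := by
  classical
  set A := Acon a b c with hAdef
  set M : X → ℝ := fun x => A * W x * (1 + s) / s with hM
  have hM0 : ∀ x, 0 ≤ M x := fun x => by have := hW0 x; simp only [hM]; positivity
  have hMm : Measurable M := by simp only [hM]; fun_prop
  have hetam : Measurable (fun p : ℝ × X => eta s (M p.2) p.1) := by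
    unfold eta
    refine Measurable.ite (measurableSet_lt (by fun_prop) (by fun_prop)) ?_ measurable_const
    exact (measurable_fst.div (hMm.comp measurable_snd)).pow_const s
  have hUm : ∀ n, Measurable fun x => ‖U n x‖ := fun n =>
    (Lp.stronglyMeasurable (U n)).measurable.norm
  have hρm : Measurable fun x => ∑ n, ‖U n x‖ ^ 2 :=
    Finset.measurable_sum _ fun n _ => (hUm n).pow_const 2
  have hρ0 : ∀ x, 0 ≤ ∑ n, ‖U n x‖ ^ 2 := fun x => Finset.sum_nonneg fun _ _ => by positivity
  have hetaE : ∀ E, Measurable fun x => eta s (M x) E := fun E =>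
    hetam.comp (measurable_const.prodMk measurable_id)
  have hetax : ∀ x, Measurable fun E => eta s (M x) E := fun x =>
    hetam.comp (measurable_id.prodMk measurable_const)
  have step1 : ∫⁻ x, ENNReal.ofReal (A * W x * ∑ n, ‖U n x‖ ^ 2) ∂μ =
      ∫⁻ E in Set.Ioi (0:ℝ), ∫⁻ x, ENNReal.ofReal ((1 - eta s (M x) E) * ∑ n, ‖U n x‖ ^ 2) ∂μ := by
    rw [lintegral_lintegral_swap]
    · refine lintegral_congr fun x => ?_
      have h : ∀ E, ENNReal.ofReal ((1 - eta s (M x) E) * ∑ n, ‖U n x‖ ^ 2)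
          = ENNReal.ofReal (1 - eta s (M x) E) * ENNReal.ofReal (∑ n, ‖U n x‖ ^ 2) := fun E =>
        ENNReal.ofReal_mul' (hρ0 x)
      simp_rw [h]
      rw [lintegral_mul_const _ (by have := hetax x; fun_prop), eta_int1 hs (hM0 x),
        ← ENNReal.ofReal_mul' (hρ0 x)]
      congr 2
      simp only [hM]
      field_simp
    · apply Measurable.aemeasurable
      have : Measurable fun p : ℝ × X => ∑ n, ‖U n p.2‖ ^ 2 := hρm.comp measurable_snd
      exact ((measurable_const.sub hetam).mul this).ennreal_ofReal
  have step2 : ∀ E ∈ Set.Ioi (0:ℝ),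
      ∫⁻ x, ENNReal.ofReal ((1 - eta s (M x) E) * ∑ n, ‖U n x‖ ^ 2) ∂μ ≤
      (∑ n, ∑' k, ENNReal.ofReal ((1 - wf a b c (κ k / E)) ^ 2 * ‖⟪bs k, U n⟫_ℂ‖ ^ 2)) +
      ENNReal.ofReal C * ∫⁻ x, ENNReal.ofReal (E ^ (2 * s) * (1 / eta s (M x) E - 1)) ∂μ := by
    intro E hE
    have hE0 : 0 < E := hE
    set F := (hfin E hE).toFinset with hF
    have hFm : ∀ k, k ∈ F ↔ Q k ∧ κ k ≤ a * E := fun k => by simp [hF]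
    have h := fixedE bs e he he1 U hU F (fun k => if k ∈ F then wf a b c (κ k / E) else 0)
      (fun k hk => by simp [hk]) (C * E ^ (2 * s)) (by
        rw [Finset.sum_congr rfl (g := fun k => (wf a b c (κ k / E)) ^ 2)
          (fun k hk => by simp [hk])]
        exact hC E hE F fun k hk => ((hFm k).1 hk).1) (fun x => eta s (M x) E)
      (fun x => eta_pos hE) (fun x => eta_le hs hE) (hetaE E)
    refine h.trans (add_le_add ?_ ?_)
    · refine Finset.sum_le_sum fun n _ => ENNReal.tsum_le_tsum fun k => ?_
      by_cases hk : k ∈ F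
      · simp [hk]
      · by_cases hq : Q k
        · have h1 : ¬ κ k ≤ a * E := fun h => hk ((hFm k).2 ⟨hq, h⟩)
          have h2 : ¬ κ k / E ≤ a := by rwa [div_le_iff₀ hE0]
          simp [hk, wf, h2]
        · simp [hQ n k hq]
    · rw [ENNReal.ofReal_mul hC0, mul_assoc, ← lintegral_const_mul _ (by have := hetaE E; fun_prop)]
      gcongr with x
      rw [ENNReal.ofReal_mul (by positivity)]
  rw [step1]
  refine (setLIntegral_mono' measurableSet_Ioi step2).trans ?_
  rw [lintegral_add_right']
  · refine add_le_add ?_ ?_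
    · have hm : ∀ n k, Measurable fun E =>
          ENNReal.ofReal ((1 - wf a b c (κ k / E)) ^ 2 * ‖⟪bs k, U n⟫_ℂ‖ ^ 2) := by
        intro n k
        have : Measurable fun E => wf a b c (κ k / E) := by
          unfold wf
          refine Measurable.ite (measurableSet_le (by fun_prop) (by fun_prop)) (by fun_prop)
            measurable_const
        fun_prop
      rw [lintegral_finsetSum _ (fun n _ => Measurable.tsum (hm n))]
      refine Finset.sum_le_sum fun n _ => ?_
      rw [lintegral_tsum (fun k => (hm n k).aemeasurable)]
      refine ENNReal.tsum_le_tsum fun k => ?_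
      by_cases hq : Q k
      · simp_rw [ENNReal.ofReal_mul' (sq_nonneg ‖⟪bs k, U n⟫_ℂ‖)]
        rw [lintegral_mul_const']
        · gcongr
          exact wf_int a b c (κ k) ha (hκ k hq)
        · exact ENNReal.ofReal_ne_top
      · simp [hQ n k hq]
    · rw [lintegral_const_mul']
      · gcongr
        rw [lintegral_lintegral_swap]
        · gcongr with x
          rw [eta_int2 hs (hM0 x)]
        · apply Measurable.aemeasurable
          have h3 : Measurable fun p : ℝ × X => p.1 ^ (2 * s) := measurable_fst.pow_const _
          exact (h3.mul ((measurable_const.div hetam).sub measurable_const)).ennreal_ofReal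
      · exact ENNReal.ofReal_ne_top
  · apply AEMeasurable.const_mul
    apply Measurable.aemeasurable
    have h3 : Measurable fun p : ℝ × X => p.1 ^ (2 * s) := measurable_fst.pow_const _
    exact Measurable.lintegral_prod_right
      (h3.mul ((measurable_const.div hetam).sub measurable_const)).ennreal_ofReal

open Real MeasureTheory
open scoped ENNReal InnerProductSpace

noncomputable def Th (q : ℝ) : ℝ := ∑' n : ℤ, exp (-π * q * (n : ℝ) ^ 2)

lemma th_nat_le (q : ℝ) (hq : 0 < q) (n : ℕ) :
    exp (-π * q * (n : ℝ) ^ 2) ≤ exp (-π * q) ^ n := by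
  rw [← exp_nat_mul]
  apply exp_le_exp.2
  have h : (n : ℝ) ≤ (n : ℝ) ^ 2 := by
    have : n ≤ n ^ 2 := Nat.le_self_pow (by norm_num) n
    exact_mod_cast this
  have : 0 < π * q := by positivity
  nlinarith

lemma th_x_lt (q : ℝ) (hq : 0 < q) : exp (-π * q) < 1 := by
  rw [exp_lt_one_iff]; have : 0 < π * q := by positivity
  linarith

lemma th_nat_summable (q : ℝ) (hq : 0 < q) : Summable fun n : ℕ => exp (-π * q * (n : ℝ) ^ 2) :=
  Summable.of_nonneg_of_le (fun _ => (exp_pos _).le) (th_nat_le q hq)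
    (summable_geometric_of_lt_one (exp_pos _).le (th_x_lt q hq))

lemma th_summable (q : ℝ) (hq : 0 < q) : Summable fun n : ℤ => exp (-π * q * (n : ℝ) ^ 2) := by
  refine Summable.of_nat_of_neg ?_ ?_
  · simpa using th_nat_summable q hq
  · simpa using th_nat_summable q hq

lemma th_le (q : ℝ) (hq : 0 < q) : Th q ≤ 1 + 2 * (exp (-π * q) / (1 - exp (-π * q))) := by
  unfold Th
  rw [tsum_int_eq_zero_add_two_mul_tsum_pnat (by intro n; simp) (th_summable q hq)]
  have hx := th_x_lt q hq
  have hg := summable_geometric_of_lt_one (exp_pos (-π * q)).le hx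
  have h1 : ∑' n : ℕ+, exp (-π * q * (((n : ℕ) : ℤ) : ℝ) ^ 2) ≤ exp (-π * q) / (1 - exp (-π * q)) := by
    have e := tsum_pnat_eq_tsum_succ (f := fun n : ℕ => exp (-π * q * ((n : ℤ) : ℝ) ^ 2))
    rw [e]
    calc _ ≤ ∑' n : ℕ, exp (-π * q) ^ (n + 1) := by
          refine Summable.tsum_le_tsum (fun n => ?_) ?_ ((summable_nat_add_iff 1).2 hg)
          · simpa using th_nat_le q hq (n + 1)
          · simpa using (summable_nat_add_iff 1).2 (th_nat_summable q hq)
      _ = _ := by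
          simp_rw [pow_succ]
          rw [tsum_mul_right, tsum_geometric_of_lt_one (exp_pos _).le hx]
          ring
  simp only [Int.cast_zero, ne_eq, OfNat.ofNat_ne_zero, not_false_eq_true, zero_pow, mul_zero, exp_zero, nsmul_eq_mul, Nat.cast_ofNat] 
  linarith [h1]

lemma th_anti {p q : ℝ} (hp : 0 < p) (h : p ≤ q) : Th q ≤ Th p := by
  unfold Th
  refine Summable.tsum_le_tsum (fun n => ?_) (th_summable q (hp.trans_le h)) (th_summable p hp)
  apply exp_le_exp.2
  have h1 : 0 ≤ π * (n : ℝ) ^ 2 := by positivity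
  nlinarith

lemma th_ge (q : ℝ) (hq : 0 < q) : 1 ≤ Th q := by
  unfold Th
  have := (th_summable q hq).le_tsum 0 (fun _ _ => (exp_pos _).le)
  simpa using this

lemma th_inv (q : ℝ) (hq : 0 < q) : Th q = (sqrt q)⁻¹ * Th q⁻¹ := by
  unfold Th
  rw [Real.tsum_exp_neg_mul_int_sq hq, sqrt_eq_rpow, one_div]
  rfl

lemma exp_pi_r (r : ℝ) (hr : 1 ≤ r) : exp (-π * r) ≤ 1 / 20 := by
  have h1 : exp (-π * r) ≤ exp (-3) := by
    apply exp_le_exp.2; nlinarith [pi_gt_three]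
  have h2 : exp (-3) = (exp 1 ^ 3)⁻¹ := by rw [← exp_nat_mul, ← exp_neg]; norm_num
  have h3 : (20 : ℝ) ≤ exp 1 ^ 3 := by
    have := exp_one_gt_d9
    calc (20 : ℝ) ≤ 2.718 ^ 3 := by norm_num
      _ ≤ _ := by gcongr; linarith
  rw [h2] at h1
  refine h1.trans ?_
  rw [one_div]; gcongr

lemma th_sub_one (r : ℝ) (hr : 1 ≤ r) : Th r - 1 ≤ 40 / 19 * exp (-π * r) := by
  have h := th_le r (by linarith)
  have hx := exp_pi_r r hr
  have hx0 := exp_pos (-π * r)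
  set x := exp (-π * r)
  have : x / (1 - x) ≤ 20 / 19 * x := by
    rw [div_le_iff₀ (by linarith)]; nlinarith
  linarith

lemma th_one (r : ℝ) (hr : 1 ≤ r) : Th r ≤ 21 / 19 := by
  have := th_sub_one r hr
  have := exp_pi_r r hr
  linarith

noncomputable def Dc (d : ℕ) : ℝ := (21 / 19) ^ (d - 1) * (if d ≤ 14 then 1 else 17)

lemma pow_exp_bound (m : ℕ) (hm : 0 < m) (r : ℝ) (hr : 1 ≤ r) :
    r ^ m * exp (-π * r) ≤ ((m : ℝ) / 3) ^ m * exp (-m) := by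
  have hm' : (0 : ℝ) < m := by exact_mod_cast hm
  have h1 : r ≤ (m / 3) * exp (3 * r / m - 1) := by
    have := add_one_le_exp (3 * r / m - 1)
    calc r = (m / 3) * (3 * r / m - 1 + 1) := by field_simp; ring
      _ ≤ _ := by gcongr
  calc r ^ m * exp (-π * r) ≤ ((m / 3) * exp (3 * r / m - 1)) ^ m * exp (-3 * r) := by
        gcongr
        exact pi_gt_three.le
    _ = _ := by
        rw [mul_pow, ← exp_nat_mul, mul_assoc, ← exp_add]
        congr 2
        field_simp
        ring

lemma exp_neg_nat_le (m : ℕ) : exp (-m) ≤ (2.718 ^ m)⁻¹ := by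
  rw [exp_neg]
  gcongr
  rw [show (m : ℝ) = m * 1 by ring, exp_nat_mul]
  gcongr
  have := exp_one_gt_d9; linarith

lemma sqrt_pow_exp (d : ℕ) (hd : d ≤ 19) (r : ℝ) (hr : 1 ≤ r) :
    sqrt r ^ d * (40 / 19 * exp (-π * r)) ≤ (if d ≤ 14 then 1 else 17) := by
  have hs : 1 ≤ sqrt r := by rw [one_le_sqrt]; exact hr
  have hsq : sqrt r ^ 2 = r := sq_sqrt (by linarith)
  split_ifs with h
  · have h1 : sqrt r ^ d ≤ r ^ 7 := by
      calc _ ≤ sqrt r ^ 14 := pow_le_pow_right₀ hs h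
        _ = (sqrt r ^ 2) ^ 7 := by ring
        _ = _ := by rw [hsq]
    have h2 := pow_exp_bound 7 (by norm_num) r hr
    have h3 := exp_neg_nat_le 7
    have h4 : (((7:ℕ) : ℝ) / 3) ^ 7 * exp (-((7:ℕ):ℝ)) ≤ (((7:ℕ) : ℝ) / 3) ^ 7 * (2.718 ^ 7)⁻¹ := by gcongr
    have h5 : sqrt r ^ d * exp (-π * r) ≤ r ^ 7 * exp (-π * r) := by gcongr
    norm_num at h4 h2
    norm_num
    simp only [neg_mul] at h5
    linarith
  · have h1 : sqrt r ^ d ≤ r ^ 10 := by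
      calc _ ≤ sqrt r ^ 20 := pow_le_pow_right₀ hs (by omega)
        _ = (sqrt r ^ 2) ^ 10 := by ring
        _ = _ := by rw [hsq]
    have h2 := pow_exp_bound 10 (by norm_num) r hr
    have h3 := exp_neg_nat_le 10
    have h4 : (((10:ℕ) : ℝ) / 3) ^ 10 * exp (-((10:ℕ):ℝ)) ≤ (((10:ℕ) : ℝ) / 3) ^ 10 * (2.718 ^ 10)⁻¹ := by gcongr
    have h5 : sqrt r ^ d * exp (-π * r) ≤ r ^ 10 * exp (-π * r) := by gcongr
    norm_num at h4 h2
    norm_num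
    simp only [neg_mul] at h5
    linarith

/-- theta function bound -/
lemma th_D (d : ℕ) (hd1 : 1 ≤ d) (hd : d ≤ 19) (q : ℝ) (hq : 0 < q) :
    (sqrt q * Th q) ^ (d - 1) * (sqrt q * Th q - 1) ≤ Dc d * sqrt q ^ d := by
  obtain ⟨m, rfl⟩ : ∃ m, d = m + 1 := ⟨d - 1, by omega⟩
  simp only [Nat.add_sub_cancel, Dc]
  have hsq : 0 < sqrt q := sqrt_pos.2 hq
  have hK : (1:ℝ) ≤ (if m + 1 ≤ 14 then 1 else 17) := by split_ifs <;> norm_num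
  by_cases h1 : 1 ≤ q
  · have ht := th_one q h1
    have ht0 := th_ge q hq
    have a1 : sqrt q * Th q - 1 ≤ sqrt q := by
      have h2 := th_sub_one q h1
      have h3 : sqrt q ^ 1 * exp (-π * q) ≤ sqrt q ^ 2 * exp (-π * q) := by
        gcongr
        · rw [one_le_sqrt]; exact h1
        · norm_num
      rw [sq_sqrt hq.le] at h3
      have h4 := pow_exp_bound 1 (by norm_num) q h1
      have h5 := exp_neg_nat_le 1
      norm_num at h4 h5
      simp only [neg_mul, pow_one] at h3 h2
      have h6 := mul_le_mul_of_nonneg_left h2 hsq.le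
      linarith
    have a2 : 0 ≤ sqrt q * Th q - 1 := by
      have : 1 ≤ sqrt q := by rw [one_le_sqrt]; exact h1
      nlinarith
    calc _ ≤ (sqrt q * (21 / 19)) ^ m * sqrt q := by
          gcongr
      _ = (21 / 19) ^ m * 1 * sqrt q ^ (m + 1) := by rw [mul_pow]; ring
      _ ≤ _ := by gcongr
  · have hr : 1 ≤ q⁻¹ := (one_le_inv₀ hq).2 (by linarith)
    have ht := th_one _ hr
    have ht0 := th_ge q⁻¹ (by positivity)
    have e1 : sqrt q * Th q = Th q⁻¹ := by rw [th_inv q hq]; field_simp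
    rw [e1]
    have h2 := th_sub_one _ hr
    have h3 := sqrt_pow_exp (m + 1) hd q⁻¹ hr
    calc _ ≤ (21 / 19) ^ m * (40 / 19 * exp (-π * q⁻¹)) := by gcongr
      _ = (21 / 19) ^ m * (sqrt q⁻¹ ^ (m + 1) * (40 / 19 * exp (-π * q⁻¹))) * sqrt q ^ (m + 1) := by
          rw [sqrt_inv, inv_pow]; field_simp
      _ ≤ _ := by gcongr

lemma one_dim (α t : ℝ) (hα : 0 < α) (hα1 : α ≤ 1) (ht : 0 < t) (S : Finset ℤ) :
    ∑ k ∈ S, exp (-t * (α ^ 2 * (k : ℝ) ^ 2)) ≤ (sqrt (π / t) * Th (π / t)) / α := by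
  have hq : 0 < t * α ^ 2 / π := by positivity
  have h1 : ∑ k ∈ S, exp (-t * (α ^ 2 * (k : ℝ) ^ 2)) ≤ Th (t * α ^ 2 / π) := by
    have := (th_summable _ hq).sum_le_tsum S (fun _ _ => (exp_pos _).le)
    refine le_trans (le_of_eq ?_) this
    refine Finset.sum_congr rfl fun k _ => ?_
    congr 1; field_simp
  refine h1.trans ?_
  rw [th_inv _ hq]
  have h2 : Th (t * α ^ 2 / π)⁻¹ ≤ Th (π / t) := by
    apply th_anti (by positivity)
    rw [inv_div]
    gcongr
    have : α ^ 2 ≤ 1 := pow_le_one₀ hα.le hα1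
    nlinarith
  have h3 : (sqrt (t * α ^ 2 / π))⁻¹ = sqrt (π / t) / α := by
    rw [← sqrt_inv, inv_div, show π / (t * α ^ 2) = (π / t) / α ^ 2 by field_simp, sqrt_div' _ (by positivity),
      sqrt_sq hα.le]
  rw [h3]
  calc _ ≤ sqrt (π / t) / α * Th (π / t) := by gcongr
    _ = _ := by ring

lemma one_dim_nz (t : ℝ) (ht : 0 < t) (S : Finset ℤ) (hS : 0 ∉ S) :
    ∑ k ∈ S, exp (-t * ((k : ℝ) ^ 2)) ≤ sqrt (π / t) * Th (π / t) - 1 := by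
  have := one_dim 1 t one_pos le_rfl ht (insert 0 S)
  rw [Finset.sum_insert hS] at this
  simp at this
  simp
  linarith

lemma lattice (d : ℕ) (hd1 : 1 ≤ d) (hd : d ≤ 19) (α : Fin d → ℝ) (hα : ∀ i, 0 < α i)
    (hα1 : ∀ i, α i ≤ 1) (j : Fin d) (hj : α j = 1) (t : ℝ) (ht : 0 < t)
    (S : Finset (Fin d → ℤ)) (hS : ∀ k ∈ S, k j ≠ 0) :
    ∑ k ∈ S, exp (-t * ∑ i, (α i) ^ 2 * (k i : ℝ) ^ 2) ≤ Dc d * sqrt (π / t) ^ d / ∏ i, α i := by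
  classical
  have hq : 0 < π / t := by positivity
  set R : Fin d → Finset ℤ := fun i => S.image (fun k => k i) with hR
  have hsub : S ⊆ Fintype.piFinset R := by
    intro k hk
    rw [Fintype.mem_piFinset]
    intro i
    exact Finset.mem_image_of_mem _ hk
  have hRj : 0 ∉ R j := by
    simp only [hR, Finset.mem_image, not_exists, not_and]
    exact hS
  have hth := th_ge _ hq
  calc _ ≤ ∑ k ∈ Fintype.piFinset R, exp (-t * ∑ i, (α i) ^ 2 * (k i : ℝ) ^ 2) :=
        Finset.sum_le_sum_of_subset_of_nonneg hsub fun _ _ _ => (exp_pos _).le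
    _ = ∏ i, ∑ k ∈ R i, exp (-t * ((α i) ^ 2 * (k : ℝ) ^ 2)) := by
        rw [Finset.prod_univ_sum]
        refine Finset.sum_congr rfl fun k _ => ?_
        rw [Finset.mul_sum, exp_sum]
    _ = (∑ k ∈ R j, exp (-t * ((α j) ^ 2 * (k : ℝ) ^ 2))) * 
        ∏ i ∈ Finset.univ.erase j, ∑ k ∈ R i, exp (-t * ((α i) ^ 2 * (k : ℝ) ^ 2)) := by
        rw [Finset.mul_prod_erase Finset.univ (fun i => ∑ k ∈ R i, exp (-t * ((α i) ^ 2 * (k : ℝ) ^ 2))) (Finset.mem_univ j)]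
    _ ≤ (sqrt (π / t) * Th (π / t) - 1) *
        ∏ i ∈ Finset.univ.erase j, ((sqrt (π / t) * Th (π / t)) / α i) := by
        have h0 : ∑ k ∈ R j, exp (-t * ((α j) ^ 2 * (k : ℝ) ^ 2)) ≤ sqrt (π / t) * Th (π / t) - 1 := by
          have := one_dim_nz t ht (R j) hRj
          simpa [hj] using this
        have h00 : 0 ≤ ∑ k ∈ R j, exp (-t * ((α j) ^ 2 * (k : ℝ) ^ 2)) := Finset.sum_nonneg fun _ _ => (exp_pos _).le
        refine mul_le_mul h0 ?_ (Finset.prod_nonneg fun _ _ => Finset.sum_nonneg fun _ _ => (exp_pos _).le) (h00.trans h0)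
        exact Finset.prod_le_prod (fun _ _ => Finset.sum_nonneg fun _ _ => (exp_pos _).le)
          fun i _ => one_dim (α i) t (hα i) (hα1 i) ht _
    _ = (sqrt (π / t) * Th (π / t)) ^ (d - 1) * (sqrt (π / t) * Th (π / t) - 1) / ∏ i, α i := by
        rw [Finset.prod_div_distrib, Finset.prod_const, Finset.card_erase_of_mem (Finset.mem_univ j),
          Finset.card_univ, Fintype.card_fin, ← Finset.mul_prod_erase Finset.univ α (Finset.mem_univ j), hj]
        ring
    _ ≤ _ := by
        have := th_D d hd1 hd _ hq
        have hp : 0 < ∏ i, α i := Finset.prod_pos fun i _ => hα i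
        gcongr

open Real MeasureTheory
open scoped ENNReal InnerProductSpace

def bx {d : ℕ} (l : Fin d → ℝ) : Set (Fin d → ℝ) := Set.univ.pi fun j => Set.Ioc (0:ℝ) (l j)

lemma bx_meas {d : ℕ} (l : Fin d → ℝ) : MeasurableSet (bx l) :=
  MeasurableSet.univ_pi fun _ => measurableSet_Ioc

lemma bx_integrable {d : ℕ} {E : Type*} [NormedAddCommGroup E] (l : Fin d → ℝ)
    (G : (Fin d → ℝ) → E) (hG : Continuous G) : IntegrableOn G (bx l) := by
  have : IntegrableOn G (Set.univ.pi fun j => Set.Icc (0:ℝ) (l j)) :=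
    hG.continuousOn.integrableOn_compact (isCompact_univ_pi fun _ => isCompact_Icc)
  exact this.mono_set (Set.pi_mono fun _ _ => Set.Ioc_subset_Icc_self)

lemma box_zero {d : ℕ} {E : Type*} [NormedAddCommGroup E] [NormedSpace ℝ E]
    (l : Fin d → ℝ) (hl : ∀ i, 0 < l i) (j : Fin d)
    (G : (Fin d → ℝ) → E) (hG : Continuous G)
    (h : ∀ x, ∫ t in (0:ℝ)..(l j), G (Function.update x j t) = 0) :
    ∫ x in bx l, G x = 0 := by
  obtain _ | n := d
  · exact j.elim0
  set e : ℝ × (Fin n → ℝ) ≃ᵐ (Fin (n+1) → ℝ) :=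
    (MeasurableEquiv.piFinSuccAbove (fun _ => ℝ) j).symm with he
  have hem : MeasurePreserving e :=
    (volume_preserving_piFinSuccAbove (fun _ : Fin (n + 1) => ℝ) j).symm _
  have hee : ∀ p, e p = j.insertNth p.1 p.2 := fun p => rfl
  have heπ : (e ⁻¹' bx l) = Set.Ioc 0 (l j) ×ˢ bx (fun i => l (j.succAbove i)) := by
    ext p
    simp only [Set.mem_preimage, hee, bx, Set.mem_univ_pi, Set.mem_prod, j.forall_iff_succAbove,
      Fin.insertNth_apply_same, Fin.insertNth_apply_succAbove]
  have hint := bx_integrable l G hG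
  rw [← hem.integrableOn_comp_preimage e.measurableEmbedding, heπ] at hint
  rw [← hem.map_eq, setIntegral_map_equiv, heπ, Measure.volume_eq_prod, ← setIntegral_prod_swap,
    setIntegral_prod]
  · have : ∀ y : Fin n → ℝ, ∫ s in Set.Ioc 0 (l j), G (e (Prod.swap (y, s))) = 0 := by
      intro y
      have := h (j.insertNth 0 y)
      rw [intervalIntegral.integral_of_le (hl j).le] at this
      simpa [hee, Fin.update_insertNth] using this
    simp only [this]
    simp
  · rw [Measure.volume_eq_prod] at hint
    exact IntegrableOn.swap hint

lemma box_zero' {d : ℕ} {E : Type*} [NormedAddCommGroup E] [NormedSpace ℝ E]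
    (l : Fin d → ℝ) (hl : ∀ i, 0 < l i) (j : Fin d)
    (F G : (Fin d → ℝ) → E) (hF : Continuous F) (hG : Continuous G)
    (h : ∀ x, ∫ t in (0:ℝ)..(l j), F (Function.update x j t) =
      ∫ t in (0:ℝ)..(l j), G (Function.update x j t)) :
    ∫ x in bx l, F x = ∫ x in bx l, G x := by
  have := box_zero l hl j (fun x => F x - G x) (hF.sub hG) (fun x => by
    rw [intervalIntegral.integral_sub, h x, sub_self]
    · exact Continuous.intervalIntegrable (by fun_prop) _ _
    · exact Continuous.intervalIntegrable (by fun_prop) _ _)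
  rw [integral_sub (bx_integrable l F hF) (bx_integrable l G hG)] at this
  exact sub_eq_zero.mp this

noncomputable def Av {d : ℕ} (j : Fin d) (ψ : (Fin d → ℝ) → ℝ) (x : Fin d → ℝ) : ℝ :=
  (1 / (2 * π)) * ∫ t in (0:ℝ)..(2 * π), ψ (Function.update x j t)

lemma Av_cont {d : ℕ} (j : Fin d) (ψ : (Fin d → ℝ) → ℝ) (h : Continuous ψ) : Continuous (Av j ψ) := by
  unfold Av
  refine continuous_const.mul ?_
  exact intervalIntegral.continuous_parametric_intervalIntegral_of_continuous' 
    (f := fun x t => ψ (Function.update x j t)) (by simp only [Function.uncurry_def]; fun_prop) _ _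

lemma projP_eq {d : ℕ} (j : Fin d) (ψ : (Fin d → ℝ) → ℝ) (x : Fin d → ℝ) :
    projP j ψ x = ψ x - Av j ψ x := rfl

lemma projP_cont {d : ℕ} (j : Fin d) (ψ : (Fin d → ℝ) → ℝ) (h : Continuous ψ) :
    Continuous (projP j ψ) := by
  have := h.sub (Av_cont j ψ h)
  exact this

lemma Av_update {d : ℕ} (j : Fin d) (ψ : (Fin d → ℝ) → ℝ) (x : Fin d → ℝ) (t : ℝ) :
    Av j ψ (Function.update x j t) = Av j ψ x := by
  simp [Av]

lemma projP_line {d : ℕ} (j : Fin d) (ψ : (Fin d → ℝ) → ℝ) (h : Continuous ψ) (x : Fin d → ℝ) :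
    ∫ t in (0:ℝ)..(2 * π), projP j ψ (Function.update x j t) = 0 := by
  simp only [projP_eq, Av_update]
  rw [intervalIntegral.integral_sub (Continuous.intervalIntegrable (by fun_prop) _ _) (by simp)]
  simp only [intervalIntegral.integral_const, smul_eq_mul, Av]
  field_simp
  ring

noncomputable def ch {d : ℕ} (α : Fin d → ℝ) (k : Fin d → ℤ) (x : Fin d → ℝ) : ℂ :=
  Complex.exp (-((∑ i, α i * k i * x i : ℝ) : ℂ) * Complex.I)

lemma ch_cont {d : ℕ} (α : Fin d → ℝ) (k : Fin d → ℤ) : Continuous (ch α k) := by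
  unfold ch
  fun_prop

lemma ch_update {d : ℕ} (α : Fin d → ℝ) (k : Fin d → ℤ) (x : Fin d → ℝ) (j : Fin d) (t : ℝ) :
    ch α k (Function.update x j t) = ch α k (Function.update x j 0) *
      Complex.exp (-((α j * k j : ℝ) : ℂ) * Complex.I * t) := by
  have : ∀ s, ∑ i, α i * k i * Function.update x j s i =
      α j * k j * s + ∑ i ∈ Finset.univ.erase j, α i * k i * x i := by
    intro s
    rw [← Finset.add_sum_erase _ _ (Finset.mem_univ j)]
    congr 1
    · simp
    · refine Finset.sum_congr rfl fun i hi => ?_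
      rw [Function.update_of_ne (Finset.ne_of_mem_erase hi)]
  unfold ch
  rw [this t, this 0, ← Complex.exp_add]
  congr 1
  push_cast
  ring

lemma ch_norm {d : ℕ} (α : Fin d → ℝ) (k : Fin d → ℤ) (x : Fin d → ℝ) : ‖ch α k x‖ = 1 := by
  unfold ch
  rw [← Complex.ofReal_neg, Complex.norm_exp_ofReal_mul_I]

lemma exp_per (a : ℝ) (ha : 0 < a) (k : ℤ) :
    Complex.exp (-((a * k : ℝ) : ℂ) * Complex.I * ((2 * π / a : ℝ) : ℂ)) = 1 := by
  rw [Complex.exp_eq_one_iff]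
  refine ⟨-k, ?_⟩
  have : (a : ℂ) ≠ 0 := by exact_mod_cast ha.ne'
  push_cast
  field_simp

/-- Line integral of the second derivative against the character. -/
lemma line_ibp (f : ℝ → ℝ) (hf : ContDiff ℝ 2 f) (a : ℝ) (ha : 0 < a) (k : ℤ)
    (hper : ∀ t, f (t + 2 * π / a) = f t) :
    ∫ t in (0:ℝ)..(2 * π / a), Complex.exp (-((a * k : ℝ) : ℂ) * Complex.I * t) *
        ((deriv (deriv f) t : ℝ) : ℂ) =
      ∫ t in (0:ℝ)..(2 * π / a), -(a * k : ℂ) ^ 2 *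
        (Complex.exp (-((a * k : ℝ) : ℂ) * Complex.I * t) * (f t : ℂ)) := by
  set b : ℂ := -((a * k : ℝ) : ℂ) * Complex.I with hb
  have hb2 : b ^ 2 = -(a * k : ℂ) ^ 2 := by
    rw [hb, mul_pow, Complex.I_sq]; push_cast; ring
  have hf1 : ContDiff ℝ 1 (deriv f) := by
    have : ContDiff ℝ (1 + 1) f := by convert! hf
    exact (contDiff_succ_iff_deriv.mp this).2.2
  have hd1 : ∀ t, HasDerivAt f (deriv f t) t := fun t =>
    (hf.differentiable (by norm_num) t).hasDerivAt
  have hd2 : ∀ t, HasDerivAt (deriv f) (deriv (deriv f) t) t := fun t =>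
    (hf1.differentiable (by norm_num) t).hasDerivAt
  have hc2 : Continuous (deriv (deriv f)) := hf1.continuous_deriv (by norm_num)
  have hce : ∀ t : ℝ, HasDerivAt (fun t : ℝ => Complex.exp (b * t)) (Complex.exp (b * t) * b) t := by
    intro t
    have h1 : HasDerivAt (fun t : ℝ => b * (t : ℂ)) (b * 1) t :=
      (Complex.ofRealCLM.hasDerivAt (x := t)).const_mul b
    rw [mul_one] at h1
    exact h1.cexp
  have hF : ∀ t : ℝ, HasDerivAt (fun t : ℝ => Complex.exp (b * t) * ((deriv f t : ℝ) : ℂ) -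
      Complex.exp (b * t) * b * (f t : ℂ))
      (Complex.exp (b * t) * ((deriv (deriv f) t : ℝ) : ℂ) - b ^ 2 * (Complex.exp (b * t) * (f t : ℂ))) t := by
    intro t
    have := ((hce t).mul (hd2 t).ofReal_comp).sub (((hce t).mul_const b).mul (hd1 t).ofReal_comp)
    convert! this using 1
    ring
  have hfc := hf.continuous
  have hcont : Continuous fun t : ℝ => Complex.exp (b * t) * ((deriv (deriv f) t : ℝ) : ℂ) -
      b ^ 2 * (Complex.exp (b * t) * (f t : ℂ)) := by fun_prop
  have hint := intervalIntegral.integral_eq_sub_of_hasDerivAt (fun t _ => hF t)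
    (hcont.intervalIntegrable 0 (2 * π / a))
  have hp0 := hper 0
  have hdp : deriv f (2 * π / a) = deriv f 0 := by
    have : (fun t => f (t + 2 * π / a)) = f := funext hper
    have h2 := deriv_comp_add_const f (2 * π / a) 0
    rw [this] at h2
    rw [h2, zero_add]
  rw [zero_add] at hp0
  have he1 : Complex.exp (b * ((2 * π / a : ℝ) : ℂ)) = 1 := exp_per a ha k
  rw [he1, hp0, hdp] at hint
  simp only [Complex.ofReal_zero, mul_zero, Complex.exp_zero, one_mul, sub_self] at hint
  rw [intervalIntegral.integral_sub (Continuous.intervalIntegrable (by fun_prop) _ _)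
    (Continuous.intervalIntegrable (by fun_prop) _ _)] at hint
  rw [← hb2]
  exact sub_eq_zero.mp hint

lemma line_smooth {d : ℕ} (φ : (Fin d → ℝ) → ℝ) (hφ : ContDiff ℝ (⊤ : ℕ∞) φ) (j : Fin d)
    (x : Fin d → ℝ) : ContDiff ℝ (⊤ : ℕ∞) fun t => φ (Function.update x j t) := by
  refine hφ.comp (contDiff_pi.mpr fun i => ?_)
  by_cases h : i = j
  · subst h; simp only [Function.update_self]; exact contDiff_id
  · simp only [Function.update_of_ne h]; exact contDiff_const

lemma pd2_cont {d : ℕ} (φ : (Fin d → ℝ) → ℝ) (hφ : ContDiff ℝ (⊤ : ℕ∞) φ) (j : Fin d) :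
    Continuous (pd2 j φ) := by
  have key : ∀ ψ : (Fin d → ℝ) → ℝ, ContDiff ℝ (⊤ : ℕ∞) ψ → ∀ x s,
      deriv (fun t => ψ (Function.update x j t)) s =
        fderiv ℝ ψ (Function.update x j s) (Pi.single j 1) := by
    intro ψ hψ x s
    have h1 := (hψ.differentiable (by simp) (Function.update x j s)).hasFDerivAt
    exact (h1.comp_hasDerivAt s (hasDerivAt_update x j s)).deriv
  have h2 : ∀ ψ : (Fin d → ℝ) → ℝ, ContDiff ℝ (⊤ : ℕ∞) ψ →
      ContDiff ℝ (⊤ : ℕ∞) fun y => fderiv ℝ ψ y (Pi.single j 1) := by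
    intro ψ hψ
    exact (hψ.fderiv_right (m := (⊤ : ℕ∞)) (by simp)).clm_apply contDiff_const
  have h3 : pd2 j φ = fun x => fderiv ℝ (fun y => fderiv ℝ φ y (Pi.single j 1)) x (Pi.single j 1) := by
    funext x
    unfold pd2
    simp only [key φ hφ]
    rw [key _ (h2 φ hφ)]
    simp
  rw [h3]
  exact (h2 _ (h2 φ hφ)).continuous

lemma box_pd2 {d : ℕ} (α : Fin d → ℝ) (hα : ∀ i, 0 < α i) (k : Fin d → ℤ) (φ : (Fin d → ℝ) → ℝ)
    (hφ : ContDiff ℝ (⊤ : ℕ∞) φ) (j : Fin d)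
    (hper : ∀ x : Fin d → ℝ, φ (Function.update x j (x j + 2 * π / α j)) = φ x) :
    ∫ x in bx (fun j => 2 * π / α j), ch α k x * (pd2 j φ x : ℂ) =
      ∫ x in bx (fun j => 2 * π / α j), -(α j * k j : ℂ) ^ 2 * (ch α k x * (φ x : ℂ)) := by
  have hc := ch_cont α k
  have hp := pd2_cont φ hφ j
  have hp' := hφ.continuous
  refine box_zero' _ (fun i => by have := hα i; positivity) j _ _ (by fun_prop) (by fun_prop) fun x => ?_
  have := line_ibp (fun t => φ (Function.update x j t)) ((line_smooth φ hφ j x).of_le (by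
      have : ((2 : ℕ∞) : WithTop ℕ∞) ≤ ((⊤ : ℕ∞) : WithTop ℕ∞) := WithTop.coe_le_coe.mpr le_top
      exact this))
    (α j) (hα j) (k j) (fun t => by
      have := hper (Function.update x j t)
      simpa using this)
  have e1 : ∀ t, pd2 j φ (Function.update x j t) =
      deriv (deriv fun t => φ (Function.update x j t)) t := by
    intro t; unfold pd2; simp
  simp only [e1]
  have e2 := fun t => ch_update α k x j t
  set c0 := ch α k (Function.update x j 0) with hc0
  simp only [e2]
  simp only [mul_assoc c0]
  rw [intervalIntegral.integral_const_mul, this, ← intervalIntegral.integral_const_mul]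
  congr 1
  funext t
  ring

open Real MeasureTheory
open scoped ENNReal InnerProductSpace

noncomputable local instance instMSUC : MeasureSpace UnitAddCircle := ⟨AddCircle.haarAddCircle⟩

local instance instHaarUC : Measure.IsAddHaarMeasure (volume : Measure UnitAddCircle) :=
  inferInstanceAs (Measure.IsAddHaarMeasure AddCircle.haarAddCircle)

local instance instProbUC : IsProbabilityMeasure (volume : Measure UnitAddCircle) :=
  inferInstanceAs (IsProbabilityMeasure AddCircle.haarAddCircle)

noncomputable def tor {d : ℕ} (l : Fin d → ℝ) (θ : UnitAddTorus (Fin d)) (i : Fin d) : ℝ :=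
  l i * (AddCircle.equivIoc 1 0 (θ i)).1

lemma tor_map {d : ℕ} (l : Fin d → ℝ) (hl : ∀ i, 0 < l i) :
    Measurable (tor l) ∧ Measure.map (tor l) (volume : Measure (UnitAddTorus (Fin d))) =
      ENNReal.ofReal (∏ i, l i)⁻¹ • volume.restrict (bx l) := by
  classical
  have hmp := UnitAddTorus.measurePreserving_equivPiIoc (d := Fin d) (fun _ => 0)
  set S : Set (Fin d → ℝ) := {x | ∀ i, x i ∈ Set.Ioc (0:ℝ) (0 + 1)} with hS
  have hSm : MeasurableSet S := MeasurableSet.univ_pi' (fun i => measurableSet_Ioc)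
  have hdet : Matrix.det (Matrix.diagonal l) = ∏ i, l i := Matrix.det_diagonal
  have hpos : 0 < ∏ i, l i := Finset.prod_pos fun i _ => hl i
  set M := Matrix.toLin' (Matrix.diagonal l) with hM
  have hMap : ∀ x i, M x i = l i * x i := by
    intro x i
    simp [hM, Matrix.mulVec_diagonal]
  have hMm : Measurable M := (LinearMap.continuous_on_pi M).measurable
  have hpre : M ⁻¹' (bx l) = S := by
    ext x
    simp only [Set.mem_preimage, bx, Set.mem_univ_pi, hMap, hS, Set.mem_ofPred_eq, Set.mem_Ioc]
    refine forall_congr' fun i => ?_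
    have := hl i
    constructor
    · rintro ⟨h1, h2⟩
      exact ⟨by simpa [this] using h1, by nlinarith⟩
    · rintro ⟨h1, h2⟩
      exact ⟨by positivity, by nlinarith⟩
  have hcomp : tor l = M ∘ (Subtype.val ∘ UnitAddTorus.measurableEquivPiIoc (fun _ : Fin d => (0:ℝ))) := by
    funext θ i
    simp [tor, hMap]
  have hmv : Measurable (Subtype.val ∘ UnitAddTorus.measurableEquivPiIoc (fun _ : Fin d => (0:ℝ))) :=
    measurable_subtype_coe.comp hmp.measurable
  refine ⟨hcomp ▸ hMm.comp hmv, ?_⟩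
  rw [hcomp, ← Measure.map_map hMm hmv, ← Measure.map_map measurable_subtype_coe hmp.measurable,
    hmp.map_eq]
  have h2 : Measure.map (Subtype.val : S → (Fin d → ℝ)) (Measure.comap Subtype.val volume) =
    volume.restrict S := map_comap_subtype_coe hSm volume
  erw [h2]
  rw [← hpre, ← Measure.restrict_map hMm (bx_meas l),
    Real.map_matrix_volume_pi_eq_smul_volume_pi (by rw [hdet]; exact hpos.ne'), hdet,
    Measure.restrict_smul, abs_of_pos (inv_pos.mpr hpos)]

lemma tor_integral {d : ℕ} (l : Fin d → ℝ) (hl : ∀ i, 0 < l i) {E : Type*} [NormedAddCommGroup E]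
    [NormedSpace ℝ E] (F : (Fin d → ℝ) → E) (hF : Continuous F) :
    ∫ θ : UnitAddTorus (Fin d), F (tor l θ) = (∏ i, l i)⁻¹ • ∫ x in bx l, F x := by
  obtain ⟨h1, h2⟩ := tor_map l hl
  have hpos : 0 < ∏ i, l i := Finset.prod_pos fun i _ => hl i
  rw [← integral_map h1.aemeasurable, h2, integral_smul_measure, ENNReal.toReal_ofReal (by positivity)]
  rw [h2]
  exact (bx_integrable l F hF).aestronglyMeasurable.smul_measure _

lemma tor_lintegral {d : ℕ} (l : Fin d → ℝ) (hl : ∀ i, 0 < l i) (F : (Fin d → ℝ) → ℝ)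
    (hF : Continuous F) (hF0 : ∀ x, 0 ≤ F x) :
    ∫⁻ θ : UnitAddTorus (Fin d), ENNReal.ofReal (F (tor l θ)) =
      ENNReal.ofReal ((∏ i, l i)⁻¹ * ∫ x in bx l, F x) := by
  obtain ⟨h1, h2⟩ := tor_map l hl
  have hpos : 0 < ∏ i, l i := Finset.prod_pos fun i _ => hl i
  rw [← lintegral_map (μ := volume) (f := fun x => ENNReal.ofReal (F x)) (by fun_prop) h1, h2,
    lintegral_smul_measure, ENNReal.ofReal_mul (by positivity),
    ofReal_integral_eq_lintegral_ofReal (bx_integrable l F hF) (Filter.Eventually.of_forall hF0)]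
  rfl

lemma tor_mem {d : ℕ} (l : Fin d → ℝ) (hl : ∀ i, 0 < l i) (θ : UnitAddTorus (Fin d)) :
    tor l θ ∈ bx l := by
  intro i _
  have := (AddCircle.equivIoc 1 0 (θ i)).2
  have h := hl i
  simp only [tor, Set.mem_Ioc] at this ⊢
  exact ⟨mul_pos h this.1, by nlinarith [this.2]⟩

lemma tor_ch {d : ℕ} (α : Fin d → ℝ) (hα : ∀ i, 0 < α i) (k : Fin d → ℤ)
    (θ : UnitAddTorus (Fin d)) :
    (starRingEnd ℂ) (UnitAddTorus.mFourier k θ) = ch α k (tor (fun j => 2 * π / α j) θ) := by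
  rw [← UnitAddTorus.mFourier_neg]
  simp only [UnitAddTorus.mFourier, ContinuousMap.coe_mk, ch]
  have : ∀ i, fourier ((-k) i) (θ i) =
      Complex.exp (-((α i * k i * tor (fun j => 2 * π / α j) θ i : ℝ) : ℂ) * Complex.I) := by
    intro i
    have h1 : θ i = (((AddCircle.equivIoc 1 0 (θ i)).1 : ℝ) : UnitAddCircle) := by
      have := (AddCircle.equivIoc (1:ℝ) 0).symm_apply_apply (θ i)
      exact this.symm
    conv_lhs => rw [h1]
    rw [fourier_coe_apply]
    congr 1
    have : (α i : ℂ) ≠ 0 := by exact_mod_cast (hα i).ne'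
    simp only [tor]
    push_cast
    simp only [Pi.neg_apply, Int.cast_neg]
    field_simp
  rw [Finset.prod_congr rfl fun i _ => this i, ← Complex.exp_sum]
  congr 1
  push_cast
  rw [← Finset.sum_mul, Finset.sum_neg_distrib]

noncomputable def uF {d : ℕ} (l : Fin d → ℝ) (f : (Fin d → ℝ) → ℝ) (θ : UnitAddTorus (Fin d)) : ℂ :=
  ((sqrt (∏ i, l i) * f (tor l θ) : ℝ) : ℂ)

lemma uF_memLp {d : ℕ} (l : Fin d → ℝ) (hl : ∀ i, 0 < l i) (f : (Fin d → ℝ) → ℝ)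
    (hf : Continuous f) : MemLp (uF l f) 2 (volume : Measure (UnitAddTorus (Fin d))) := by
  have hcomp : IsCompact (Set.univ.pi fun j => Set.Icc (0:ℝ) (l j)) :=
    isCompact_univ_pi fun _ => isCompact_Icc
  obtain ⟨B, hB⟩ := hcomp.exists_bound_of_continuousOn hf.continuousOn
  have hm : Measurable (uF l f) := by
    unfold uF
    exact Complex.measurable_ofReal.comp (measurable_const.mul (hf.measurable.comp (tor_map l hl).1))
  refine MemLp.of_bound hm.aestronglyMeasurable (sqrt (∏ i, l i) * B) (Filter.Eventually.of_forall ?_)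
  intro θ
  rw [uF, Complex.norm_real, norm_mul, Real.norm_of_nonneg (Real.sqrt_nonneg _)]
  gcongr
  exact hB _ (Set.pi_mono (fun _ _ => Set.Ioc_subset_Icc_self) (tor_mem l hl θ))

noncomputable def uL {d : ℕ} (l : Fin d → ℝ) (hl : ∀ i, 0 < l i) (f : (Fin d → ℝ) → ℝ)
    (hf : Continuous f) : Lp ℂ 2 (volume : Measure (UnitAddTorus (Fin d))) :=
  (uF_memLp l hl f hf).toLp _

lemma uL_ae {d : ℕ} (l : Fin d → ℝ) (hl : ∀ i, 0 < l i) (f : (Fin d → ℝ) → ℝ)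
    (hf : Continuous f) : uL l hl f hf =ᵐ[volume] uF l f := MemLp.coeFn_toLp _

lemma uL_inner {d : ℕ} (l : Fin d → ℝ) (hl : ∀ i, 0 < l i) (f g : (Fin d → ℝ) → ℝ)
    (hf : Continuous f) (hg : Continuous g) :
    ⟪uL l hl f hf, uL l hl g hg⟫_ℂ = ((∫ x in bx l, f x * g x : ℝ) : ℂ) := by
  have hpos : 0 < ∏ i, l i := Finset.prod_pos fun i _ => hl i
  rw [L2.inner_def]
  have : ∀ᵐ θ : UnitAddTorus (Fin d), ⟪(uL l hl f hf) θ, (uL l hl g hg) θ⟫_ℂ =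
      (((∏ i, l i) * (f (tor l θ) * g (tor l θ)) : ℝ) : ℂ) := by
    filter_upwards [uL_ae l hl f hf, uL_ae l hl g hg] with θ h1 h2
    rw [h1, h2]
    simp only [uF, RCLike.inner_apply, Complex.conj_ofReal]
    rw [← Complex.ofReal_mul]
    congr 1
    have := Real.mul_self_sqrt hpos.le
    linear_combination (f (tor l θ) * g (tor l θ)) * this
  rw [integral_congr_ae this, integral_complex_ofReal,
    tor_integral l hl (fun x => (∏ i, l i) * (f x * g x)) (by fun_prop), integral_const_mul,
    smul_eq_mul, inv_mul_cancel_left₀ hpos.ne']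

lemma uL_coef {d : ℕ} (α : Fin d → ℝ) (hα : ∀ i, 0 < α i) (hl : ∀ i, 0 < 2 * π / α i)
    (f : (Fin d → ℝ) → ℝ) (hf : Continuous f) (k : Fin d → ℤ) :
    ⟪UnitAddTorus.mFourierBasis k, uL (fun j => 2 * π / α j) hl f hf⟫_ℂ =
      ((sqrt (∏ i, 2 * π / α i) * (∏ i, 2 * π / α i)⁻¹ : ℝ) : ℂ) *
        ∫ x in bx (fun j => 2 * π / α j), ch α k x * (f x : ℂ) := by
  rw [L2.inner_def, UnitAddTorus.coe_mFourierBasis]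
  have : ∀ᵐ θ : UnitAddTorus (Fin d), ⟪(UnitAddTorus.mFourierLp 2 k) θ,
      (uL (fun j => 2 * π / α j) hl f hf) θ⟫_ℂ =
      (fun x => (sqrt (∏ i, 2 * π / α i) : ℂ) * (ch α k x * (f x : ℂ))) (tor (fun j => 2 * π / α j) θ) := by
    filter_upwards [uL_ae _ hl f hf, UnitAddTorus.coeFn_mFourierLp 2 k] with θ h1 h2
    rw [h1, h2]
    simp only [uF, RCLike.inner_apply]
    rw [tor_ch α hα]
    push_cast
    ring
  have hc := ch_cont α k
  rw [integral_congr_ae this, tor_integral (fun j => 2 * π / α j) hl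
    (fun x => (sqrt (∏ i, 2 * π / α i) : ℂ) * (ch α k x * (f x : ℂ))) (by fun_prop), integral_const_mul]
  rw [Complex.real_smul]
  push_cast
  ring

lemma box_complete {d : ℕ} (α : Fin d → ℝ) (hα : ∀ i, 0 < α i) (f : (Fin d → ℝ) → ℝ)
    (hf : Continuous f)
    (h : ∀ k, ∫ x in bx (fun j => 2 * π / α j), ch α k x * (f x : ℂ) = 0) :
    ∫ x in bx (fun j => 2 * π / α j), f x * f x = 0 := by
  have hl : ∀ i, 0 < 2 * π / α i := fun i => by have := hα i; positivity
  have h1 : uL _ hl f hf = 0 := by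
    rw [← UnitAddTorus.mFourierBasis.repr.map_eq_zero_iff]
    ext k
    rw [HilbertBasis.repr_apply_apply, uL_coef α hα, h k]
    simp
  have h2 := uL_inner _ hl f f hf hf
  rw [h1, inner_zero_left] at h2
  exact_mod_cast h2.symm

lemma core_box {d N : ℕ} (α : Fin d → ℝ) (hα : ∀ i, 0 < α i)
    (φ g : Fin N → (Fin d → ℝ) → ℝ) (hφ : ∀ n, Continuous (φ n)) (hg : ∀ n, Continuous (g n))
    (hortho : ∀ n m, (∫ x in bx (fun j => 2 * π / α j), φ n x * φ m x) = if n = m then 1 else 0)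
    (κ : (Fin d → ℤ) → ℝ) (Q : (Fin d → ℤ) → Prop) (hκ0 : ∀ k, 0 ≤ κ k) (hκ : ∀ k, Q k → 0 < κ k)
    (hQ : ∀ n k, ¬ Q k → ∫ x in bx (fun j => 2 * π / α j), ch α k x * (φ n x : ℂ) = 0)
    (hgc : ∀ n k, ∫ x in bx (fun j => 2 * π / α j), ch α k x * (g n x : ℂ) =
      (κ k : ℂ) * ∫ x in bx (fun j => 2 * π / α j), ch α k x * (φ n x : ℂ))
    (a b c : ℝ) (ha : 0 < a) (s : ℝ) (hs : 0 < s) (C : ℝ) (hC0 : 0 ≤ C)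
    (hfin : ∀ E > 0, {k | Q k ∧ κ k ≤ a * E}.Finite)
    (hC : ∀ E > 0, ∀ F : Finset (Fin d → ℤ), (∀ k ∈ F, Q k) →
      ∑ k ∈ F, (wf a b c (κ k / E)) ^ 2 ≤ C * E ^ (2 * s))
    (W : (Fin d → ℝ) → ℝ) (hW : Continuous W) (hW0 : ∀ x, 0 ≤ W x) (hA : 0 < Acon a b c) :
    ∑ n, ∫ x in bx (fun j => 2 * π / α j), W x * φ n x ^ 2 ≤
      (∑ n, ∫ x in bx (fun j => 2 * π / α j), φ n x * g n x) +
      C * (∏ i, 2 * π / α i)⁻¹ * (Acon a b c ^ (2 * s) * ((1 + s) / s) ^ (1 + 2 * s) *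
        (1 / (1 + s) - 1 / (1 + 2 * s))) *
        ∫ x in bx (fun j => 2 * π / α j), W x ^ (1 + 2 * s) := by
  have hl : ∀ i, 0 < 2 * π / α i := fun i => by have := hα i; positivity
  have hpos : 0 < ∏ i, 2 * π / α i := Finset.prod_pos fun i _ => hl i
  set l : Fin d → ℝ := fun j => 2 * π / α j with hldef
  set A := Acon a b c with hAdef
  set U : Fin N → Lp ℂ 2 (volume : Measure (UnitAddTorus (Fin d))) :=
    fun n => uL l hl (φ n) (hφ n) with hU
  have hUo : Orthonormal ℂ U := by
    rw [orthonormal_iff_ite]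
    intro n m
    rw [hU]
    simp only
    rw [uL_inner, hortho]
    split_ifs <;> simp
  have hcore := core UnitAddTorus.mFourierBasis (fun k θ => UnitAddTorus.mFourier k θ)
    (fun k => by rw [UnitAddTorus.coe_mFourierBasis]; exact UnitAddTorus.coeFn_mFourierLp 2 k)
    (fun k θ => by
      have h := congrArg norm (tor_ch α hα k θ)
      rw [ch_norm, RCLike.norm_conj] at h
      exact h) U hUo κ Q hκ (fun n k hk => by
        rw [hU]
        simp only
        rw [uL_coef α hα hl, hQ n k hk, mul_zero]) a b c ha s hs C hC0 hfin hC
    (fun θ => W (tor l θ)) (hW.measurable.comp (tor_map l hl).1) (fun θ => hW0 _) hA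
  rw [← hAdef] at hcore
  -- left side
  have hL : ∫⁻ θ : UnitAddTorus (Fin d), ENNReal.ofReal (A * W (tor l θ) * ∑ n, ‖U n θ‖ ^ 2) =
      ENNReal.ofReal (A * ∑ n, ∫ x in bx l, W x * φ n x ^ 2) := by
    have h1 : ∀ᵐ θ : UnitAddTorus (Fin d), ∀ n, U n θ = uF l (φ n) θ :=
      ae_all_iff.mpr fun n => uL_ae l hl (φ n) (hφ n)
    have h2 : ∀ᵐ θ : UnitAddTorus (Fin d), ENNReal.ofReal (A * W (tor l θ) * ∑ n, ‖U n θ‖ ^ 2) =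
        ENNReal.ofReal ((fun x => (∏ i, l i) * (A * ∑ n, W x * φ n x ^ 2)) (tor l θ)) := by
      filter_upwards [h1] with θ h
      congr 1
      simp only [h, uF, Complex.norm_real, Real.norm_eq_abs, sq_abs, mul_pow,
        Real.sq_sqrt hpos.le, ← Finset.mul_sum]
      ring
    rw [lintegral_congr_ae h2, tor_lintegral l hl (fun x => (∏ i, l i) * (A * ∑ n, W x * φ n x ^ 2)) (by fun_prop)]
    · rw [integral_const_mul, inv_mul_cancel_left₀ hpos.ne', integral_const_mul,
        integral_finsetSum]
      exact fun n _ => bx_integrable l _ (by have := hφ n; fun_prop)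
    · intro x
      have := hW0 x
      positivity
  have hM : ∀ n, ∑' k, ENNReal.ofReal (A * κ k * ‖⟪UnitAddTorus.mFourierBasis k, U n⟫_ℂ‖ ^ 2) =
      ENNReal.ofReal (A * ∫ x in bx l, φ n x * g n x) ∧ 0 ≤ ∫ x in bx l, φ n x * g n x := by
    intro n
    have h1 := UnitAddTorus.mFourierBasis.hasSum_inner_mul_inner (U n) (uL l hl (g n) (hg n))
    have h2 : ∀ k, ⟪UnitAddTorus.mFourierBasis k, uL l hl (g n) (hg n)⟫_ℂ =
        (κ k : ℂ) * ⟪UnitAddTorus.mFourierBasis k, U n⟫_ℂ := by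
      intro k
      rw [hU]
      simp only
      rw [uL_coef α hα hl, uL_coef α hα hl, hgc]
      ring
    have h3 : ∀ k, ⟪U n, UnitAddTorus.mFourierBasis k⟫_ℂ *
        ⟪UnitAddTorus.mFourierBasis k, uL l hl (g n) (hg n)⟫_ℂ =
        ((κ k * ‖⟪UnitAddTorus.mFourierBasis k, U n⟫_ℂ‖ ^ 2 : ℝ) : ℂ) := by
      intro k
      rw [h2, ← inner_conj_symm (U n), mul_left_comm, Complex.conj_mul']
      push_cast
      ring
    simp only [h3] at h1
    have h4 : ⟪U n, uL l hl (g n) (hg n)⟫_ℂ = ((∫ x in bx l, φ n x * g n x : ℝ) : ℂ) :=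
      uL_inner l hl (φ n) (g n) (hφ n) (hg n)
    rw [h4, Complex.hasSum_ofReal] at h1
    refine ⟨?_, ?_⟩
    · have h5 := h1.mul_left A
      rw [← h5.tsum_eq, ENNReal.ofReal_tsum_of_nonneg _ h5.summable]
      · simp only [mul_assoc]
      · intro k
        have := hκ0 k
        positivity
    · exact h1.nonneg fun k => mul_nonneg (hκ0 k) (by positivity)
  have hR : ∫⁻ θ : UnitAddTorus (Fin d), ENNReal.ofReal ((A * W (tor l θ) * (1 + s) / s) ^ (1 + 2 * s)
        * (1 / (1 + s) - 1 / (1 + 2 * s))) =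
      ENNReal.ofReal ((∏ i, l i)⁻¹ * (A * (A ^ (2 * s) * ((1 + s) / s) ^ (1 + 2 * s) *
        (1 / (1 + s) - 1 / (1 + 2 * s))) * ∫ x in bx l, W x ^ (1 + 2 * s))) := by
    have hle : 0 ≤ 1 / (1 + s) - 1 / (1 + 2 * s) := by
      rw [sub_nonneg]
      exact one_div_le_one_div_of_le (by positivity) (by linarith)
    have h2 : ∀ θ : UnitAddTorus (Fin d), ENNReal.ofReal ((A * W (tor l θ) * (1 + s) / s) ^ (1 + 2 * s)
        * (1 / (1 + s) - 1 / (1 + 2 * s))) =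
        ENNReal.ofReal ((fun x => (A * (A ^ (2 * s) * ((1 + s) / s) ^ (1 + 2 * s) *
        (1 / (1 + s) - 1 / (1 + 2 * s)))) * W x ^ (1 + 2 * s)) (tor l θ)) := by
      intro θ
      congr 1
      have hw := hW0 (tor l θ)
      simp only
      rw [mul_div_assoc, Real.mul_rpow (by positivity) (by positivity),
        Real.mul_rpow hA.le hw, Real.rpow_add hA, Real.rpow_one]
      ring
    simp only [h2]
    rw [tor_lintegral l hl (fun x => (A * (A ^ (2 * s) * ((1 + s) / s) ^ (1 + 2 * s) *
        (1 / (1 + s) - 1 / (1 + 2 * s)))) * W x ^ (1 + 2 * s))]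
    · rw [integral_const_mul]
    · exact continuous_const.mul (hW.rpow_const fun x => Or.inr (by positivity))
    · intro x
      have := hW0 x
      positivity
  rw [hL, hR] at hcore
  simp only [fun n => (hM n).1] at hcore
  have hle : 0 ≤ 1 / (1 + s) - 1 / (1 + 2 * s) := by
    rw [sub_nonneg]
    exact one_div_le_one_div_of_le (by positivity) (by linarith)
  have hWi : 0 ≤ ∫ x in bx l, W x ^ (1 + 2 * s) :=
    integral_nonneg fun x => Real.rpow_nonneg (hW0 x) _
  have hX : 0 ≤ (∏ i, l i)⁻¹ * (A * (A ^ (2 * s) * ((1 + s) / s) ^ (1 + 2 * s) *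
        (1 / (1 + s) - 1 / (1 + 2 * s))) * ∫ x in bx l, W x ^ (1 + 2 * s)) := by positivity
  have hM0 : ∀ n ∈ Finset.univ, 0 ≤ A * ∫ x in bx l, φ n x * g n x :=
    fun n _ => mul_nonneg hA.le (hM n).2
  rw [← ENNReal.ofReal_sum_of_nonneg hM0, ← ENNReal.ofReal_mul hC0,
    ← ENNReal.ofReal_add (Finset.sum_nonneg hM0) (by positivity),
    ENNReal.ofReal_le_ofReal_iff (add_nonneg (Finset.sum_nonneg hM0) (by positivity)),
    ← Finset.mul_sum] at hcore
  refine le_of_mul_le_mul_left (hcore.trans (le_of_eq ?_)) hA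
  ring

open Real MeasureTheory
open scoped ENNReal InnerProductSpace

noncomputable def kap {d : ℕ} (α : Fin d → ℝ) (k : Fin d → ℤ) : ℝ := ∑ i, (α i) ^ 2 * (k i : ℝ) ^ 2

lemma ch_line_const {d : ℕ} (α : Fin d → ℝ) (k : Fin d → ℤ) (j : Fin d) (hk : k j = 0)
    (x : Fin d → ℝ) (t : ℝ) : ch α k (Function.update x j t) = ch α k (Function.update x j 0) := by
  rw [ch_update, hk]; simp

lemma ch_line_zero {d : ℕ} (α : Fin d → ℝ) (hα : ∀ i, 0 < α i) (k : Fin d → ℤ) (j : Fin d)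
    (hk : k j ≠ 0) (x : Fin d → ℝ) :
    ∫ t in (0:ℝ)..(2 * π / α j), ch α k (Function.update x j t) = 0 := by
  have e2 := fun t => ch_update α k x j t
  set c0 := ch α k (Function.update x j 0) with hc0
  simp only [e2]
  rw [intervalIntegral.integral_const_mul, integral_exp_mul_complex, exp_per (α j) (hα j)]
  · simp
  · simp [hk, (hα j).ne']

lemma box_proj_zero {d : ℕ} (α : Fin d → ℝ) (hα : ∀ i, 0 < α i) (j : Fin d) (hj : α j = 1)
    (k : Fin d → ℤ) (hk : k j = 0) (ψ : (Fin d → ℝ) → ℝ) (hψ : Continuous ψ) :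
    ∫ x in bx (fun j => 2 * π / α j), ch α k x * (projP j ψ x : ℂ) = 0 := by
  have hc := ch_cont α k
  have hp := projP_cont j ψ hψ
  refine box_zero _ (fun i => by have := hα i; positivity) j _ (by fun_prop) fun x => ?_
  have e2 := fun t => ch_line_const α k j hk x t
  set c0 := ch α k (Function.update x j 0) with hc0
  simp only [e2]
  rw [intervalIntegral.integral_const_mul, hj, div_one, intervalIntegral.integral_ofReal,
    projP_line j ψ hψ]
  simp

lemma box_proj_av {d : ℕ} (α : Fin d → ℝ) (hα : ∀ i, 0 < α i) (j : Fin d) (hj : α j = 1)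
    (ψ χ : (Fin d → ℝ) → ℝ) (hψ : Continuous ψ) (hχ : Continuous χ) :
    ∫ x in bx (fun j => 2 * π / α j), projP j ψ x * Av j χ x = 0 := by
  have hp := projP_cont j ψ hψ
  have hq := Av_cont j χ hχ
  refine box_zero _ (fun i => by have := hα i; positivity) j _ (by fun_prop) fun x => ?_
  simp only [Av_update]
  rw [intervalIntegral.integral_mul_const, hj, div_one, projP_line j ψ hψ, zero_mul]

section kin
variable {d : ℕ} (α : Fin d → ℝ) (hα : ∀ i, 0 < α i) (j : Fin d) (hj : α j = 1)
  (V φ : (Fin d → ℝ) → ℝ) (hV : Continuous V) (hφ : ContDiff ℝ (⊤ : ℕ∞) φ)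
  (hper : ∀ (j : Fin d) (x : Fin d → ℝ), φ (Function.update x j (x j + 2 * π / α j)) = φ x)
  (lam : ℝ) (hlam : 0 < lam)
  (heig : ∀ x, -(∑ i, pd2 i φ x) - projP j (fun y => V y * projP j φ y) x = -lam * φ x)

include hα hφ hper in
lemma kin_coef (k : Fin d → ℤ) :
    ∫ x in bx (fun j => 2 * π / α j), ch α k x * ((-(∑ i, pd2 i φ x) : ℝ) : ℂ) =
      (kap α k : ℂ) * ∫ x in bx (fun j => 2 * π / α j), ch α k x * (φ x : ℂ) := by
  have hc := ch_cont α k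
  have h1 : ∀ x, ch α k x * ((-(∑ i, pd2 i φ x) : ℝ) : ℂ) =
      ∑ i, -(ch α k x * (pd2 i φ x : ℂ)) := by
    intro x
    push_cast
    rw [Finset.sum_neg_distrib, ← Finset.mul_sum]
    ring
  simp only [h1]
  rw [integral_finsetSum]
  · have : ∀ i, ∫ x in bx (fun j => 2 * π / α j), -(ch α k x * (pd2 i φ x : ℂ)) =
        ((α i ^ 2 * (k i : ℝ) ^ 2 : ℝ) : ℂ) * ∫ x in bx (fun j => 2 * π / α j), ch α k x * (φ x : ℂ) := by
      intro i
      rw [integral_neg, box_pd2 α hα k φ hφ i (hper i), integral_const_mul]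
      push_cast
      ring
    simp only [this]
    rw [← Finset.sum_mul, kap]
    push_cast
    rfl
  · intro i _
    have := pd2_cont φ hφ i
    exact bx_integrable _ _ (by fun_prop)

include hα hφ hper hj hV hlam heig in
lemma kin_zero (k : Fin d → ℤ) (hk : k j = 0) :
    ∫ x in bx (fun j => 2 * π / α j), ch α k x * (φ x : ℂ) = 0 := by
  have hc := ch_cont α k
  have hφc := hφ.continuous
  have h1 := kin_coef α hα φ hφ hper k
  have hpc := projP_cont j φ hφc
  have h2 := box_proj_zero α hα j hj k hk (fun y => V y * projP j φ y) (by fun_prop)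
  have h3 : ∀ x, ch α k x * ((-(∑ i, pd2 i φ x) : ℝ) : ℂ) =
      ch α k x * (projP j (fun y => V y * projP j φ y) x : ℂ) - lam * (ch α k x * (φ x : ℂ)) := by
    intro x
    have : -(∑ i, pd2 i φ x) = projP j (fun y => V y * projP j φ y) x - lam * φ x := by
      linarith [heig x]
    rw [this]
    push_cast
    ring
  simp only [h3] at h1
  have hpc2 := projP_cont j (fun y => V y * projP j φ y) (by fun_prop)
  rw [integral_sub (bx_integrable _ _ (by fun_prop)) (bx_integrable _ _ (by fun_prop)), h2,
    integral_const_mul] at h1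
  have hk0 : 0 ≤ kap α k := Finset.sum_nonneg fun i _ => by positivity
  have h4 : ((kap α k + lam : ℝ) : ℂ) * ∫ x in bx (fun j => 2 * π / α j), ch α k x * (φ x : ℂ) = 0 := by
    push_cast
    linear_combination -h1
  rcases mul_eq_zero.mp h4 with h | h
  · exfalso
    have : kap α k + lam = 0 := by exact_mod_cast h
    linarith
  · exact h

include hα hφ hper hj hV hlam heig in
lemma kin_av : ∀ᵐ x ∂(volume.restrict (bx (fun j => 2 * π / α j))), Av j φ x = 0 := by
  have hφc := hφ.continuous
  have hAc := Av_cont j φ hφc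
  have h := box_complete α hα (Av j φ) hAc (fun k => by
    have hc := ch_cont α k
    by_cases hk : k j = 0
    · have h1 := box_proj_zero α hα j hj k hk φ hφc
      have h2 := kin_zero α hα j hj V φ hV hφ hper lam hlam heig k hk
      have h3 : ∀ x, ch α k x * (projP j φ x : ℂ) = ch α k x * (φ x : ℂ) - ch α k x * (Av j φ x : ℂ) := by
        intro x; rw [projP_eq]; push_cast; ring
      simp only [h3] at h1
      rw [integral_sub (bx_integrable _ _ (by fun_prop)) (bx_integrable _ _ (by fun_prop)), h2] at h1
      linear_combination -h1
    · refine box_zero _ (fun i => by have := hα i; positivity) j _ (by fun_prop) fun x => ?_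
      simp only [Av_update]
      rw [intervalIntegral.integral_mul_const, ch_line_zero α hα k j hk, zero_mul])
  rw [integral_eq_zero_iff_of_nonneg (fun x => mul_self_nonneg _)
    (bx_integrable _ _ (hAc.mul hAc))] at h
  filter_upwards [h] with x hx
  exact mul_self_eq_zero.mp hx

include hα hφ hper hj hV hlam heig in
lemma kin_energy (hn : ∫ x in bx (fun j => 2 * π / α j), φ x * φ x = 1) :
    ∫ x in bx (fun j => 2 * π / α j), φ x * (-(∑ i, pd2 i φ x)) =
      (∫ x in bx (fun j => 2 * π / α j), V x * φ x ^ 2) - lam := by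
  have hφc := hφ.continuous
  have hpc := projP_cont j φ hφc
  have hav := kin_av α hα j hj V φ hV hφ hper lam hlam heig
  have h1 : ∫ x in bx (fun j => 2 * π / α j), φ x * (-(∑ i, pd2 i φ x)) =
      ∫ x in bx (fun j => 2 * π / α j), (V x * φ x ^ 2 - lam * (φ x * φ x) -
        projP j φ x * Av j (fun y => V y * projP j φ y) x) := by
    refine integral_congr_ae ?_
    filter_upwards [hav] with x hx
    have h0 : -(∑ i, pd2 i φ x) = projP j (fun y => V y * projP j φ y) x - lam * φ x := by
      linarith [heig x]
    rw [h0, projP_eq j (fun y => V y * projP j φ y)]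
    simp only [projP_eq j φ, hx]
    ring
  have hAc := Av_cont j (fun y => V y * projP j φ y) (by fun_prop)
  rw [h1, integral_sub (bx_integrable _ _ (by fun_prop)) (bx_integrable _ _ (by fun_prop)),
    integral_sub (bx_integrable _ _ (by fun_prop)) (bx_integrable _ _ (by fun_prop)),
    box_proj_av α hα j hj φ _ hφc (by fun_prop), integral_const_mul, hn]
  ring

end kin

open Real MeasureTheory
open scoped ENNReal InnerProductSpace

lemma Dc_pos (d : ℕ) : 0 < Dc d := by
  unfold Dc
  split_ifs <;> positivity

lemma kap_fin {d : ℕ} (α : Fin d → ℝ) (hα : ∀ i, 0 < α i) (R : ℝ) : {k | kap α k ≤ R}.Finite := by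
  have : {k : Fin d → ℤ | kap α k ≤ R} ⊆
      Set.univ.pi fun i => Set.Icc (-⌈R / α i ^ 2⌉) ⌈R / α i ^ 2⌉ := by
    intro k hk i _
    have h1 : (α i) ^ 2 * (k i : ℝ) ^ 2 ≤ R :=
      (Finset.single_le_sum (f := fun i => (α i) ^ 2 * (k i : ℝ) ^ 2) (fun i _ => by positivity)
        (Finset.mem_univ i)).trans hk
    have h2 : (k i : ℝ) ^ 2 ≤ R / α i ^ 2 := by
      rw [le_div_iff₀ (by have := hα i; positivity)]
      linarith
    have h3 : (k i) ^ 2 ≤ ⌈R / α i ^ 2⌉ := by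
      have := h2.trans (Int.le_ceil _)
      exact_mod_cast this
    exact ⟨by nlinarith [Int.le_self_sq (-(k i))], by nlinarith [Int.le_self_sq (k i)]⟩
  exact (Set.Finite.pi' fun i => Set.finite_Icc _ _).subset (fun k hk i => this hk i trivial)

lemma const_eq (d : ℕ) (hd1 : 1 ≤ d) (α : Fin d → ℝ) (hα : ∀ i, 0 < α i) (A B β D : ℝ) (hA : 0 < A)
    (hβ : 0 < β) (hB : 0 ≤ B)
    (hnum : B * D * Gamma (1 + d / 2) * sqrt (A * (1 + 4 / d) / β) ^ d ≤ (π / sqrt 3) ^ d) :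
    (B * D * sqrt (π / β) ^ d / ∏ i, α i) * (∏ i, 2 * π / α i)⁻¹ *
      (A ^ (2 * ((d : ℝ) / 4)) * ((1 + (d : ℝ) / 4) / ((d : ℝ) / 4)) ^ (1 + 2 * ((d : ℝ) / 4)) *
        (1 / (1 + (d : ℝ) / 4) - 1 / (1 + 2 * ((d : ℝ) / 4)))) ≤
    (π / sqrt 3) ^ d / (2 ^ d * π ^ ((d : ℝ) / 2) * Gamma (2 + d / 2)) := by
  have hd : (0:ℝ) < d := by exact_mod_cast hd1
  have hG : Gamma (2 + (d:ℝ) / 2) = (1 + d / 2) * Gamma (1 + d / 2) := by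
    rw [← Real.Gamma_add_one (by positivity)]
    congr 1
    ring
  have hGp : 0 < Gamma (1 + (d:ℝ) / 2) := Real.Gamma_pos_of_pos (by positivity)
  have hprod : 0 < ∏ i, α i := Finset.prod_pos fun i _ => hα i
  have h1 : ∏ i, 2 * π / α i = (2 * π) ^ d / ∏ i, α i := by
    rw [Finset.prod_div_distrib]; simp
  have hsq : ∀ x : ℝ, 0 ≤ x → x ^ ((d:ℝ) / 2) = sqrt x ^ d := by
    intro x hx
    rw [Real.sqrt_eq_rpow, ← Real.rpow_natCast, ← Real.rpow_mul hx]
    congr 1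
    ring
  have e0 : 2 * ((d:ℝ) / 4) = d / 2 := by ring
  have e1 : (1 + (d : ℝ) / 4) / ((d : ℝ) / 4) = 1 + 4 / d := by field_simp; ring
  rw [e0, e1, h1, hG, Real.rpow_add (by positivity), Real.rpow_one, hsq A hA.le,
    hsq (1 + 4 / d) (by positivity), hsq π pi_pos.le]
  rw [Real.sqrt_div (by positivity), Real.sqrt_mul hA.le] at hnum
  rw [Real.sqrt_div pi_pos.le]
  set sA := sqrt A
  set sd := sqrt (1 + 4 / (d:ℝ))
  have hsb : 0 < sqrt β := Real.sqrt_pos.mpr hβ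
  have hsp : 0 < sqrt π := Real.sqrt_pos.mpr pi_pos
  have hpp : π = sqrt π ^ 2 := (Real.sq_sqrt pi_pos.le).symm
  set G := Gamma (1 + (d:ℝ) / 2)
  set sb := sqrt β
  have e2 : 1 / (1 + (d:ℝ) / 4) - 1 / (1 + d / 2) = (1 + 4 / (d:ℝ))⁻¹ * (1 + (d:ℝ) / 2)⁻¹ := by
    field_simp
    ring
  rw [e2]
  have hq : (0:ℝ) < 1 + 4 / d := by positivity
  have hr : (0:ℝ) < 1 + (d:ℝ) / 2 := by positivity
  rw [le_div_iff₀ (by positivity)]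
  refine le_trans (le_of_eq ?_) hnum
  rw [mul_pow 2 π, div_pow, div_pow, mul_pow]
  have hpd : π ^ d = sqrt π ^ d * sqrt π ^ d := by
    rw [← mul_pow, Real.mul_self_sqrt pi_pos.le]
  rw [hpd]
  field_simp

lemma g1 {d N : ℕ} (hd1 : 1 ≤ d) (hd19 : d ≤ 19) (α : Fin d → ℝ) (hα : ∀ i, 0 < α i)
    (hα1 : ∀ i, α i ≤ 1) (j : Fin d) (hj : α j = 1)
    (V : (Fin d → ℝ) → ℝ) (hV : Continuous V)
    (φ : Fin N → (Fin d → ℝ) → ℝ) (hφ : ∀ n, ContDiff ℝ (⊤ : ℕ∞) (φ n))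
    (hper : ∀ n (j : Fin d) (x : Fin d → ℝ),
      φ n (Function.update x j (x j + 2 * π / α j)) = φ n x)
    (hortho : ∀ n m, (∫ x in bx (fun j => 2 * π / α j), φ n x * φ m x) = if n = m then 1 else 0)
    (lam : Fin N → ℝ) (hlam : ∀ n, 0 < lam n)
    (heig : ∀ n x, -(∑ i, pd2 i (φ n) x) -
        projP j (fun y => V y * projP j (φ n) y) x = -(lam n) * φ n x)
    (a b c B β : ℝ) (ha : 0 < a) (hA : 0 < Acon a b c) (hB : 0 ≤ B) (hβ : 0 < β)
    (hw : ∀ u, 0 ≤ u → wf a b c u ^ 2 ≤ B * exp (-β * u))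
    (hnum : B * Dc d * Gamma (1 + d / 2) * sqrt (Acon a b c * (1 + 4 / d) / β) ^ d ≤
      (π / sqrt 3) ^ d) (t : ℝ) :
    ∑ n, (lam n - t) ≤ (π / sqrt 3) ^ d / (2 ^ d * π ^ ((d : ℝ) / 2) * Gamma (2 + d / 2)) *
      ∫ x in bx (fun j => 2 * π / α j), (max (V x - t) 0) ^ (1 + (d : ℝ) / 2) := by
  have hd : (0:ℝ) < d := by exact_mod_cast hd1
  have hkap : ∀ k : Fin d → ℤ, k j ≠ 0 → 0 < kap α k := by
    intro k hk
    refine Finset.sum_pos' (fun i _ => by positivity) ⟨j, Finset.mem_univ j, ?_⟩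
    rw [hj]
    have : (k j : ℝ) ≠ 0 := by exact_mod_cast hk
    positivity
  have hkap0 : ∀ k : Fin d → ℤ, 0 ≤ kap α k := fun k => Finset.sum_nonneg fun i _ => by positivity
  have hprod : 0 < ∏ i, α i := Finset.prod_pos fun i _ => hα i
  have hD := Dc_pos d
  set W : (Fin d → ℝ) → ℝ := fun x => max (V x - t) 0 with hW
  have hWc : Continuous W := by fun_prop
  have hgc : ∀ n, Continuous fun x => -(∑ i, pd2 i (φ n) x) := fun n =>
    (continuous_finsetSum _ fun i _ => pd2_cont (φ n) (hφ n) i).neg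
  have main := core_box α hα φ (fun n x => -(∑ i, pd2 i (φ n) x)) (fun n => (hφ n).continuous) hgc
    hortho (kap α) (fun k => k j ≠ 0) hkap0 hkap
    (fun n k hk => kin_zero α hα j hj V (φ n) hV (hφ n) (hper n) (lam n) (hlam n) (heig n) k
      (not_not.mp hk))
    (fun n k => kin_coef α hα (φ n) (hφ n) (hper n) k)
    a b c ha ((d:ℝ) / 4) (by positivity) (B * Dc d * sqrt (π / β) ^ d / ∏ i, α i) (by positivity)
    (fun E hE => (kap_fin α hα (a * E)).subset fun k hk => hk.2)
    (fun E hE F hF => by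
      have h1 := lattice d hd1 hd19 α hα hα1 j hj (β / E) (by positivity) F hF
      have h2 : ∀ k ∈ F, wf a b c (kap α k / E) ^ 2 ≤
          B * exp (-(β / E) * ∑ i, (α i) ^ 2 * (k i : ℝ) ^ 2) := by
        intro k _
        refine (hw _ (by have := hkap0 k; positivity)).trans (le_of_eq ?_)
        congr 2
        rw [kap]
        field_simp
      refine (Finset.sum_le_sum h2).trans ?_
      rw [← Finset.mul_sum]
      refine (mul_le_mul_of_nonneg_left h1 hB).trans (le_of_eq ?_)
      have e1 : sqrt (π / (β / E)) ^ d = sqrt (π / β) ^ d * E ^ (2 * ((d:ℝ) / 4)) := by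
        have : π / (β / E) = π / β * E := by field_simp
        rw [this, Real.sqrt_mul (by positivity), mul_pow]
        congr 1
        rw [Real.sqrt_eq_rpow, ← Real.rpow_natCast, ← Real.rpow_mul hE.le]
        congr 1
        ring
      rw [e1]
      ring)
    W hWc (fun x => le_max_right _ _) hA
  have hconst := const_eq d hd1 α hα (Acon a b c) B β (Dc d) hA hβ hB hnum
  have e0 : 1 + 2 * ((d:ℝ) / 4) = 1 + d / 2 := by ring
  have hWi : 0 ≤ ∫ x in bx (fun j => 2 * π / α j), W x ^ (1 + 2 * ((d:ℝ) / 4)) :=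
    integral_nonneg fun x => Real.rpow_nonneg (le_max_right _ _) _
  have h3 := mul_le_mul_of_nonneg_right hconst hWi
  have h4 : ∀ n, (∫ x in bx (fun j => 2 * π / α j), V x * φ n x ^ 2) - t ≤
      ∫ x in bx (fun j => 2 * π / α j), W x * φ n x ^ 2 := by
    intro n
    have hφc := (hφ n).continuous
    have h5 := hortho n n
    rw [if_pos rfl] at h5
    have h6 : (∫ x in bx (fun j => 2 * π / α j), V x * φ n x ^ 2) - t =
        ∫ x in bx (fun j => 2 * π / α j), (V x * φ n x ^ 2 - t * (φ n x * φ n x)) := by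
      rw [integral_sub (bx_integrable _ _ (by fun_prop)) (bx_integrable _ _ (by fun_prop)),
        integral_const_mul, h5, mul_one]
    rw [h6]
    refine integral_mono (bx_integrable _ _ (by fun_prop)) (bx_integrable _ _ (by fun_prop)) fun x => ?_
    have : V x - t ≤ W x := le_max_left _ _
    have := mul_le_mul_of_nonneg_right this (sq_nonneg (φ n x))
    simp only
    nlinarith
  have h5 : ∀ n, ∫ x in bx (fun j => 2 * π / α j), φ n x * (-(∑ i, pd2 i (φ n) x)) =
      (∫ x in bx (fun j => 2 * π / α j), V x * φ n x ^ 2) - lam n := fun n =>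
    kin_energy α hα j hj V (φ n) hV (hφ n) (hper n) (lam n) (hlam n) (heig n)
      (by rw [hortho n n, if_pos rfl])
  simp only [h5] at main
  have h6 := Finset.sum_le_sum fun n (_ : n ∈ Finset.univ) => h4 n
  rw [e0] at h3 main
  simp only [Finset.sum_sub_distrib] at *
  linarith

lemma g1' {d N : ℕ} (hd1 : 1 ≤ d) (hd19 : d ≤ 19) (α : Fin d → ℝ) (hα : ∀ i, 0 < α i)
    (hα1 : ∀ i, α i ≤ 1) (j : Fin d) (hj : α j = 1)
    (V : (Fin d → ℝ) → ℝ) (hV : Continuous V)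
    (φ : Fin N → (Fin d → ℝ) → ℝ) (hφ : ∀ n, ContDiff ℝ (⊤ : ℕ∞) (φ n))
    (hper : ∀ n (j : Fin d) (x : Fin d → ℝ),
      φ n (Function.update x j (x j + 2 * π / α j)) = φ n x)
    (hortho : ∀ n m, (∫ x in bx (fun j => 2 * π / α j), φ n x * φ m x) = if n = m then 1 else 0)
    (lam : Fin N → ℝ) (hlam : ∀ n, 0 < lam n)
    (heig : ∀ n x, -(∑ i, pd2 i (φ n) x) -
        projP j (fun y => V y * projP j (φ n) y) x = -(lam n) * φ n x)
    (a b c B β : ℝ) (ha : 0 < a) (hA : 0 < Acon a b c) (hB : 0 ≤ B) (hβ : 0 < β)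
    (hw : ∀ u, 0 ≤ u → wf a b c u ^ 2 ≤ B * exp (-β * u))
    (hnum : B * Dc d * Gamma (1 + d / 2) * sqrt (Acon a b c * (1 + 4 / d) / β) ^ d ≤
      (π / sqrt 3) ^ d) (t : ℝ) :
    ∑ n, max (lam n - t) 0 ≤ (π / sqrt 3) ^ d / (2 ^ d * π ^ ((d : ℝ) / 2) * Gamma (2 + d / 2)) *
      ∫ x in bx (fun j => 2 * π / α j), (max (V x - t) 0) ^ (1 + (d : ℝ) / 2) := by
  classical
  set S : Finset (Fin N) := Finset.univ.filter fun n => t < lam n with hS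
  set ι : Fin S.card ↪o Fin N := S.orderEmbOfFin rfl with hι
  have h := g1 hd1 hd19 α hα hα1 j hj V hV (fun n => φ (ι n)) (fun n => hφ _) (fun n => hper _)
    (fun n m => by rw [hortho]; simp only [EmbeddingLike.apply_eq_iff_eq]) (fun n => lam (ι n)) (fun n => hlam _)
    (fun n => heig _) a b c B β ha hA hB hβ hw hnum t
  refine le_trans (le_of_eq ?_) h
  have h1 : ∑ n, max (lam n - t) 0 = ∑ n ∈ S, (lam n - t) := by
    rw [hS, Finset.sum_filter]
    refine Finset.sum_congr rfl fun n _ => ?_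
    split_ifs with h
    · exact max_eq_left (by linarith)
    · exact max_eq_right (by linarith)
  rw [h1]
  have h2 : S = Finset.univ.map ι.toEmbedding := by
    ext n
    simp only [Finset.mem_map, Finset.mem_univ, true_and, RelEmbedding.coe_toEmbedding]
    have := S.range_orderEmbOfFin rfl
    rw [← Finset.mem_coe, ← this]
    rfl
  conv_lhs => rw [h2]
  rw [Finset.sum_map]
  rfl

open Real MeasureTheory
open scoped ENNReal InnerProductSpace

lemma num_sq (d : ℕ) (A B β Bs Gs : ℝ) (hA : 0 < A) (hB : 0 ≤ B) (hβ : 0 < β)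
    (hBs : B ^ 2 ≤ Bs) (hGs : Gamma (1 + (d:ℝ) / 2) ^ 2 ≤ Gs)
    (h : Bs * Dc d ^ 2 * Gs * (A * (1 + 4 / d) / β) ^ d ≤ (3.1415 ^ 2 / 3) ^ d) :
    B * Dc d * Gamma (1 + d / 2) * sqrt (A * (1 + 4 / d) / β) ^ d ≤ (π / sqrt 3) ^ d := by
  have hD := Dc_pos d
  have hG : 0 < Gamma (1 + (d:ℝ) / 2) := Real.Gamma_pos_of_pos (by positivity)
  have hx : 0 ≤ A * (1 + 4 / (d:ℝ)) / β := by positivity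
  have hBs0 : 0 ≤ Bs := (sq_nonneg B).trans hBs
  refine le_of_sq_le_sq ?_ (by positivity)
  calc (B * Dc d * Gamma (1 + d / 2) * sqrt (A * (1 + 4 / d) / β) ^ d) ^ 2
      = B ^ 2 * Dc d ^ 2 * Gamma (1 + (d:ℝ) / 2) ^ 2 * (sqrt (A * (1 + 4 / d) / β) ^ 2) ^ d := by ring
    _ = B ^ 2 * Dc d ^ 2 * Gamma (1 + (d:ℝ) / 2) ^ 2 * (A * (1 + 4 / d) / β) ^ d := by
        rw [Real.sq_sqrt hx]
    _ ≤ Bs * Dc d ^ 2 * Gs * (A * (1 + 4 / d) / β) ^ d := by gcongr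
    _ ≤ _ := h
    _ ≤ (π ^ 2 / 3) ^ d := by
        have := Real.pi_gt_d4
        gcongr
    _ = ((π / sqrt 3) ^ d) ^ 2 := by
        rw [← pow_mul, mul_comm d 2, pow_mul, div_pow π, Real.sq_sqrt (by norm_num)]

lemma gam_succ (d : ℕ) (r : ℝ) (h : Gamma (1 + (d:ℝ) / 2) ^ 2 ≤ r) :
    Gamma (1 + ((d + 2 : ℕ):ℝ) / 2) ^ 2 ≤ (1 + (d:ℝ) / 2) ^ 2 * r := by
  have e : 1 + ((d + 2 : ℕ):ℝ) / 2 = (1 + (d:ℝ) / 2) + 1 := by push_cast; ring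
  rw [e, Real.Gamma_add_one (by positivity), mul_pow]
  gcongr

lemma gam_one : Gamma (1 + ((1:ℕ):ℝ) / 2) ^ 2 ≤ 3.1416 / 4 := by
  have e : 1 + ((1:ℕ):ℝ) / 2 = 1 / 2 + 1 := by norm_num
  rw [e, Real.Gamma_add_one (by norm_num), Real.Gamma_one_half_eq, mul_pow, Real.sq_sqrt pi_pos.le]
  linarith [Real.pi_lt_d4]

lemma gam_two : Gamma (1 + ((2:ℕ):ℝ) / 2) ^ 2 ≤ 1 := by
  have e : 1 + ((2:ℕ):ℝ) / 2 = 1 + 1 := by norm_num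
  rw [e, Real.Gamma_add_one (by norm_num), Real.Gamma_one]
  norm_num

lemma prof_small (u : ℝ) (hu : 0 ≤ u) : wf 1.3 1 0.28 u ^ 2 ≤ 1 * exp (-2 * u) := by
  unfold wf
  split_ifs with h
  · have h0 : 0 ≤ 1 - 1 * u + 0.28 * u ^ 2 := by nlinarith [sq_nonneg (u - 25 / 14)]
    have h1 : 1 - u / 4 ≤ exp (-u / 4) := by
      have := Real.add_one_le_exp (-u / 4); linarith
    have h2 : (1 - u / 4) ^ 4 ≤ exp (-u / 4) ^ 4 := pow_le_pow_left₀ (by linarith) h1 4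
    have h3 : 1 - 1 * u + 0.28 * u ^ 2 ≤ (1 - u / 4) ^ 4 := by
      have : (1 - u / 4) ^ 4 - (1 - 1 * u + 0.28 * u ^ 2) = u ^ 2 * (0.095 - u / 16 + u ^ 2 / 256) := by
        ring
      have h5 : 0 ≤ 0.095 - u / 16 + u ^ 2 / 256 := by nlinarith
      nlinarith [mul_nonneg (sq_nonneg u) h5]
    have h4 : exp (-2 * u) = (exp (-u / 4) ^ 4) ^ 2 := by
      rw [← pow_mul, ← Real.exp_nat_mul]; congr 1; push_cast; ring
    rw [h4, one_mul (_ ^ 2)]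
    exact pow_le_pow_left₀ h0 (h3.trans h2) 2
  · have := Real.exp_pos (-2 * u)
    simpa using this.le

lemma prof_big (b : ℝ) (hb : 0 ≤ b) (u : ℝ) : wf 1 0 0 u ^ 2 ≤ exp b * exp (-b * u) := by
  unfold wf
  split_ifs with h
  · rw [← Real.exp_add]
    simp only [zero_mul, sub_zero, add_zero, one_pow]
    exact Real.one_le_exp (by nlinarith)
  · simp only [ne_eq, OfNat.ofNat_ne_zero, not_false_eq_true, zero_pow]
    positivity

lemma exp_sq_le (d : ℕ) : exp ((d:ℝ) / 2) ^ 2 ≤ 2.71829 ^ d := by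
  have : exp ((d:ℝ) / 2) ^ 2 = exp 1 ^ d := by
    rw [← Real.exp_nat_mul, ← Real.exp_nat_mul]; congr 1; push_cast; ring
  rw [this]
  have := Real.exp_one_lt_d9
  gcongr
  linarith

lemma profile (d : ℕ) (hd1 : 1 ≤ d) (hd : d ≤ 19) : ∃ a b c B β : ℝ, 0 < a ∧ 0 < Acon a b c ∧
    0 ≤ B ∧ 0 < β ∧ (∀ u, 0 ≤ u → wf a b c u ^ 2 ≤ B * exp (-β * u)) ∧
    B * Dc d * Gamma (1 + d / 2) * sqrt (Acon a b c * (1 + 4 / d) / β) ^ d ≤ (π / sqrt 3) ^ d := by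
  have hd0 : (0:ℝ) < d := by exact_mod_cast hd1
  have G1 := gam_one
  have G2 := gam_two
  have G3 := gam_succ _ _ G1
  have G4 := gam_succ _ _ G2
  have G5 := gam_succ _ _ G3
  have G6 := gam_succ _ _ G4
  have G7 := gam_succ _ _ G5
  have G8 := gam_succ _ _ G6
  have G9 := gam_succ _ _ G7
  have G10 := gam_succ _ _ G8
  have G11 := gam_succ _ _ G9
  have G12 := gam_succ _ _ G10
  have G13 := gam_succ _ _ G11
  have G14 := gam_succ _ _ G12
  have G15 := gam_succ _ _ G13
  have G16 := gam_succ _ _ G14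
  have G17 := gam_succ _ _ G15
  have G18 := gam_succ _ _ G16
  have G19 := gam_succ _ _ G17
  by_cases h6 : d ≤ 6
  · have hAp : (0:ℝ) < Acon 1.3 1 0.28 := by unfold Acon; norm_num
    refine ⟨1.3, 1, 0.28, 1, 2, by norm_num, hAp, by norm_num,
      by norm_num, prof_small, ?_⟩
    interval_cases d
    · exact num_sq 1 _ _ _ 1 _ hAp (by norm_num) (by norm_num) (by norm_num) G1 (by unfold Dc Acon; norm_num)
    · exact num_sq 2 _ _ _ 1 _ hAp (by norm_num) (by norm_num) (by norm_num) G2 (by unfold Dc Acon; norm_num)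
    · exact num_sq 3 _ _ _ 1 _ hAp (by norm_num) (by norm_num) (by norm_num) G3 (by unfold Dc Acon; norm_num)
    · exact num_sq 4 _ _ _ 1 _ hAp (by norm_num) (by norm_num) (by norm_num) G4 (by unfold Dc Acon; norm_num)
    · exact num_sq 5 _ _ _ 1 _ hAp (by norm_num) (by norm_num) (by norm_num) G5 (by unfold Dc Acon; norm_num)
    · exact num_sq 6 _ _ _ 1 _ hAp (by norm_num) (by norm_num) (by norm_num) G6 (by unfold Dc Acon; norm_num)
  · have hA1 : Acon 1 0 0 = 1 := by unfold Acon; norm_num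
    refine ⟨1, 0, 0, exp ((d:ℝ) / 2), (d:ℝ) / 2, by norm_num, by rw [hA1]; norm_num, (Real.exp_pos _).le,
      by positivity, fun u _ => prof_big _ (by positivity) u, ?_⟩
    have hE := exp_sq_le d
    rw [hA1]
    have key : ∀ Gs : ℝ, Gamma (1 + (d:ℝ) / 2) ^ 2 ≤ Gs →
        2.71829 ^ d * Dc d ^ 2 * Gs * (1 * (1 + 4 / d) / ((d:ℝ) / 2)) ^ d ≤ (3.1415 ^ 2 / 3) ^ d →
        exp ((d:ℝ) / 2) * Dc d * Gamma (1 + d / 2) * sqrt (1 * (1 + 4 / d) / ((d:ℝ) / 2)) ^ d ≤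
          (π / sqrt 3) ^ d := fun Gs h1 h2 =>
      num_sq d 1 _ _ _ Gs one_pos (Real.exp_pos _).le (by positivity) hE h1 h2
    clear hE
    interval_cases d
    · exact key _ G7 (by unfold Dc; norm_num)
    · exact key _ G8 (by unfold Dc; norm_num)
    · exact key _ G9 (by unfold Dc; norm_num)
    · exact key _ G10 (by unfold Dc; norm_num)
    · exact key _ G11 (by unfold Dc; norm_num)
    · exact key _ G12 (by unfold Dc; norm_num)
    · exact key _ G13 (by unfold Dc; norm_num)
    · exact key _ G14 (by unfold Dc; norm_num)
    · exact key _ G15 (by unfold Dc; norm_num)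
    · exact key _ G16 (by unfold Dc; norm_num)
    · exact key _ G17 (by unfold Dc; norm_num)
    · exact key _ G18 (by unfold Dc; norm_num)
    · exact key _ G19 (by unfold Dc; norm_num)

open Real MeasureTheory
open scoped ENNReal InnerProductSpace

lemma beta_lint (p q x : ℝ) (hp : 0 < p) (hq : 0 < q) (hx : 0 ≤ x) :
    ∫⁻ t in Set.Ioi (0:ℝ), ENNReal.ofReal (t ^ (p - 1) * max (x - t) 0 ^ q) =
      ENNReal.ofReal (x ^ (p + q) * (Gamma p * Gamma (q + 1) / Gamma (p + q + 1))) := by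
  rcases hx.eq_or_lt with rfl | hx
  · rw [Real.zero_rpow (by positivity), zero_mul, ENNReal.ofReal_zero]
    refine setLIntegral_eq_zero measurableSet_Ioi fun t ht => ?_
    have : max (0 - t) 0 = 0 := max_eq_right (by simpa using (Set.mem_Ioi.1 ht).le)
    rw [this, Real.zero_rpow hq.ne', mul_zero, ENNReal.ofReal_zero]; rfl
  have hb := ProbabilityTheory.beta_pos hp (show 0 < q + 1 by linarith)
  rw [← lintegral_indicator measurableSet_Ioi]
  have hm : Measurable (Set.indicator (Set.Ioi (0:ℝ)) fun t =>
      ENNReal.ofReal (t ^ (p - 1) * max (x - t) 0 ^ q)) :=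
    Measurable.indicator (by fun_prop) measurableSet_Ioi
  rw [← Real.smul_map_volume_mul_left hx.ne', lintegral_smul_measure,
    lintegral_map hm (by fun_prop)]
  have hpt : ∀ u : ℝ, Set.indicator (Set.Ioi (0:ℝ)) (fun t =>
      ENNReal.ofReal (t ^ (p - 1) * max (x - t) 0 ^ q)) (x * u) =
      ENNReal.ofReal (x ^ (p - 1) * x ^ q * ProbabilityTheory.beta p (q + 1)) *
        ProbabilityTheory.betaPDF p (q + 1) u := by
    intro u
    rcases le_or_gt u 0 with h | h
    · rw [ProbabilityTheory.betaPDF_eq_zero_of_nonpos h, mul_zero, Set.indicator_of_notMem]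
      simp only [Set.mem_Ioi, not_lt]
      exact mul_nonpos_of_nonneg_of_nonpos hx.le h
    rw [Set.indicator_of_mem (Set.mem_Ioi.2 (by positivity))]
    rcases le_or_gt 1 u with h1 | h1
    · rw [ProbabilityTheory.betaPDF_eq_zero_of_one_le h1, mul_zero, max_eq_right (by nlinarith),
        Real.zero_rpow hq.ne']
      simp
    rw [ProbabilityTheory.betaPDF_of_pos_lt_one h h1, ← ENNReal.ofReal_mul (by positivity)]
    congr 1
    have : x - x * u = x * (1 - u) := by ring
    rw [max_eq_left (by nlinarith), this, Real.mul_rpow hx.le h.le,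
      Real.mul_rpow hx.le (by linarith), show q + 1 - 1 = q by ring]
    field_simp
  simp_rw [hpt]
  rw [lintegral_const_mul' _ _ ENNReal.ofReal_ne_top,
    ProbabilityTheory.lintegral_betaPDF_eq_one hp (by linarith), mul_one, abs_of_pos hx, smul_eq_mul,
    ← ENNReal.ofReal_mul hx.le]
  congr 1
  rw [ProbabilityTheory.beta, show p + q = 1 + (p - 1) + q by ring, Real.rpow_add hx,
    Real.rpow_add hx, Real.rpow_one]
  ring_nf

lemma AL {X : Type*} [MeasurableSpace X] (μ : Measure X) [SFinite μ] (V : X → ℝ) (hV : Measurable V)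
    (hV0 : ∀ x, 0 ≤ V x) {N : ℕ} (lam : Fin N → ℝ) (hlam : ∀ n, 0 < lam n) (L p q : ℝ)
    (hL : 0 ≤ L) (hp : 0 < p) (hq : 0 < q)
    (hi : ∀ t, Integrable (fun x => max (V x - t) 0 ^ q) μ)
    (hi2 : Integrable (fun x => V x ^ (p + q)) μ)
    (h : ∀ t, ∑ n, max (lam n - t) 0 ≤ L * ∫ x, max (V x - t) 0 ^ q ∂μ) :
    ∑ n, lam n ^ (p + 1) * (Gamma p * Gamma (1 + 1) / Gamma (p + 1 + 1)) ≤
      L * ((Gamma p * Gamma (q + 1) / Gamma (p + q + 1)) * ∫ x, V x ^ (p + q) ∂μ) := by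
  have g1 := Gamma_pos_of_pos hp
  have g2 := Gamma_pos_of_pos (show 0 < q + 1 by linarith)
  have g3 := Gamma_pos_of_pos (show 0 < p + q + 1 by linarith)
  have g4 := Gamma_pos_of_pos (show 0 < p + 1 + 1 by linarith)
  have g5 := Gamma_pos_of_pos (show (0:ℝ) < 1 + 1 by norm_num)
  have hint : 0 ≤ ∫ x, V x ^ (p + q) ∂μ :=
    integral_nonneg fun x => Real.rpow_nonneg (hV0 x) _
  rw [← ENNReal.ofReal_le_ofReal_iff (by positivity)]
  rw [ENNReal.ofReal_sum_of_nonneg (fun n _ => by have := hlam n; positivity)]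
  have e1 : ∀ n, ENNReal.ofReal (lam n ^ (p + 1) * (Gamma p * Gamma (1 + 1) / Gamma (p + 1 + 1))) =
      ∫⁻ t in Set.Ioi (0:ℝ), ENNReal.ofReal (t ^ (p - 1) * max (lam n - t) 0 ^ (1:ℝ)) := fun n =>
    (beta_lint p 1 (lam n) hp one_pos (hlam n).le).symm
  simp_rw [e1]
  rw [← lintegral_finsetSum' _ (fun n _ => by fun_prop)]
  calc _ ≤ ∫⁻ t in Set.Ioi (0:ℝ), ENNReal.ofReal L *
        ∫⁻ x, ENNReal.ofReal (t ^ (p - 1) * max (V x - t) 0 ^ q) ∂μ := by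
        refine setLIntegral_mono' measurableSet_Ioi fun t ht => ?_
        have ht : 0 < t := ht
        rw [← ENNReal.ofReal_sum_of_nonneg (fun n _ => by positivity),
          ← ofReal_integral_eq_lintegral_ofReal ((hi t).const_mul _)
            (Filter.Eventually.of_forall fun x => by positivity), ← ENNReal.ofReal_mul hL]
        refine ENNReal.ofReal_le_ofReal ?_
        simp_rw [Real.rpow_one]
        rw [integral_const_mul, ← Finset.mul_sum]
        have := mul_le_mul_of_nonneg_left (h t) (Real.rpow_nonneg ht.le (p - 1))
        linarith
    _ = ENNReal.ofReal L * ∫⁻ x, (∫⁻ t in Set.Ioi (0:ℝ),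
          ENNReal.ofReal (t ^ (p - 1) * max (V x - t) 0 ^ q)) ∂μ := by
        rw [lintegral_const_mul' _ _ ENNReal.ofReal_ne_top, lintegral_lintegral_swap]
        refine Measurable.aemeasurable ?_
        unfold Function.uncurry
        fun_prop
    _ = _ := by
        simp_rw [fun x => beta_lint p q (V x) hp hq (hV0 x)]
        rw [← ofReal_integral_eq_lintegral_ofReal (hi2.mul_const _)
            (Filter.Eventually.of_forall fun x => by have := hV0 x; positivity),
            ← ENNReal.ofReal_mul hL, integral_mul_const]
        congr 1
        ring

theorem stmt_0 (d : ℕ) (hd1 : 1 ≤ d) (hd19 : d ≤ 19)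
    (α : Fin d → ℝ) (hαpos : ∀ i, 0 < α i) (hαmono : Monotone α)
    (hαlast : α ⟨d - 1, by omega⟩ = 1)
    (V : (Fin d → ℝ) → ℝ) (hVc : Continuous V) (hV0 : ∀ x, 0 ≤ V x)
    (hVper : ∀ (j : Fin d) (x : Fin d → ℝ),
      V (Function.update x j (x j + 2 * π / α j)) = V x)
    (γ : ℝ) (hγ : 1 ≤ γ)
    (N : ℕ) (φ : Fin N → (Fin d → ℝ) → ℝ)
    (hφ : ∀ n, ContDiff ℝ (⊤ : ℕ∞) (φ n))
    (hφper : ∀ n (j : Fin d) (x : Fin d → ℝ),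
      φ n (Function.update x j (x j + 2 * π / α j)) = φ n x)
    (hortho : ∀ n m, (∫ x in Set.univ.pi fun j => Set.Ioc (0:ℝ) (2 * π / α j),
        φ n x * φ m x) = if n = m then 1 else 0)
    (lam : Fin N → ℝ) (hlam : ∀ n, 0 < lam n)
    (heig : ∀ n x, -(∑ i, pd2 i (φ n) x) -
        projP ⟨d - 1, by omega⟩
          (fun y => V y * projP ⟨d - 1, by omega⟩ (φ n) y) x = -(lam n) * φ n x) :
    ∑ n, lam n ^ γ ≤ (π / Real.sqrt 3) ^ d *
      (Real.Gamma (γ + 1) / (2 ^ d * π ^ ((d : ℝ) / 2) * Real.Gamma (γ + d / 2 + 1))) *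
      ∫ x in Set.univ.pi fun j => Set.Ioc (0:ℝ) (2 * π / α j),
        V x ^ (γ + d / 2) := by
  obtain ⟨a, b, c, B, β, ha, hA, hB, hβ, hw, hnum⟩ := profile d hd1 hd19
  have hα1 : ∀ i, α i ≤ 1 := fun i => by
    rw [← hαlast]; exact hαmono (Fin.le_def.2 (by have := i.2; simp only; omega))
  have key := g1' hd1 hd19 α hαpos hα1 ⟨d - 1, by omega⟩ hαlast V hVc φ hφ hφper hortho lam hlam heig
    a b c B β ha hA hB hβ hw hnum
  change _ ≤ _ * ∫ x in bx (fun j => 2 * π / α j), V x ^ (γ + d / 2)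
  rcases hγ.eq_or_lt with rfl | hγ
  · have k0 := key 0
    have e1 : ∀ n, max (lam n - 0) 0 = lam n ^ (1:ℝ) := fun n => by
      rw [sub_zero, max_eq_left (hlam n).le, Real.rpow_one]
    have e2 : ∀ x, max (V x - 0) 0 = V x := fun x => by rw [sub_zero, max_eq_left (hV0 x)]
    simp_rw [e1, e2] at k0
    refine k0.trans (le_of_eq ?_)
    rw [show (1:ℝ) + 1 = 2 by norm_num, Real.Gamma_two, show (1:ℝ) + d / 2 + 1 = 2 + d / 2 by ring]
    ring
  have hd0 : (0:ℝ) < d := by exact_mod_cast hd1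
  have hG := Gamma_pos_of_pos (show (0:ℝ) < 2 + d / 2 by positivity)
  have h := AL (volume.restrict (bx (fun j => 2 * π / α j))) V hVc.measurable hV0 lam hlam
    ((π / sqrt 3) ^ d / (2 ^ d * π ^ ((d : ℝ) / 2) * Gamma (2 + d / 2))) (γ - 1) (1 + d / 2)
    (by positivity) (by linarith) (by positivity)
    (fun t => bx_integrable _ _ (Continuous.rpow_const (by fun_prop) fun x => Or.inr (by positivity)))
    (bx_integrable _ _ (Continuous.rpow_const hVc fun x => Or.inr (by nlinarith))) key
  have g1 := Gamma_pos_of_pos (show 0 < γ - 1 by linarith)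
  have g2 := Gamma_pos_of_pos (show 0 < γ + 1 by linarith)
  have g3 := Gamma_pos_of_pos (show 0 < γ + d / 2 + 1 by positivity)
  rw [← Finset.sum_mul, show γ - 1 + 1 = γ by ring, show (1:ℝ) + 1 = 2 by norm_num, Real.Gamma_two,
    show γ - 1 + (1 + (d:ℝ) / 2) = γ + d / 2 by ring, show 1 + (d:ℝ) / 2 + 1 = 2 + d / 2 by ring] at h
  have h2 := mul_le_mul_of_nonneg_right h (show 0 ≤ Gamma (γ + 1) / Gamma (γ - 1) by positivity)
  refine le_trans (le_of_eq ?_) (h2.trans (le_of_eq ?_))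
  · field_simp
  · field_simp
end

section
/- Let α > 0, β > 0 and set L = 2π/α. For every real-valued C¹ function u on ℝ that is L-periodic, one has max_x u(x)² ≤ K₁(β) · ( ∫_0^L ( u'(x)² + α² β u(x)² ) dx )^{1/2} · ( ∫_0^L u(x)² dx )^{1/2}. -/
open Real MeasureTheory

/-- The sharp constant `K₁(β) = sup_{λ>0} √λ · coth(π√(β+λ)) / √(β+λ)`. -/
noncomputable def K1 (β : ℝ) : ℝ :=
  ⨆ l : Set.Ioi (0 : ℝ),
    Real.sqrt l * (Real.cosh (π * Real.sqrt (β + l)) / Real.sinh (π * Real.sqrt (β + l))) /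
      Real.sqrt (β + l)

lemma aux_poincare (m L : ℝ) (hm : 0 < m) (hL : 0 < L)
    (u : ℝ → ℝ) (hu : ContDiff ℝ 1 u) (hper : Function.Periodic u L) (x : ℝ) :
    u x ^ 2 * (2 * m * (Real.sinh (m * (L / 2)) / Real.cosh (m * (L / 2)))) ≤
      ∫ t in (0:ℝ)..L, ((deriv u t) ^ 2 + m ^ 2 * (u t) ^ 2) := by
  have hd : ∀ t, HasDerivAt u (deriv u t) t := fun t =>
    (hu.differentiable (by norm_num) t).hasDerivAt
  have hcd : Continuous (deriv u) := hu.continuous_deriv (by norm_num)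
  have hcu : Continuous u := hu.continuous
  have hpd : Function.Periodic (deriv u) L := by
    intro t
    have h1 : (fun s => u (s + L)) = u := funext hper
    rw [← deriv_comp_add_const, h1]
  have hpp : Function.Periodic (fun t => (deriv u t) ^ 2 + m ^ 2 * (u t) ^ 2) L := by
    intro t
    simp only [hpd t, hper t]
  have hshift := hpp.intervalIntegral_add_eq 0 x
  rw [zero_add] at hshift
  rw [hshift]
  set T : ℝ → ℝ := fun t => Real.sinh (m * (t - x - L / 2)) / Real.cosh (m * (t - x - L / 2)) with hT
  have hTc : Continuous T := by
    apply Continuous.div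
    · fun_prop
    · fun_prop
    · intro t; exact (Real.cosh_pos _).ne'
  have hTd : ∀ t, HasDerivAt T (m * (1 - T t ^ 2)) t := by
    intro t
    have hl : HasDerivAt (fun t => m * (t - x - L / 2)) (m * 1) t :=
      (((hasDerivAt_id t).sub_const x).sub_const (L / 2)).const_mul m
    have h := hl.sinh.div hl.cosh (Real.cosh_pos _).ne'
    refine h.congr_deriv ?_
    have := (Real.cosh_pos (m * (t - x - L / 2))).ne'
    simp only [hT]
    field_simp
  have hF : ∀ t, HasDerivAt (fun t => m * T t * u t ^ 2)
      (m * (m * (1 - T t ^ 2)) * u t ^ 2 + m * T t * (2 * u t * deriv u t)) t := by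
    intro t
    refine (((hTd t).const_mul m).mul ((hd t).pow 2)).congr_deriv ?_
    simp
  have hint := intervalIntegral.integral_eq_sub_of_hasDerivAt (a := x) (b := x + L)
    (fun t _ => hF t) (Continuous.intervalIntegrable (by fun_prop) _ _)
  have hle : (∫ t in x..(x + L), (m * (m * (1 - T t ^ 2)) * u t ^ 2 + m * T t * (2 * u t * deriv u t)))
      ≤ ∫ t in x..(x + L), ((deriv u t) ^ 2 + m ^ 2 * (u t) ^ 2) := by
    apply intervalIntegral.integral_mono_on (by linarith)
      (Continuous.intervalIntegrable (by fun_prop) _ _)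
      (Continuous.intervalIntegrable (by fun_prop) _ _)
    intro t _
    nlinarith [sq_nonneg (deriv u t - m * T t * u t)]
  rw [hint] at hle
  refine le_trans (le_of_eq ?_) hle
  have e1 : T (x + L) = Real.sinh (m * (L / 2)) / Real.cosh (m * (L / 2)) := by
    simp only [hT]
    rw [show m * (x + L - x - L / 2) = m * (L / 2) by ring]
  have e2 : T x = - (Real.sinh (m * (L / 2)) / Real.cosh (m * (L / 2))) := by
    simp only [hT]
    rw [show m * (x - x - L / 2) = -(m * (L / 2)) by ring, Real.sinh_neg, Real.cosh_neg, neg_div]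
  rw [e1, e2, hper x]
  ring

lemma aux_bdd (β : ℝ) (hβ : 0 < β) : BddAbove (Set.range (fun l : Set.Ioi (0 : ℝ) =>
    Real.sqrt l * (Real.cosh (π * Real.sqrt (β + l)) / Real.sinh (π * Real.sqrt (β + l))) /
      Real.sqrt (β + l))) := by
  refine ⟨1 + 1 / Real.sinh (π * Real.sqrt β), ?_⟩
  rintro _ ⟨⟨l, hl⟩, rfl⟩
  have hl : 0 < l := hl
  simp only
  have h0 : 0 < π * Real.sqrt β := mul_pos pi_pos (Real.sqrt_pos.2 hβ)
  have h1 : π * Real.sqrt β ≤ π * Real.sqrt (β + l) :=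
    mul_le_mul_of_nonneg_left (Real.sqrt_le_sqrt (by linarith)) pi_pos.le
  set t := π * Real.sqrt (β + l)
  have hs0 : 0 < Real.sinh (π * Real.sqrt β) := Real.sinh_pos_iff.2 h0
  have hs1 : Real.sinh (π * Real.sqrt β) ≤ Real.sinh t := Real.sinh_le_sinh.2 h1
  have hs : 0 < Real.sinh t := hs0.trans_le hs1
  have hc : Real.cosh t ≤ Real.sinh t + 1 := by
    have := Real.cosh_sq t
    nlinarith [Real.cosh_pos t]
  have hq : Real.cosh t / Real.sinh t ≤ 1 + 1 / Real.sinh (π * Real.sqrt β) := by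
    calc Real.cosh t / Real.sinh t ≤ (Real.sinh t + 1) / Real.sinh t := by gcongr
      _ = 1 + 1 / Real.sinh t := by field_simp
      _ ≤ _ := by gcongr
  have hb : 0 < Real.sqrt (β + l) := Real.sqrt_pos.2 (by linarith)
  have hlb : Real.sqrt l ≤ Real.sqrt (β + l) := Real.sqrt_le_sqrt (by linarith)
  rw [div_le_iff₀ hb, mul_comm]
  exact mul_le_mul hq hlb (Real.sqrt_nonneg _) (by positivity)

theorem stmt_3 (α β : ℝ) (hα : 0 < α) (hβ : 0 < β) (L : ℝ) (hL : L = 2 * π / α)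
    (u : ℝ → ℝ) (hu : ContDiff ℝ 1 u) (hper : Function.Periodic u L) (x : ℝ) :
    u x ^ 2 ≤ K1 β *
      Real.sqrt (∫ t in (0:ℝ)..L, ((deriv u t) ^ 2 + α ^ 2 * β * (u t) ^ 2)) *
      Real.sqrt (∫ t in (0:ℝ)..L, (u t) ^ 2) := by
  have hLpos : 0 < L := by rw [hL]; positivity
  have hcd : Continuous (deriv u) := hu.continuous_deriv (by norm_num)
  have hcu : Continuous u := hu.continuous
  set G := ∫ t in (0:ℝ)..L, ((deriv u t) ^ 2 + α ^ 2 * β * (u t) ^ 2) with hG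
  set N := ∫ t in (0:ℝ)..L, (u t) ^ 2 with hN
  have hN0 : 0 ≤ N := intervalIntegral.integral_nonneg hLpos.le (fun t _ => sq_nonneg _)
  have hGN : α ^ 2 * β * N ≤ G := by
    rw [hN, hG, ← intervalIntegral.integral_const_mul]
    apply intervalIntegral.integral_mono_on hLpos.le
      (Continuous.intervalIntegrable (by fun_prop) _ _)
      (Continuous.intervalIntegrable (by fun_prop) _ _)
    intro t _
    nlinarith [sq_nonneg (deriv u t)]
  rcases hN0.eq_or_lt with h0 | hNpos
  · have hsh : N = ∫ t in x..(x + L), (u t) ^ 2 := by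
      have hpp : Function.Periodic (fun t => (u t) ^ 2) L := by
        intro t
        simp only [hper t]
      have := hpp.intervalIntegral_add_eq 0 x
      rwa [zero_add] at this
    by_cases hux : u x = 0
    · rw [← h0, hux]; simp
    · exfalso
      have : 0 < ∫ t in x..(x + L), (u t) ^ 2 := by
        apply intervalIntegral.integral_pos (by linarith)
          (Continuous.continuousOn (by fun_prop)) (fun t _ => sq_nonneg _)
        exact ⟨x, ⟨le_refl _, by linarith⟩, by positivity⟩
      linarith
  have hGpos : 0 < G := lt_of_lt_of_le (by positivity) hGN
  set l := G / (α ^ 2 * N) with hl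
  have hlpos : 0 < l := by positivity
  have hbl : 0 < Real.sqrt (β + l) := Real.sqrt_pos.2 (by linarith)
  have hK := le_ciSup (aux_bdd β hβ) ⟨l, hlpos⟩
  change _ ≤ K1 β at hK
  simp only at hK
  have key := aux_poincare (α * Real.sqrt (β + l)) L (by positivity) hLpos u hu hper x
  have harg : α * Real.sqrt (β + l) * (L / 2) = π * Real.sqrt (β + l) := by
    rw [hL]; field_simp
  have hI : (∫ t in (0:ℝ)..L, ((deriv u t) ^ 2 + (α * Real.sqrt (β + l)) ^ 2 * (u t) ^ 2))
      = 2 * G := by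
    have h1 : (∫ t in (0:ℝ)..L, ((deriv u t) ^ 2 + (α * Real.sqrt (β + l)) ^ 2 * (u t) ^ 2))
      = G + (α ^ 2 * l) * N := by
      rw [hN, hG, ← intervalIntegral.integral_const_mul, ← intervalIntegral.integral_add
        (Continuous.intervalIntegrable (by fun_prop) _ _)
        (Continuous.intervalIntegrable (by fun_prop) _ _)]
      congr 1
      ext t
      rw [mul_pow, Real.sq_sqrt (by linarith)]
      ring
    rw [h1, hl]
    field_simp
    ring
  rw [harg, hI] at key
  have hGl : G = α ^ 2 * l * N := by rw [hl]; field_simp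
  have hsG : Real.sqrt G = α * Real.sqrt l * Real.sqrt N := by
    rw [hGl, Real.sqrt_mul (by positivity), Real.sqrt_mul (by positivity), Real.sqrt_sq hα.le]
  have hGe : G = α * Real.sqrt l * (Real.sqrt G * Real.sqrt N) := by
    conv_lhs => rw [← Real.mul_self_sqrt hGpos.le]
    nth_rewrite 2 [hsG]
    ring
  have hs : 0 < Real.sinh (π * Real.sqrt (β + l)) := Real.sinh_pos_iff.2 (by positivity)
  have hc := Real.cosh_pos (π * Real.sqrt (β + l))
  have hfin : u x ^ 2 ≤ (Real.sqrt l * (Real.cosh (π * Real.sqrt (β + l)) /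
      Real.sinh (π * Real.sqrt (β + l))) / Real.sqrt (β + l)) * (Real.sqrt G * Real.sqrt N) := by
    rw [← le_div_iff₀ (by positivity)] at key
    refine key.trans (le_of_eq ?_)
    nth_rewrite 1 [hGe]
    field_simp
  rw [mul_assoc]
  exact hfin.trans (mul_le_mul_of_nonneg_right hK (by positivity))
end

section
/- Let α > 0 and β > 0, and set L = 2π/α. The constant K₁(β) is sharp in the interpolation inequality: for every K < K₁(β) there exists a real-valued C¹ L-periodic function u on ℝ with max_x u(x)² > K · ( ∫_0^L ( u'(x)² + α² β u(x)² ) dx )^{1/2} · ( ∫_0^L u(x)² dx )^{1/2}. -/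
open Real MeasureTheory

noncomputable def ca (m : ℝ) (k : ℕ) : ℝ := (if k = 0 then 1 else 2) / ((k:ℝ) ^ 2 + m ^ 2)

lemma coth_series (m : ℝ) (hm : 0 < m) :
    Filter.Tendsto (fun N : ℕ => ∑ k ∈ Finset.range (N + 1), ca m k) Filter.atTop
      (nhds (π * (Real.cosh (π * m) / Real.sinh (π * m)) / m)) := by
  have hmC : (m : ℂ) ≠ 0 := by exact_mod_cast hm.ne'
  have hx : (m * Complex.I : ℂ) ∈ Complex.integerComplement := by
    rw [Complex.mem_integerComplement_iff]
    rintro ⟨n, hn⟩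
    have := congrArg Complex.im hn
    simp at this
    exact hm.ne this
  have h := tendsto_logDeriv_euler_cot_sub hx
  have h2 := ((h.mul_const (Complex.I / m)).add_const (1 / (m:ℂ) ^ 2))
  have hs : Real.sinh (π * m) ≠ 0 := (Real.sinh_pos_iff.2 (by positivity)).ne'
  have hsC : Complex.sinh (π * m) ≠ 0 := by exact_mod_cast hs
  have e2 : (π * Complex.cot (π * (m * Complex.I)) - 1 / (m * Complex.I)) * (Complex.I / m)
      + 1 / (m:ℂ) ^ 2 = ((π * (Real.cosh (π * m) / Real.sinh (π * m)) / m : ℝ) : ℂ) := by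
    push_cast
    rw [Complex.cot_eq_cos_div_sin, ← mul_assoc, Complex.cos_mul_I, Complex.sin_mul_I]
    have := Complex.I_ne_zero
    field_simp
    ring
  have e1 : ∀ N : ℕ, (∑ j ∈ Finset.range N, cotTerm (m * Complex.I) j) * (Complex.I / m)
      + 1 / (m:ℂ) ^ 2 = ((∑ k ∈ Finset.range (N + 1), ca m k : ℝ) : ℂ) := by
    intro N
    rw [Finset.sum_range_succ', Finset.sum_mul]
    push_cast
    congr 1
    · apply Finset.sum_congr rfl
      intro j _
      rw [cotTerm_identity hx]
      have hne : (((j:ℝ) + 1) ^ 2 + m ^ 2) ≠ 0 := by positivity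
      have hneC : (((j:ℂ) + 1) ^ 2 + m ^ 2) ≠ 0 := by exact_mod_cast hne
      have : (m * Complex.I + (j + 1)) * (m * Complex.I - (j + 1)) = -(((j:ℂ) + 1) ^ 2 + m ^ 2) := by
        linear_combination (m:ℂ)^2 * Complex.I_sq
      rw [this]
      have hc : ((ca m (j + 1) : ℝ) : ℂ) = 2 / (((j:ℂ) + 1) ^ 2 + m ^ 2) := by simp [ca]
      rw [hc]
      generalize (((j:ℂ) + 1) ^ 2 + m ^ 2) = Q at hneC ⊢
      have : 2 * (m * Complex.I) * (1 / -Q) * (Complex.I / m) = -(Complex.I ^ 2) * 2 / Q := by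
        field_simp
      rw [this, Complex.I_sq]
      ring
    · simp [ca]
  rw [e2] at h2
  simp_rw [e1] at h2
  have := (Complex.continuous_re.tendsto _).comp h2
  simpa only [Function.comp_def, Complex.ofReal_re] using this

lemma int_cos (α : ℝ) (hα : 0 < α) (n : ℤ) :
    ∫ t in (0:ℝ)..(2 * π / α), Real.cos (n * (α * t)) = if n = 0 then 2 * π / α else 0 := by
  split_ifs with h
  · simp [h]
  · have hn : (n:ℝ) ≠ 0 := by exact_mod_cast h
    simp_rw [← mul_assoc]
    rw [intervalIntegral.integral_comp_mul_left (fun x => Real.cos x) (by positivity)]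
    have : (n:ℝ) * α * (2 * π / α) = ((2 * n : ℤ) : ℝ) * π := by
      push_cast; field_simp
    rw [this, integral_cos, Real.sin_int_mul_pi]
    simp

noncomputable def cw (α : ℝ) (k : ℕ) : ℝ := if k = 0 then 2 * π / α else π / α

lemma int_cc (α : ℝ) (hα : 0 < α) (j k : ℕ) :
    ∫ t in (0:ℝ)..(2 * π / α), Real.cos (j * (α * t)) * Real.cos (k * (α * t))
      = if j = k then cw α k else 0 := by
  have e : ∀ t : ℝ, Real.cos (j * (α * t)) * Real.cos (k * (α * t)) =
      (Real.cos (((j - k : ℤ) : ℝ) * (α * t)) + Real.cos (((j + k : ℤ):ℝ) * (α * t))) / 2 := by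
    intro t
    push_cast
    rw [sub_mul, add_mul, Real.cos_sub, Real.cos_add]; ring
  simp_rw [e]
  rw [intervalIntegral.integral_div, intervalIntegral.integral_add
    (Continuous.intervalIntegrable (by fun_prop) _ _)
    (Continuous.intervalIntegrable (by fun_prop) _ _), int_cos α hα, int_cos α hα, cw]
  split_ifs <;> first | omega | (ring)

lemma int_ss (α : ℝ) (hα : 0 < α) (j k : ℕ) :
    ∫ t in (0:ℝ)..(2 * π / α), Real.sin (j * (α * t)) * Real.sin (k * (α * t))
      = if j = k then (if k = 0 then 0 else cw α k) else 0 := by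
  have e : ∀ t : ℝ, Real.sin (j * (α * t)) * Real.sin (k * (α * t)) =
      (Real.cos (((j - k : ℤ) : ℝ) * (α * t)) - Real.cos (((j + k : ℤ):ℝ) * (α * t))) / 2 := by
    intro t
    push_cast
    rw [sub_mul, add_mul, Real.cos_sub, Real.cos_add]; ring
  simp_rw [e]
  rw [intervalIntegral.integral_div, intervalIntegral.integral_sub
    (Continuous.intervalIntegrable (by fun_prop) _ _)
    (Continuous.intervalIntegrable (by fun_prop) _ _), int_cos α hα, int_cos α hα, cw]
  split_ifs <;> first | omega | (ring)

lemma int_sq (L : ℝ) (f : ℕ → ℝ → ℝ) (hf : ∀ k, Continuous (f k)) (w : ℕ → ℝ)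
    (ho : ∀ j k, ∫ t in (0:ℝ)..L, f j t * f k t = if j = k then w k else 0) (c : ℕ → ℝ) (N : ℕ) :
    ∫ t in (0:ℝ)..L, (∑ k ∈ Finset.range N, c k * f k t) ^ 2
      = ∑ k ∈ Finset.range N, c k ^ 2 * w k := by
  have e : ∀ t : ℝ, (∑ k ∈ Finset.range N, c k * f k t) ^ 2 =
      ∑ j ∈ Finset.range N, ∑ k ∈ Finset.range N, c j * c k * (f j t * f k t) := by
    intro t
    rw [sq, Finset.sum_mul_sum]
    refine Finset.sum_congr rfl fun j _ => Finset.sum_congr rfl fun k _ => by ring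
  simp_rw [e]
  rw [intervalIntegral.integral_finsetSum]
  · refine Finset.sum_congr rfl fun j hj => ?_
    rw [intervalIntegral.integral_finsetSum]
    · simp_rw [intervalIntegral.integral_const_mul, ho]
      simp only [mul_ite, mul_zero]
      rw [Finset.sum_ite_eq, if_pos hj]; ring
    · intro k _
      have := hf k; have := hf j
      exact Continuous.intervalIntegrable (by fun_prop) _ _
  · intro j _
    exact Continuous.intervalIntegrable (by fun_prop) _ _

theorem stmt_4 (α β : ℝ) (hα : 0 < α) (hβ : 0 < β) (L : ℝ) (hL : L = 2 * π / α)
    (K : ℝ) (hK : K < K1 β) :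
    ∃ u : ℝ → ℝ, ContDiff ℝ 1 u ∧ Function.Periodic u L ∧
      ∃ x : ℝ, u x ^ 2 > K *
        Real.sqrt (∫ t in (0:ℝ)..L, ((deriv u t) ^ 2 + α ^ 2 * β * (u t) ^ 2)) *
        Real.sqrt (∫ t in (0:ℝ)..L, (u t) ^ 2) := by
  have : Nonempty (Set.Ioi (0:ℝ)) := ⟨⟨1, by simp⟩⟩
  obtain ⟨⟨l, hl⟩, hKl⟩ := exists_lt_of_lt_ciSup hK
  have hl : 0 < l := hl
  simp only at hKl
  set m := Real.sqrt (β + l) with hm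
  have hm0 : 0 < m := Real.sqrt_pos.2 (by positivity)
  have hm2 : m ^ 2 = β + l := Real.sq_sqrt (by positivity)
  have hlim := (coth_series m hm0).mul_const (Real.sqrt l / π)
  have hKl' : K < π * (Real.cosh (π * m) / Real.sinh (π * m)) / m * (Real.sqrt l / π) := by
    refine hKl.trans_eq ?_
    have := Real.pi_ne_zero
    generalize Real.cosh (π * m) / Real.sinh (π * m) = q
    field_simp
  obtain ⟨N, hN⟩ := (hlim.eventually (lt_mem_nhds hKl')).exists
  set S := ∑ k ∈ Finset.range (N + 1), ca m k with hS
  have hder : ∀ t, HasDerivAt (fun x => ∑ k ∈ Finset.range (N + 1), ca m k * Real.cos (k * (α * x)))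
      (∑ k ∈ Finset.range (N + 1), (-(ca m k * (k * α))) * Real.sin (k * (α * t))) t := by
    intro t
    apply HasDerivAt.fun_sum
    intro k _
    have h1 : HasDerivAt (fun x : ℝ => (k:ℝ) * (α * x)) (k * (α * 1)) t :=
      ((hasDerivAt_id t).const_mul α).const_mul (k:ℝ)
    exact (h1.cos.const_mul (ca m k)).congr_deriv (by ring)
  refine ⟨fun x => ∑ k ∈ Finset.range (N + 1), ca m k * Real.cos (k * (α * x)), by fun_prop, ?_,
    0, ?_⟩
  · intro x
    refine Finset.sum_congr rfl fun k _ => ?_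
    have : (k:ℝ) * (α * (x + L)) = k * (α * x) + k * (2 * π) := by
      rw [hL]; field_simp
    rw [this, Real.cos_add_nat_mul_two_pi]
  have hd : ∀ t, deriv (fun x => ∑ k ∈ Finset.range (N + 1), ca m k * Real.cos (k * (α * x))) t
    = _ := fun t => (hder t).deriv
  simp_rw [hd]
  have hB := int_sq L (fun k t => Real.cos (k * (α * t))) (fun k => by fun_prop) (cw α)
    (fun j k => by rw [hL]; exact int_cc α hα j k) (ca m) (N + 1)
  have hA := int_sq L (fun k t => Real.sin (k * (α * t))) (fun k => by fun_prop)
    (fun k => if k = 0 then 0 else cw α k)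
    (fun j k => by rw [hL]; exact int_ss α hα j k) (fun k => -(ca m k * (k * α))) (N + 1)
  rw [intervalIntegral.integral_add
    (Continuous.intervalIntegrable (by fun_prop) _ _)
    (Continuous.intervalIntegrable (by fun_prop) _ _), intervalIntegral.integral_const_mul, hA, hB]
  have hcap : ∀ k, 0 < ca m k := by
    intro k; unfold ca; split_ifs <;> positivity
  have hcwp : ∀ k, 0 < cw α k := by
    intro k; unfold cw; split_ifs <;> positivity
  set B := ∑ k ∈ Finset.range (N + 1), ca m k ^ 2 * cw α k with hBd
  set D := ∑ k ∈ Finset.range (N + 1), (-(ca m k * (k * α))) ^ 2 * (if k = 0 then 0 else cw α k)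
    with hDd
  have hBp : 0 < B := Finset.sum_pos (fun k _ => by have := hcap k; have := hcwp k; positivity)
    ⟨0, by simp⟩
  have hDp : 0 ≤ D := Finset.sum_nonneg (fun k _ => by
    have := hcwp k; split_ifs <;> positivity)
  have hsum : D + α ^ 2 * β * B + α ^ 2 * l * B = 2 * π * α * S := by
    rw [hBd, hDd, hS, Finset.mul_sum, Finset.mul_sum, Finset.mul_sum, ← Finset.sum_add_distrib,
      ← Finset.sum_add_distrib]
    refine Finset.sum_congr rfl fun k _ => ?_
    have hb : β = m ^ 2 - l := by linarith
    rw [hb]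
    unfold ca cw
    by_cases hk : k = 0
    · simp [hk]; field_simp; ring
    · simp [hk]
      have : (k:ℝ) ^ 2 + m ^ 2 ≠ 0 := by positivity
      field_simp; ring
  have hu0 : ∑ k ∈ Finset.range (N + 1), ca m k * Real.cos (k * (α * 0)) = S := by simp [hS]
  rw [hu0]
  set A := D + α ^ 2 * β * B with hAd
  have hAp : 0 < A := by positivity
  have hSp : 0 < S := Finset.sum_pos (fun k _ => hcap k) ⟨0, by simp⟩
  have hP : 0 < Real.sqrt A * Real.sqrt B := by positivity
  have h1 : 2 * α * Real.sqrt l * (Real.sqrt A * Real.sqrt B) ≤ A + α ^ 2 * l * B := by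
    have := sq_nonneg (Real.sqrt A - α * Real.sqrt l * Real.sqrt B)
    have e1 := Real.sq_sqrt hAp.le
    have e2 := Real.sq_sqrt hBp.le
    have e3 := Real.sq_sqrt hl.le
    have : (Real.sqrt A - α * Real.sqrt l * Real.sqrt B) ^ 2 = A + α ^ 2 * l * B -
        2 * α * Real.sqrt l * (Real.sqrt A * Real.sqrt B) := by
      calc _ = Real.sqrt A ^ 2 + α ^ 2 * Real.sqrt l ^ 2 * Real.sqrt B ^ 2 -
        2 * α * Real.sqrt l * (Real.sqrt A * Real.sqrt B) := by ring
        _ = _ := by rw [e1, e2, e3]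
    linarith
  rw [hsum] at h1
  have h2 : Real.sqrt l * (Real.sqrt A * Real.sqrt B) ≤ π * S := by
    have : α * (Real.sqrt l * (Real.sqrt A * Real.sqrt B)) ≤ α * (π * S) := by linarith
    exact le_of_mul_le_mul_left this hα
  calc K * Real.sqrt A * Real.sqrt B = K * (Real.sqrt A * Real.sqrt B) := by ring
    _ < S * (Real.sqrt l / π) * (Real.sqrt A * Real.sqrt B) := mul_lt_mul_of_pos_right hN hP
    _ = S / π * (Real.sqrt l * (Real.sqrt A * Real.sqrt B)) := by ring
    _ ≤ S / π * (π * S) := mul_le_mul_of_nonneg_left h2 (by positivity)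
    _ = S ^ 2 := by field_simp
end

section
/- For every β ≥ 0.046 one has sup_{λ>0} √λ · coth(π√(β+λ)) / √(β+λ) = 1; that is, K₁(β) = 1 for all β ≥ 0.046 (the paper shows this for all β ≥ β_* = 0.045…). -/
open Real MeasureTheory

theorem cosh_lower_aux (x : ℝ) : 1 + x^2/2 + x^4/24 ≤ Real.cosh x := by
  have h := sum_le_hasSum (Finset.range 3) (fun i _ => by
    have : 0 ≤ x ^ (2 * i) := by rw [pow_mul]; positivity
    positivity) (Real.hasSum_cosh x)
  simp [Finset.sum_range_succ, Nat.factorial] at h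
  linarith

theorem key_aux (x : ℝ) : 1.485 * x ≤ Real.cosh x := by
  have h := cosh_lower_aux x
  nlinarith [sq_nonneg (x^2 - 1.44), sq_nonneg (x - 1.2)]

theorem stmt_5 (β : ℝ) (hβ : 0.046 ≤ β) : K1 β = 1 := by
  have hb : 0 < β := by norm_num at hβ; linarith
  unfold K1
  haveI : Nonempty (Set.Ioi (0:ℝ)) := ⟨⟨1, by simp⟩⟩
  apply ciSup_eq_of_forall_le_of_forall_lt_exists_gt
  · rintro ⟨l, hl⟩
    have hl : 0 < l := hl
    simp only
    have hs : 0 < Real.sqrt (β + l) := Real.sqrt_pos.2 (by linarith)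
    have hs2 : Real.sqrt (β + l) ^ 2 = β + l := Real.sq_sqrt (by linarith)
    have hl2 : Real.sqrt l ^ 2 = l := Real.sq_sqrt hl.le
    set s := Real.sqrt (β + l)
    have hk := key_aux (π * s)
    have hsh : 0 < Real.sinh (π * s) := Real.sinh_pos_iff.2 (by positivity)
    have hch := Real.cosh_sq (π * s)
    have hcp := Real.cosh_pos (π * s)
    rw [div_le_one hs, mul_div_assoc', div_le_iff₀ hsh]
    refine (sq_le_sq₀ (by positivity) (by positivity)).1 ?_
    rw [mul_pow, mul_pow, hl2]
    have h1 : (4.6629 * s) ≤ Real.cosh (π * s) := by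
      have := Real.pi_gt_d2
      have : 3.14 * s ≤ π * s := by gcongr
      nlinarith
    have h2 : (4.6629 * s)^2 ≤ Real.cosh (π * s)^2 := by gcongr
    have h3 : s^2 ≤ β * Real.cosh (π * s)^2 := by
      have : 0.046 * Real.cosh (π * s)^2 ≤ β * Real.cosh (π * s)^2 := by gcongr
      nlinarith [sq_nonneg s]
    have h4 : l = s^2 - β := by linarith
    rw [h4]
    nlinarith
  · intro w hw
    have hw' : 0 < 1 - w := by linarith
    have hl : 0 < β * (|w| + 1) / (1 - w) := by positivity
    refine ⟨⟨_, hl⟩, ?_⟩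
    simp only
    have hlw : β * (|w| + 1) / (1 - w) * (1 - w) = β * (|w| + 1) := by field_simp
    set l := β * (|w| + 1) / (1 - w)
    have hs : 0 < Real.sqrt (β + l) := Real.sqrt_pos.2 (by linarith)
    have hs2 : Real.sqrt (β + l) ^ 2 = β + l := Real.sq_sqrt (by linarith)
    have hl2 : Real.sqrt l ^ 2 = l := Real.sq_sqrt hl.le
    have hl0 : 0 < Real.sqrt l := Real.sqrt_pos.2 hl
    have hls : Real.sqrt l ≤ Real.sqrt (β + l) := Real.sqrt_le_sqrt (by linarith)
    set s := Real.sqrt (β + l)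
    have hsh : 0 < Real.sinh (π * s) := Real.sinh_pos_iff.2 (by positivity)
    have hc : 1 ≤ Real.cosh (π * s) / Real.sinh (π * s) := by
      rw [one_le_div hsh]; exact (Real.sinh_lt_cosh _).le
    rw [lt_div_iff₀ hs]
    have : w * s < Real.sqrt l := by
      have h5 : w * s^2 < l := by
        rw [hs2]
        nlinarith [le_abs_self w, mul_le_mul_of_nonneg_left (le_abs_self w) hb.le]
      have h6 : l ≤ Real.sqrt l * s := by nlinarith
      by_contra! hcon
      nlinarith [mul_le_mul_of_nonneg_right hcon hs.le]
    nlinarith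
end

section
/- Let 0 ≤ β < 1. For every real-valued C¹ function u on ℝ that is 2π-periodic and satisfies ∫_0^{2π} u(x) dx = 0, one has max_x u(x)² ≤ K₂(β) · ( ∫_0^{2π} ( u'(x)² − β u(x)² ) dx )^{1/2} · ( ∫_0^{2π} u(x)² dx )^{1/2}; in particular the first integral is nonnegative. -/
open Real MeasureTheory

/-- The sharp constant `K₂(β) = sup_{λ>0} (√λ/π) · ∑_{k ∈ ℤ, k ≠ 0} 1/(k² − β + λ)`. -/
noncomputable def K2 (β : ℝ) : ℝ :=
  ⨆ l : Set.Ioi (0 : ℝ),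
    Real.sqrt l / π * ∑' k : {k : ℤ // k ≠ 0}, 1 / ((k.1 : ℝ) ^ 2 - β + l)

lemma K2_aux_summable : Summable (fun k : {k : ℤ // k ≠ 0} => 1 / (k.1 : ℝ) ^ 2) := by
  have h : Summable (fun k : ℤ => 1 / (k : ℝ) ^ 2) :=
    Real.summable_one_div_int_pow.mpr (by norm_num)
  exact h.subtype _

lemma K2_aux_one_le (k : {k : ℤ // k ≠ 0}) : (1 : ℝ) ≤ (k.1 : ℝ) ^ 2 := by
  have h : (1 : ℤ) ≤ k.1 ^ 2 := by
    have := k.2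
    have : 0 < k.1 ^ 2 := by positivity
    omega
  exact_mod_cast h

lemma K2_aux_term {β : ℝ} (hβ0 : 0 ≤ β) (hβ1 : β < 1) {l : ℝ} (hl : 0 < l)
    (k : {k : ℤ // k ≠ 0}) : 0 < (k.1 : ℝ) ^ 2 - β + l := by
  have := K2_aux_one_le k
  linarith

lemma K2_aux_summable2 {β : ℝ} (hβ0 : 0 ≤ β) (hβ1 : β < 1) {l : ℝ} (hl : 0 < l) :
    Summable (fun k : {k : ℤ // k ≠ 0} => 1 / ((k.1 : ℝ) ^ 2 - β + l)) := by
  refine Summable.of_nonneg_of_le (fun k => ?_) (fun k => ?_)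
    (K2_aux_summable.mul_left (1 / (1 - β)))
  · exact (one_div_pos.mpr (K2_aux_term hβ0 hβ1 hl k)).le
  · have := K2_aux_one_le k
    have h1 : (0:ℝ) < 1 - β := by linarith
    rw [one_div_mul_one_div]
    apply one_div_le_one_div_of_le
    · positivity
    · nlinarith

lemma K2_aux_tele (s : ℝ) (hs : 0 < s) (n : ℕ) :
    ∑ i ∈ Finset.range n, 1 / (((i : ℝ) + 1) ^ 2 + s ^ 2) ≤ 2 / s - 2 / (n + s) := by
  induction n with
  | zero => simp
  | succ n ih =>
    rw [Finset.sum_range_succ]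
    have h : 1 / (((n : ℝ) + 1) ^ 2 + s ^ 2) ≤ 2 / (n + s) - 2 / (n + 1 + s) := by
      rw [div_sub_div _ _ (by positivity) (by positivity), div_le_div_iff₀ (by positivity) (by positivity)]
      have : (0:ℝ) ≤ n := by positivity
      nlinarith [sq_nonneg ((n : ℝ) + 1 - s)]
    push_cast
    linarith

lemma K2_aux_bdd {β : ℝ} (hβ0 : 0 ≤ β) (hβ1 : β < 1) :
    BddAbove (Set.range (fun l : Set.Ioi (0 : ℝ) =>
      Real.sqrt l / π * ∑' k : {k : ℤ // k ≠ 0}, 1 / ((k.1 : ℝ) ^ 2 - β + l))) := by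
  refine ⟨4 / (π * (1 - β)), ?_⟩
  rintro _ ⟨⟨l, hl⟩, rfl⟩
  simp only [Set.mem_Ioi] at hl ⊢
  set s := Real.sqrt l with hs
  have hspos : 0 < s := Real.sqrt_pos.mpr hl
  have hsq : l = s ^ 2 := (Real.sq_sqrt hl.le).symm
  have h1 : (0:ℝ) < 1 - β := by linarith
  suffices h : ∑' k : {k : ℤ // k ≠ 0}, 1 / ((k.1 : ℝ) ^ 2 - β + l) ≤ 4 / (s * (1 - β)) by
    calc s / π * _ ≤ s / π * (4 / (s * (1 - β))) := by gcongr
      _ = _ := by field_simp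
  refine Real.tsum_le_of_sum_le (fun k => (one_div_pos.mpr (K2_aux_term hβ0 hβ1 hl k)).le) ?_
  intro F
  -- compare with symmetric sum
  have key : ∀ k : {k : ℤ // k ≠ 0}, 1 / ((k.1 : ℝ) ^ 2 - β + l) ≤
      1 / (1 - β) * (1 / ((k.1 : ℝ) ^ 2 + s ^ 2)) := by
    intro k
    have := K2_aux_one_le k
    rw [one_div_mul_one_div, ← hsq]
    apply one_div_le_one_div_of_le
    · positivity
    · nlinarith
  have hs2 : ∑ k ∈ F, 1 / ((k.1 : ℝ) ^ 2 + s ^ 2) ≤ 4 / s := by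
    set G : ℤ → ℝ := fun k => 1 / ((k : ℝ) ^ 2 + s ^ 2) with hG
    have hGn : ∀ k, 0 ≤ G k := by
      intro k; simp only [hG]; positivity
    set F' : Finset ℤ := F.map ⟨Subtype.val, Subtype.val_injective⟩ with hF'
    set N : ℕ := F'.sup Int.natAbs with hN
    set R1 : Finset ℤ := (Finset.range N).image (fun i : ℕ => (i : ℤ) + 1) with hR1
    set R2 : Finset ℤ := (Finset.range N).image (fun i : ℕ => -((i : ℤ) + 1)) with hR2
    have hsub : F' ⊆ R1 ∪ R2 := by
      intro k hk
      have hle : k.natAbs ≤ N := Finset.le_sup (f := Int.natAbs) hk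
      have hk0 : k ≠ 0 := by
        obtain ⟨a, _, rfl⟩ := Finset.mem_map.mp hk
        exact a.2
      simp only [hR1, hR2, Finset.mem_union, Finset.mem_image, Finset.mem_range]
      rcases lt_or_gt_of_ne hk0 with h | h
      · right; exact ⟨k.natAbs - 1, by omega, by omega⟩
      · left; exact ⟨k.natAbs - 1, by omega, by omega⟩
    have e0 : ∑ k ∈ F, 1 / ((k.1 : ℝ) ^ 2 + s ^ 2) = ∑ k ∈ F', G k := by
      rw [hF', Finset.sum_map]; rfl
    have hT := K2_aux_tele s hspos N
    have hpos : (0:ℝ) ≤ 2 / (N + s) := by positivity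
    have e1 : ∑ k ∈ R1, G k = ∑ i ∈ Finset.range N, 1 / (((i : ℝ) + 1) ^ 2 + s ^ 2) := by
      rw [hR1, Finset.sum_image (by intro a _ b _ h; simpa using h)]
      simp [hG]
    have e2 : ∑ k ∈ R2, G k = ∑ i ∈ Finset.range N, 1 / (((i : ℝ) + 1) ^ 2 + s ^ 2) := by
      rw [hR2, Finset.sum_image (by intro a _ b _ h; simpa using h)]
      refine Finset.sum_congr rfl fun i _ => ?_
      simp only [hG]; push_cast; congr 2; ring
    have e3 := Finset.sum_union_inter (s₁ := R1) (s₂ := R2) (f := G)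
    have e4 : 0 ≤ ∑ k ∈ R1 ∩ R2, G k := Finset.sum_nonneg fun k _ => hGn k
    have e5 : ∑ k ∈ F', G k ≤ ∑ k ∈ R1 ∪ R2, G k :=
      Finset.sum_le_sum_of_subset_of_nonneg hsub fun k _ _ => hGn k
    have e6 : 4 / s = 2 / s + 2 / s := by ring
    rw [e0, e6]
    linarith
  calc _ ≤ ∑ k ∈ F, 1 / (1 - β) * (1 / ((k.1 : ℝ) ^ 2 + s ^ 2)) := Finset.sum_le_sum fun k _ => key k
    _ = 1 / (1 - β) * ∑ k ∈ F, 1 / ((k.1 : ℝ) ^ 2 + s ^ 2) := by rw [Finset.mul_sum]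
    _ ≤ 1 / (1 - β) * (4 / s) := by gcongr
    _ = _ := by field_simp

/-- Fourier data -/
lemma fourier_data (u : ℝ → ℝ) (hu : ContDiff ℝ 1 u) (hper : Function.Periodic u (2 * π))
    (hmean : ∫ x in (0:ℝ)..(2 * π), u x = 0) :
    ∃ c : {k : ℤ // k ≠ 0} → ℝ, (∀ k, 0 ≤ c k) ∧
      HasSum (fun k => c k ^ 2) ((2 * π)⁻¹ * ∫ x in (0:ℝ)..(2 * π), (u x) ^ 2) ∧
      HasSum (fun k => (k.1 : ℝ) ^ 2 * c k ^ 2)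
        ((2 * π)⁻¹ * ∫ x in (0:ℝ)..(2 * π), (deriv u x) ^ 2) ∧
      ∀ x, Summable c → |u x| ≤ ∑' k, c k := by
  have hab : (0:ℝ) < 2 * π := by positivity
  have hT : Fact (0 < 2 * π - 0) := ⟨by simpa using hab⟩
  have hcu : Continuous u := hu.continuous
  have hcd : Continuous (deriv u) := hu.continuous_deriv (by norm_num)
  have hu0 : u (2 * π) = u 0 := by simpa using hper 0
  set f : ℝ → ℂ := fun x => (u x : ℂ) with hf
  set f' : ℝ → ℂ := fun x => ((deriv u x : ℝ) : ℂ) with hf'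
  have hfc : Continuous f := Complex.continuous_ofReal.comp hcu
  have hfc' : Continuous f' := Complex.continuous_ofReal.comp hcd
  have hL : ∀ g : ℝ → ℂ, Continuous g → MemLp g 2 (volume.restrict (Set.Ioc 0 (2 * π))) := by
    intro g hg
    have h1 : MemLp g 2 (volume.restrict (Set.Icc 0 (2 * π))) := by
      obtain ⟨C, hC⟩ := isCompact_Icc.exists_bound_of_continuousOn (s := Set.Icc 0 (2 * π)) hg.continuousOn
      refine MemLp.of_bound hg.aestronglyMeasurable C ?_
      filter_upwards [ae_restrict_mem measurableSet_Icc] with x hx using hC x hx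
    exact h1.mono_measure (Measure.restrict_mono Set.Ioc_subset_Icc_self le_rfl)
  have P1 := hasSum_sq_fourierCoeffOn hab (hL f hfc)
  have P2 := hasSum_sq_fourierCoeffOn hab (hL f' hfc')
  have hder : ∀ x, HasDerivAt f (f' x) x := fun x =>
    ((hu.differentiable (by norm_num)) x).hasDerivAt.ofReal_comp
  have z1 : fourierCoeffOn hab f 0 = 0 := by
    rw [fourierCoeffOn_eq_integral]
    simp [hf, intervalIntegral.integral_ofReal, hmean]
  have z2 : fourierCoeffOn hab f' 0 = 0 := by
    rw [fourierCoeffOn_eq_integral]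
    have : ∫ x in (0:ℝ)..(2 * π), f' x = 0 := by
      rw [intervalIntegral.integral_eq_sub_of_hasDerivAt (fun x _ => hder x)
        (hfc'.intervalIntegrable _ _)]
      simp [hf, hu0]
    simp [this]
  have hrel : ∀ n : ℤ, n ≠ 0 → ‖fourierCoeffOn hab f' n‖ ^ 2 =
      (n : ℝ) ^ 2 * ‖fourierCoeffOn hab f n‖ ^ 2 := by
    intro n hn
    have h := fourierCoeffOn_of_hasDerivAt hab hn (fun x _ => hder x)
      (hfc'.intervalIntegrable _ _)
    have h2 : f (2 * π) - f 0 = 0 := by simp [hf, hu0]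
    have hnc : (n : ℂ) ≠ 0 := by exact_mod_cast hn
    have hpi : (π : ℂ) ≠ 0 := by exact_mod_cast Real.pi_ne_zero
    have h3 : fourierCoeffOn hab f' n = Complex.I * n * fourierCoeffOn hab f n := by
      rw [h, h2]
      push_cast
      field_simp
      simp
      ring
    rw [h3, norm_mul, norm_mul, mul_pow, mul_pow]
    simp
  have hinj : Function.Injective (Subtype.val : {k : ℤ // k ≠ 0} → ℤ) := Subtype.val_injective
  refine ⟨fun k => ‖fourierCoeffOn hab f k.1‖, fun k => norm_nonneg _, ?_, ?_, ?_⟩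
  · have := (hinj.hasSum_iff (f := fun i => ‖fourierCoeffOn hab f i‖ ^ 2) ?_).mpr P1
    · simpa [hf, Function.comp_def] using this
    · intro x hx
      have : x = 0 := by simpa using hx
      simp [this, z1]
  · have := (hinj.hasSum_iff (f := fun i => ‖fourierCoeffOn hab f' i‖ ^ 2) ?_).mpr P2
    · convert this using 1
      · ext k
        simp [hrel k.1 k.2]
      · simp [hf']
    · intro x hx
      have : x = 0 := by simpa using hx
      simp [this, z2]
  · intro x hsum
    have hperf : Function.Periodic f (2 * π - 0) := by
      intro x; simp [hf, hper x]
    let F : C(AddCircle (2 * π - 0), ℂ) := ⟨hperf.lift, continuous_quot_lift _ hfc⟩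
    have hFx : ∀ x : ℝ, F (x : AddCircle (2 * π - 0)) = f x := fun x => hperf.lift_coe x
    have hFc : ∀ n, fourierCoeff F n = fourierCoeffOn hab f n := by
      intro n
      rw [fourierCoeff_eq_intervalIntegral _ n 0, fourierCoeffOn_eq_integral, add_sub_cancel]
      simp only [hFx]
    have hsn : Summable (fun n : ℤ => ‖fourierCoeffOn hab f n‖) := by
      refine (hinj.summable_iff ?_).mp hsum
      intro x hx
      have : x = 0 := by simpa using hx
      simp [this, z1]
    have hs : Summable (fourierCoeff F) := by
      apply Summable.of_norm
      simpa [hFc] using hsn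
    have hp := has_pointwise_sum_fourier_series_of_summable hs (x : AddCircle (2 * π - 0))
    have hle : ‖F (x : AddCircle (2 * π - 0))‖ ≤ ∑' n : ℤ, ‖fourierCoeffOn hab f n‖ := by
      rw [← hp.tsum_eq]
      refine tsum_of_norm_bounded hsn.hasSum ?_
      intro n
      rw [hFc, norm_smul, fourier_apply, Circle.norm_coe, mul_one]
    rw [hFx] at hle
    have heq : ∑' k : {k : ℤ // k ≠ 0}, ‖fourierCoeffOn hab f k.1‖ = ∑' n : ℤ, ‖fourierCoeffOn hab f n‖ := by
      refine hinj.tsum_eq (f := fun n => ‖fourierCoeffOn hab f n‖) ?_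
      intro n hn
      have : n ≠ 0 := by
        rintro rfl
        simp [z1] at hn
      exact ⟨⟨n, this⟩, rfl⟩
    rw [heq]
    simpa [hf] using hle

theorem stmt_7 (β : ℝ) (hβ0 : 0 ≤ β) (hβ1 : β < 1)
    (u : ℝ → ℝ) (hu : ContDiff ℝ 1 u) (hper : Function.Periodic u (2 * π))
    (hmean : ∫ x in (0:ℝ)..(2 * π), u x = 0) :
    (∀ x : ℝ, u x ^ 2 ≤ K2 β *
        Real.sqrt (∫ x in (0:ℝ)..(2 * π), ((deriv u x) ^ 2 - β * (u x) ^ 2)) *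
        Real.sqrt (∫ x in (0:ℝ)..(2 * π), (u x) ^ 2)) ∧
      0 ≤ ∫ x in (0:ℝ)..(2 * π), ((deriv u x) ^ 2 - β * (u x) ^ 2) := by
  obtain ⟨c, hc0, hB, hD, hU⟩ := fourier_data u hu hper hmean
  have hcu : Continuous u := hu.continuous
  have hcd : Continuous (deriv u) := hu.continuous_deriv (by norm_num)
  have hsplit : ∫ x in (0:ℝ)..(2 * π), ((deriv u x) ^ 2 - β * (u x) ^ 2) =
      (∫ x in (0:ℝ)..(2 * π), (deriv u x) ^ 2) - β * ∫ x in (0:ℝ)..(2 * π), (u x) ^ 2 := by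
    rw [intervalIntegral.integral_sub, intervalIntegral.integral_const_mul]
    · exact (hcd.pow 2).intervalIntegrable _ _
    · exact (continuous_const.mul (hcu.pow 2)).intervalIntegrable _ _
  set A := ∫ x in (0:ℝ)..(2 * π), ((deriv u x) ^ 2 - β * (u x) ^ 2) with hA
  set B := ∫ x in (0:ℝ)..(2 * π), (u x) ^ 2 with hBd
  set D := ∫ x in (0:ℝ)..(2 * π), (deriv u x) ^ 2 with hDd
  have hpi := Real.pi_pos
  have hBnn : 0 ≤ B := by
    have := hB.nonneg (fun k => sq_nonneg _)
    exact nonneg_of_mul_nonneg_right this (by positivity)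
  have hDB : B ≤ D := by
    have := hasSum_le (fun k => ?_) hB hD
    · exact le_of_mul_le_mul_left this (by positivity)
    · exact le_mul_of_one_le_left (sq_nonneg _) (K2_aux_one_le k)
  have hAB : (1 - β) * B ≤ A := by rw [hsplit]; linarith
  have hAnn : 0 ≤ A := le_trans (mul_nonneg (by linarith) hBnn) hAB
  refine ⟨fun x => ?_, hAnn⟩
  have hK0 : 0 ≤ K2 β := by
    apply Real.iSup_nonneg
    rintro ⟨l, hl⟩
    refine mul_nonneg (by positivity) (tsum_nonneg fun k => ?_)
    exact (one_div_pos.mpr (K2_aux_term hβ0 hβ1 hl k)).le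
  rcases eq_or_ne (u x) 0 with h0 | h0
  · rw [h0, zero_pow two_ne_zero]; positivity
  have hUpos : 0 < |u x| := abs_pos.mpr h0
  have hBpos : 0 < B := by
    refine lt_of_le_of_ne hBnn fun hB0 => ?_
    rw [← hB0, mul_zero, hasSum_zero_iff_of_nonneg (fun k => sq_nonneg _)] at hB
    have hcz : c = fun _ => 0 := by
      ext k
      simpa using congrFun hB k
    have := hU x (by rw [hcz]; exact summable_zero)
    rw [hcz] at this
    simp at this
    exact h0 this
  have hApos : 0 < A := lt_of_lt_of_le (mul_pos (by linarith) hBpos) hAB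
  set l := A / B with hl
  have hlpos : 0 < l := div_pos hApos hBpos
  set w : {k : ℤ // k ≠ 0} → ℝ := fun k => (k.1 : ℝ) ^ 2 - β + l with hw
  have hwpos : ∀ k, 0 < w k := K2_aux_term hβ0 hβ1 hlpos
  have hSs : Summable (fun k => 1 / w k) := K2_aux_summable2 hβ0 hβ1 hlpos
  set S := ∑' k, 1 / w k with hS
  have hP : HasSum (fun k => w k * c k ^ 2) (A / π) := by
    have h := (hD.sub (hB.mul_left β)).add (hB.mul_left l)
    have ea : (fun k => w k * c k ^ 2) = fun b : {k : ℤ // k ≠ 0} =>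
        (b.1 : ℝ) ^ 2 * c b ^ 2 - β * c b ^ 2 + l * c b ^ 2 := by
      ext k; simp only [w]; ring
    have eb : A / π = (2 * π)⁻¹ * D - β * ((2 * π)⁻¹ * B) + l * ((2 * π)⁻¹ * B) := by
      have hD' : D = A + β * B := by rw [hsplit]; ring
      have hlB : l * B = A := by rw [hl]; field_simp
      have : l * ((2 * π)⁻¹ * B) = (2 * π)⁻¹ * A := by rw [← hlB]; ring
      rw [this, hD']; field_simp; ring
    rw [ea, eb]
    exact h
  set P := A / π with hPd
  have hPpos : 0 < P := by positivity
  have hmain : u x ^ 2 ≤ S * P := by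
    set t := |u x| / P with ht
    have htpos : 0 < t := by positivity
    have hsum := (hP.mul_left (t / 2)).add (hSs.hasSum.mul_left (1 / (2 * t)))
    have hle : ∀ k, c k ≤ t / 2 * (w k * c k ^ 2) + 1 / (2 * t) * (1 / w k) := by
      intro k
      have hwk := hwpos k
      have : t / 2 * (w k * c k ^ 2) + 1 / (2 * t) * (1 / w k) - c k =
          (t * w k * c k - 1) ^ 2 / (2 * t * w k) := by
        field_simp; ring
      have h2 : 0 ≤ (t * w k * c k - 1) ^ 2 / (2 * t * w k) := by positivity
      linarith
    have hcs : Summable c := Summable.of_nonneg_of_le hc0 hle hsum.summable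
    have h1 := (hU x hcs).trans (hasSum_le hle hcs.hasSum hsum)
    have h2 : t / 2 * P + 1 / (2 * t) * S = |u x| / 2 + P * S / (2 * |u x|) := by
      rw [ht]; field_simp
    rw [← hS, h2] at h1
    have h3 : |u x| / 2 ≤ P * S / (2 * |u x|) := by linarith
    rw [div_le_div_iff₀ (by norm_num) (by positivity)] at h3
    rw [← sq_abs]
    nlinarith
  have hK : Real.sqrt l / π * S ≤ K2 β := le_ciSup (K2_aux_bdd hβ0 hβ1) ⟨l, hlpos⟩
  calc u x ^ 2 ≤ S * P := hmain
    _ = Real.sqrt l / π * S * Real.sqrt A * Real.sqrt B := by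
      have hsB : 0 < Real.sqrt B := Real.sqrt_pos.mpr hBpos
      rw [hl, Real.sqrt_div hAnn, hPd]
      field_simp
      rw [Real.sq_sqrt hAnn]
    _ ≤ _ := by gcongr
end

section
/- Let 0 ≤ β < 1. The constant K₂(β) is sharp in the interpolation inequality: for every K < K₂(β) there exists a real-valued C¹ 2π-periodic function u on ℝ with ∫_0^{2π} u(x) dx = 0 and max_x u(x)² > K · ( ∫_0^{2π} ( u'(x)² − β u(x)² ) dx )^{1/2} · ( ∫_0^{2π} u(x)² dx )^{1/2}. -/
open Real MeasureTheory

lemma aux_int_cos (k : ℤ) :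
    (∫ x in (0:ℝ)..(2 * π), Real.cos ((k:ℝ) * x)) = if k = 0 then 2 * π else 0 := by
  split_ifs with h
  · subst h; simp
  · have hk : (k:ℝ) ≠ 0 := by exact_mod_cast h
    rw [intervalIntegral.integral_comp_mul_left (fun x => Real.cos x) hk, integral_cos]
    have : Real.sin ((k:ℝ) * (2 * π)) = 0 := by
      have := Real.sin_int_mul_pi (2 * k)
      push_cast at this
      rw [← this]; congr 1; ring
    simp [this]

lemma aux_cc (n m : ℕ) (hn : 1 ≤ n) :
    (∫ x in (0:ℝ)..(2 * π), Real.cos ((n:ℝ) * x) * Real.cos ((m:ℝ) * x))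
      = if n = m then π else 0 := by
  have h : ∀ x : ℝ, Real.cos ((n:ℝ) * x) * Real.cos ((m:ℝ) * x)
      = (1/2) * Real.cos ((((n:ℤ) - (m:ℤ) : ℤ) : ℝ) * x)
        + (1/2) * Real.cos ((((n:ℤ) + (m:ℤ) : ℤ) : ℝ) * x) := by
    intro x
    push_cast
    rw [sub_mul, add_mul, Real.cos_sub, Real.cos_add]; ring
  simp_rw [h]
  rw [intervalIntegral.integral_add (Continuous.intervalIntegrable (by fun_prop) _ _)
    (Continuous.intervalIntegrable (by fun_prop) _ _), intervalIntegral.integral_const_mul,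
    intervalIntegral.integral_const_mul, aux_int_cos, aux_int_cos]
  have h2 : ¬ ((n:ℤ) + (m:ℤ) = 0) := by omega
  rw [if_neg h2]
  by_cases h3 : n = m
  · rw [if_pos h3, if_pos (by omega)]; ring
  · rw [if_neg h3, if_neg (by omega)]; ring

lemma aux_ss (n m : ℕ) (hn : 1 ≤ n) :
    (∫ x in (0:ℝ)..(2 * π), Real.sin ((n:ℝ) * x) * Real.sin ((m:ℝ) * x))
      = if n = m then π else 0 := by
  have h : ∀ x : ℝ, Real.sin ((n:ℝ) * x) * Real.sin ((m:ℝ) * x)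
      = (1/2) * Real.cos ((((n:ℤ) - (m:ℤ) : ℤ) : ℝ) * x)
        - (1/2) * Real.cos ((((n:ℤ) + (m:ℤ) : ℤ) : ℝ) * x) := by
    intro x
    push_cast
    rw [sub_mul, add_mul, Real.cos_sub, Real.cos_add]; ring
  simp_rw [h]
  rw [intervalIntegral.integral_sub (Continuous.intervalIntegrable (by fun_prop) _ _)
    (Continuous.intervalIntegrable (by fun_prop) _ _), intervalIntegral.integral_const_mul,
    intervalIntegral.integral_const_mul, aux_int_cos, aux_int_cos]
  have h2 : ¬ ((n:ℤ) + (m:ℤ) = 0) := by omega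
  rw [if_neg h2]
  by_cases h3 : n = m
  · rw [if_pos h3, if_pos (by omega)]; ring
  · rw [if_neg h3, if_neg (by omega)]; ring

lemma aux_sq (f : ℕ → ℝ → ℝ) (hf : ∀ n, Continuous (f n)) (N : ℕ)
    (ho : ∀ n m : ℕ, 1 ≤ n → (∫ x in (0:ℝ)..(2 * π), f n x * f m x) = if n = m then π else 0)
    (a : ℕ → ℝ) :
    (∫ x in (0:ℝ)..(2 * π), (∑ n ∈ Finset.Icc 1 N, a n * f n x) ^ 2)
      = π * ∑ n ∈ Finset.Icc 1 N, a n ^ 2 := by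
  have h : ∀ x : ℝ, (∑ n ∈ Finset.Icc 1 N, a n * f n x) ^ 2
      = ∑ n ∈ Finset.Icc 1 N, ∑ m ∈ Finset.Icc 1 N, (a n * a m) * (f n x * f m x) := by
    intro x
    rw [sq, Finset.sum_mul_sum]
    refine Finset.sum_congr rfl fun n _ => Finset.sum_congr rfl fun m _ => ?_
    ring
  simp_rw [h]
  rw [intervalIntegral.integral_finsetSum
    (fun n _ => Continuous.intervalIntegrable (by fun_prop) _ _), Finset.mul_sum]
  refine Finset.sum_congr rfl fun n hn => ?_
  rw [intervalIntegral.integral_finsetSum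
    (fun n _ => Continuous.intervalIntegrable (by fun_prop) _ _)]
  simp_rw [intervalIntegral.integral_const_mul]
  rw [Finset.sum_congr rfl fun m _ => by rw [ho n m (Finset.mem_Icc.1 hn).1]]
  simp only [mul_ite, mul_zero, Finset.sum_ite_eq, hn, if_true]
  ring

lemma aux_finset (g : ℕ → ℝ) (hg : ∀ n, 1 ≤ n → 0 ≤ g n) (F : Finset {k : ℤ // k ≠ 0}) :
    ∃ N : ℕ, 1 ≤ N ∧ ∑ k ∈ F, g k.1.natAbs ≤ 2 * ∑ n ∈ Finset.Icc 1 N, g n := by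
  refine ⟨F.sup (fun k => k.1.natAbs) + 1, by omega, ?_⟩
  set N := F.sup (fun k => k.1.natAbs) + 1 with hN
  have hle : ∀ k ∈ F, k.1.natAbs ≤ N := fun k hk =>
    (Finset.le_sup (f := fun k : {k : ℤ // k ≠ 0} => k.1.natAbs) hk).trans (by omega)
  have key : ∀ G : Finset {k : ℤ // k ≠ 0}, G ⊆ F →
      Set.InjOn (fun k : {k : ℤ // k ≠ 0} => k.1.natAbs) G →
      ∑ k ∈ G, g k.1.natAbs ≤ ∑ n ∈ Finset.Icc 1 N, g n := by
    intro G hG hinj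
    rw [← Finset.sum_image (f := g) hinj]
    refine Finset.sum_le_sum_of_subset_of_nonneg ?_ ?_
    · intro n hn
      obtain ⟨k, hk, rfl⟩ := Finset.mem_image.1 hn
      have := k.2
      exact Finset.mem_Icc.2 ⟨by omega, hle k (hG hk)⟩
    · intro n hn _
      exact hg n (Finset.mem_Icc.1 hn).1
  rw [← Finset.sum_filter_add_sum_filter_not F (fun k => 0 < k.1), two_mul]
  refine add_le_add (key _ (Finset.filter_subset _ _) ?_) (key _ (Finset.filter_subset _ _) ?_)
  · intro a ha b hb hab
    have h1 := (Finset.mem_filter.1 ha).2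
    have h2 := (Finset.mem_filter.1 hb).2
    apply Subtype.ext
    simp only at hab
    omega
  · intro a ha b hb hab
    have h1 := (Finset.mem_filter.1 ha).2
    have h2 := (Finset.mem_filter.1 hb).2
    apply Subtype.ext
    simp only at hab
    omega

theorem stmt_8 (β : ℝ) (hβ0 : 0 ≤ β) (hβ1 : β < 1) (K : ℝ) (hK : K < K2 β) :
    ∃ u : ℝ → ℝ, ContDiff ℝ 1 u ∧ Function.Periodic u (2 * π) ∧
      (∫ x in (0:ℝ)..(2 * π), u x) = 0 ∧
      ∃ x : ℝ, u x ^ 2 > K *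
        Real.sqrt (∫ x in (0:ℝ)..(2 * π), ((deriv u x) ^ 2 - β * (u x) ^ 2)) *
        Real.sqrt (∫ x in (0:ℝ)..(2 * π), (u x) ^ 2) := by
  obtain ⟨⟨l, hl⟩, hKl⟩ := exists_lt_of_lt_ciSup hK
  replace hl : 0 < l := hl
  simp only at hKl
  set a : ℕ → ℝ := fun n => 1 / ((n:ℝ) ^ 2 - β + l) with ha
  have hden : ∀ n : ℕ, 1 ≤ n → 0 < (n:ℝ) ^ 2 - β + l := by
    intro n hn
    have : (1:ℝ) ≤ n := by exact_mod_cast hn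
    nlinarith
  have hapos : ∀ n : ℕ, 1 ≤ n → 0 < a n := fun n hn => one_div_pos.2 (hden n hn)
  have hak : ∀ k : {k : ℤ // k ≠ 0}, 1 / ((k.1 : ℝ) ^ 2 - β + l) = a k.1.natAbs := by
    intro k
    have : ((k.1.natAbs : ℕ) : ℝ) ^ 2 = (k.1 : ℝ) ^ 2 := by
      rw [Nat.cast_natAbs, Int.cast_abs, sq_abs]
    simp only [ha, this]
  simp_rw [hak] at hKl
  have hsl : 0 < Real.sqrt l := Real.sqrt_pos.2 hl
  have hF : ∃ F : Finset {k : ℤ // k ≠ 0}, K < Real.sqrt l / π * ∑ k ∈ F, a k.1.natAbs := by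
    by_cases hs : Summable (fun k : {k : ℤ // k ≠ 0} => a k.1.natAbs)
    · exact ((hs.hasSum.mul_left (Real.sqrt l / π)).eventually_const_lt hKl).exists.imp
        fun F h => by rwa [Finset.mul_sum]
    · rw [tsum_eq_zero_of_not_summable hs] at hKl
      exact ⟨∅, by simpa using hKl⟩
  obtain ⟨F, hF⟩ := hF
  obtain ⟨N, hN1, hN⟩ := aux_finset a (fun n hn => (hapos n hn).le) F
  set s := ∑ n ∈ Finset.Icc 1 N, a n with hs
  have hspos : 0 < s := Finset.sum_pos (fun n hn => hapos n (Finset.mem_Icc.1 hn).1)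
    ⟨1, Finset.mem_Icc.2 ⟨le_rfl, hN1⟩⟩
  have hKs : K < Real.sqrt l / π * (2 * s) :=
    hF.trans_le (mul_le_mul_of_nonneg_left hN (by positivity))
  set u : ℝ → ℝ := fun x => ∑ n ∈ Finset.Icc 1 N, a n * Real.cos ((n:ℝ) * x) with hu
  have hderiv : ∀ x, deriv u x
      = ∑ n ∈ Finset.Icc 1 N, (-(n:ℝ) * a n) * Real.sin ((n:ℝ) * x) := by
    intro x
    apply HasDerivAt.deriv
    apply HasDerivAt.fun_sum
    intro n _
    have h := ((((hasDerivAt_id x).const_mul (n:ℝ)).cos).const_mul (a n))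
    have e : a n * (-Real.sin ((n:ℝ) * id x) * ((n:ℝ) * 1))
        = (-(n:ℝ) * a n) * Real.sin ((n:ℝ) * x) := by
      simp only [id]; ring
    exact e ▸ h
  have hB : (∫ x in (0:ℝ)..(2 * π), (u x) ^ 2) = π * ∑ n ∈ Finset.Icc 1 N, a n ^ 2 :=
    aux_sq (fun n x => Real.cos ((n:ℝ) * x)) (fun n => by fun_prop) N aux_cc a
  have hA : (∫ x in (0:ℝ)..(2 * π), ((deriv u x) ^ 2 - β * (u x) ^ 2))
      = π * ∑ n ∈ Finset.Icc 1 N, ((n:ℝ) ^ 2 - β) * a n ^ 2 := by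
    have h2 := aux_sq (fun n x => Real.sin ((n:ℝ) * x)) (fun n => by fun_prop) N aux_ss
      (fun n => -(n:ℝ) * a n)
    have hcu : Continuous u := by fun_prop
    simp_rw [hderiv]
    rw [intervalIntegral.integral_sub (Continuous.intervalIntegrable (by fun_prop) _ _)
      (Continuous.intervalIntegrable (by fun_prop) _ _), intervalIntegral.integral_const_mul, hB,
      h2]
    simp only [Finset.mul_sum, ← Finset.sum_sub_distrib]
    refine Finset.sum_congr rfl fun n _ => ?_
    ring
  refine ⟨u, ?_, ?_, ?_, 0, ?_⟩
  · exact ContDiff.sum fun n _ => by fun_prop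
  · intro x
    simp only [hu]
    refine Finset.sum_congr rfl fun n _ => ?_
    rw [mul_add, Real.cos_add_nat_mul_two_pi]
  · simp only [hu]
    rw [intervalIntegral.integral_finsetSum
      (fun n _ => Continuous.intervalIntegrable (by fun_prop) _ _)]
    refine Finset.sum_eq_zero fun n hn => ?_
    have h1 := aux_int_cos (n:ℤ)
    have h2 := (Finset.mem_Icc.1 hn).1
    rw [if_neg (by omega)] at h1
    push_cast at h1
    rw [intervalIntegral.integral_const_mul, h1, mul_zero]
  · have hu0 : u 0 = s := by simp [hu, hs]
    rw [hu0, hA, hB]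
    set A := π * ∑ n ∈ Finset.Icc 1 N, ((n:ℝ) ^ 2 - β) * a n ^ 2 with hAd
    set B := π * ∑ n ∈ Finset.Icc 1 N, a n ^ 2 with hBd
    have hA0 : 0 ≤ A := by
      refine mul_nonneg Real.pi_pos.le (Finset.sum_nonneg fun n hn => ?_)
      have : (1:ℝ) ≤ n := by exact_mod_cast (Finset.mem_Icc.1 hn).1
      exact mul_nonneg (by nlinarith) (sq_nonneg _)
    have hB0 : 0 ≤ B := mul_nonneg Real.pi_pos.le (Finset.sum_nonneg fun n hn => sq_nonneg _)
    have hAB : A + l * B = π * s := by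
      simp only [hAd, hBd, hs, Finset.mul_sum, ← Finset.sum_add_distrib]
      refine Finset.sum_congr rfl fun n hn => ?_
      have := hden n (Finset.mem_Icc.1 hn).1
      simp only [ha]
      field_simp
    have hsA := Real.sq_sqrt hA0
    have hsB := Real.sq_sqrt hB0
    have hsL := Real.sq_sqrt hl.le
    have hpA := Real.sqrt_nonneg A
    have hpB := Real.sqrt_nonneg B
    set p := Real.sqrt A
    set q := Real.sqrt B
    set r := Real.sqrt l
    have hpq : 2 * r * (p * q) ≤ π * s := by
      nlinarith [sq_nonneg (p - r * q)]
    have hpq0 : 0 ≤ p * q := mul_nonneg hpA hpB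
    rw [gt_iff_lt, mul_assoc]
    rcases hpq0.eq_or_lt with h0 | h0
    · rw [← h0, mul_zero]; positivity
    · calc K * (p * q) < r / π * (2 * s) * (p * q) := mul_lt_mul_of_pos_right hKs h0
        _ = (s / π) * (2 * r * (p * q)) := by ring
        _ ≤ (s / π) * (π * s) := mul_le_mul_of_nonneg_left hpq (by positivity)
        _ = s ^ 2 := by field_simp
end

section
/- For every β with 0 ≤ β ≤ 0.839 one has sup_{λ>0} (√λ/π) · ∑_{k ∈ ℤ, k ≠ 0} 1/(k² − β + λ) = 1; that is, K₂(β) = 1 for all 0 ≤ β ≤ 0.839 (the paper shows this for all β ≤ β_** = 0.839…). -/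
open Real MeasureTheory

lemma aux_summable (c : ℝ) (hc : -1 < c) :
    Summable (fun n : ℕ => 1 / (((n : ℝ) + 1) ^ 2 + c)) := by
  have h0 : Summable (fun n : ℕ => (1 : ℝ) / (((n + 2 : ℕ) : ℝ)) ^ 2) :=
    (summable_nat_add_iff 2).2 (hasSum_zeta_two.summable)
  rw [← summable_nat_add_iff 1]
  refine Summable.of_nonneg_of_le ?_ ?_ (h0.mul_left 2)
  · intro n
    push_cast
    have : (0 : ℝ) ≤ n := Nat.cast_nonneg n
    have : 0 < ((n : ℝ) + 1 + 1) ^ 2 + c := by nlinarith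
    positivity
  · intro n
    push_cast
    have : (0 : ℝ) ≤ n := Nat.cast_nonneg n
    have h2 : 0 < ((n : ℝ) + 1 + 1) ^ 2 + c := by nlinarith
    rw [mul_one_div, div_le_div_iff₀ h2 (by positivity)]
    nlinarith

lemma aux_hasSum (c : ℝ) (hc : -1 < c) :
    HasSum (fun k : {k : ℤ // k ≠ 0} => 1 / ((k.1 : ℝ) ^ 2 + c))
      (2 * ∑' n : ℕ, 1 / (((n : ℝ) + 1) ^ 2 + c)) := by
  have hs := (aux_summable c hc).hasSum
  set S := ∑' n : ℕ, 1 / (((n : ℝ) + 1) ^ 2 + c)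
  have key : HasSum (Set.indicator {k : ℤ | k ≠ 0} (fun k : ℤ => 1 / ((k : ℝ) ^ 2 + c)))
      (S + S) := by
    apply HasSum.of_nat_of_neg_add_one
    · rw [← hasSum_nat_add_iff' 1]
      simp only [Finset.range_one, Finset.sum_singleton]
      convert hs using 1
      · rfl
      · funext n
        rw [Set.indicator_of_mem]
        · push_cast; rfl
        · show ((n + 1 : ℕ) : ℤ) ≠ 0
          omega
      · simp
    · convert hs using 1
      ext n
      rw [Set.indicator_of_mem]
      · push_cast
        ring_nf
      · show -((n : ℤ) + 1) ≠ 0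
        omega
  rw [two_mul]
  exact (hasSum_subtype_iff_indicator (s := {k : ℤ | k ≠ 0})).2 key

lemma aux_coth (a : ℝ) (ha : 0 < a) :
    ∑' n : ℕ, 1 / (((n : ℝ) + 1) ^ 2 + a ^ 2)
      = (π * (Real.cosh (π * a) / Real.sinh (π * a)) - 1 / a) / (2 * a) := by
  have hz : (a : ℂ) * Complex.I ∈ Complex.integerComplement := by
    rintro ⟨m, hm⟩
    have := congrArg Complex.im hm
    simp at this
    linarith
  have h := cot_series_rep' hz
  have haC : (a : ℂ) ≠ 0 := by exact_mod_cast ha.ne'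
  have hsinh : Real.sinh (π * a) ≠ 0 := (Real.sinh_pos_iff.2 (by positivity)).ne'
  have hsinhC : Complex.sinh ((π : ℂ) * a) ≠ 0 := by
    have : ((Real.sinh (π * a) : ℝ) : ℂ) ≠ 0 := by exact_mod_cast hsinh
    simpa using this
  have hterm : ∀ n : ℕ, 1 / ((a : ℂ) * Complex.I - ((n : ℂ) + 1))
      + 1 / ((a : ℂ) * Complex.I + ((n : ℂ) + 1))
      = (-2 * a * Complex.I) * ((1 / (((n : ℝ) + 1) ^ 2 + a ^ 2) : ℝ) : ℂ) := by
    intro n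
    have hn : ((n : ℂ) + 1) ^ 2 + (a : ℂ) ^ 2 ≠ 0 := by
      have : ((((n : ℝ) + 1) ^ 2 + a ^ 2 : ℝ) : ℂ) ≠ 0 := by
        exact_mod_cast (by positivity : (((n : ℝ) + 1) ^ 2 + a ^ 2 : ℝ) ≠ 0)
      simpa using this
    have hf : ((n : ℂ) + 1) ^ 2 + (a : ℂ) ^ 2
        = -((a : ℂ) * Complex.I - ((n : ℂ) + 1)) * ((a : ℂ) * Complex.I + ((n : ℂ) + 1)) := by
      linear_combination (a : ℂ) ^ 2 * Complex.I_sq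
    have h1 : (a : ℂ) * Complex.I - ((n : ℂ) + 1) ≠ 0 := by
      intro h0; rw [hf, h0] at hn; simp at hn
    have h2 : (a : ℂ) * Complex.I + ((n : ℂ) + 1) ≠ 0 := by
      intro h0; rw [hf, h0] at hn; simp at hn
    push_cast
    rw [hf]
    field_simp
    ring
  rw [tsum_congr hterm, tsum_mul_left, ← Complex.ofReal_tsum, ← mul_assoc, Complex.cot,
    Complex.cos_mul_I, Complex.sin_mul_I] at h
  set S := ∑' n : ℕ, 1 / (((n : ℝ) + 1) ^ 2 + a ^ 2)
  have h' : (S : ℂ) = ((π * (Real.cosh (π * a) / Real.sinh (π * a)) - 1 / a) / (2 * a) : ℝ) := by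
    push_cast
    field_simp at h ⊢
    have hI : Complex.I * Complex.I = -1 := Complex.I_mul_I
    simp only [Complex.I_sq] at h
    linear_combination -h
  exact_mod_cast h'

lemma aux_poly (s : ℝ) (h0 : 0 ≤ s) (h1 : s ≤ 2.2) :
    2 * s * ((4 + (s ^ 2 - 0.839)) + (1 + (s ^ 2 - 0.839))
      + (1 + (s ^ 2 - 0.839)) * (4 + (s ^ 2 - 0.839)) *
        (0.39495 - 0.01982 * (s ^ 2 - 0.839) + 0.00243 * (s ^ 2 - 0.839) ^ 2))
      ≤ 3.14159 * ((1 + (s ^ 2 - 0.839)) * (4 + (s ^ 2 - 0.839))) := by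
  have key : ∀ l r : ℝ, l ≤ s → s ≤ r → ∀ i j : ℕ, 0 ≤ (s - l) ^ i * (r - s) ^ j := by
    intro l r hl hr i j
    have := sub_nonneg.2 hl
    have := sub_nonneg.2 hr
    positivity
  rcases le_total s (1 / 2) with ha | ha
  · have k := key 0 (1 / 2) h0 ha
    linarith [k 0 9, k 1 8, k 2 7, k 3 6, k 4 5, k 5 4, k 6 3, k 7 2, k 8 1, k 9 0]
  rcases le_total s (3 / 5) with hb | hb
  · have k := key (1 / 2) (3 / 5) ha hb
    linarith [k 0 9, k 1 8, k 2 7, k 3 6, k 4 5, k 5 4, k 6 3, k 7 2, k 8 1, k 9 0]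
  rcases le_total s 1 with hc | hc
  · have k := key (3 / 5) 1 hb hc
    linarith [k 0 9, k 1 8, k 2 7, k 3 6, k 4 5, k 5 4, k 6 3, k 7 2, k 8 1, k 9 0]
  · have k := key 1 (11 / 5) hc (by linarith)
    linarith [k 0 9, k 1 8, k 2 7, k 3 6, k 4 5, k 5 4, k 6 3, k 7 2, k 8 1, k 9 0]

lemma aux_small_sum (c : ℝ) (h0 : -0.839 < c) (h4 : c ≤ 4) :
    ∑' n : ℕ, 1 / (((n : ℝ) + 1) ^ 2 + c) ≤ 1 / (1 + c) + 1 / (4 + c)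
      + (0.39495 - 0.01982 * c + 0.00243 * c ^ 2) := by
  have hs := aux_summable c (by linarith)
  have z2 := (hasSum_nat_add_iff' 3).2 hasSum_zeta_two
  have z4 := (hasSum_nat_add_iff' 3).2 hasSum_zeta_four
  have zz := z2.add (z4.mul_left (c ^ 2 / 8.161 - c))
  rw [← hs.sum_add_tsum_nat_add 2]
  have hs2 := (summable_nat_add_iff 2).2 hs
  have hle := hs2.tsum_le_tsum (g := fun n : ℕ => 1 / ((n + 3 : ℕ) : ℝ) ^ 2
      + (c ^ 2 / 8.161 - c) * (1 / ((n + 3 : ℕ) : ℝ) ^ 4)) ?_ zz.summable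
  · rw [zz.tsum_eq] at hle
    have e1 : ∑ i ∈ Finset.range 2, 1 / (((i : ℕ) : ℝ) + 1) ^ 2 = 1 + 1 / 4 := by
      norm_num [Finset.sum_range_succ]
    have e : ∑ i ∈ Finset.range 2, 1 / ((((i : ℕ) : ℝ) + 1) ^ 2 + c)
        = 1 / (1 + c) + 1 / (4 + c) := by
      norm_num [Finset.sum_range_succ]
    rw [e]
    norm_num [Finset.sum_range_succ] at hle ⊢
    have p1 := pi_gt_d6
    have p2 := pi_lt_d6
    have q2 : π ^ 2 < 9.869607 := by nlinarith
    have q2' : 9.8696 < π ^ 2 := by nlinarith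
    have q4 : π ^ 4 < 97.4092 := by nlinarith
    have q4' : 97.4089 < π ^ 4 := by nlinarith
    refine hle.trans ?_
    have b1 : π ^ 4 / 90 - 17 / 16 ≤ 0.01983 := by linarith
    have b2 : 0.01982 ≤ π ^ 4 / 90 - 17 / 16 := by linarith
    generalize π ^ 4 / 90 - 17 / 16 = B at *
    nlinarith [mul_nonneg (sub_nonneg.2 b1) (sq_nonneg c), sq_nonneg c,
      mul_nonneg (sub_nonneg.2 b2) (by linarith : 0 ≤ c + 0.839)]
  · intro n
    push_cast
    have hn : (0 : ℝ) ≤ n := Nat.cast_nonneg n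
    have e : (n : ℝ) + 2 + 1 = n + 3 := by ring
    rw [e]
    have hm : 9 ≤ ((n : ℝ) + 3) ^ 2 := by nlinarith
    have e4 : ((n : ℝ) + 3) ^ 4 = (((n : ℝ) + 3) ^ 2) ^ 2 := by ring
    rw [e4]
    generalize ((n : ℝ) + 3) ^ 2 = m at *
    have hmc : 0 < m + c := by linarith
    have hid : 1 / m + (c ^ 2 / 8.161 - c) * (1 / m ^ 2) - 1 / (m + c)
        = c ^ 2 * (m + c - 8.161) / (8.161 * m ^ 2 * (m + c)) := by
      have : m ≠ 0 := by linarith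
      field_simp
      ring
    have : 0 ≤ c ^ 2 * (m + c - 8.161) / (8.161 * m ^ 2 * (m + c)) := by
      apply div_nonneg
      · apply mul_nonneg (sq_nonneg c); linarith
      · positivity
    linarith

lemma aux_upper (s c : ℝ) (hs : 0 < s) (hc : c = s ^ 2 - 0.839) :
    s / π * (2 * ∑' n : ℕ, 1 / (((n : ℝ) + 1) ^ 2 + c)) ≤ 1 := by
  have hc0 : -0.839 < c := by have := pow_pos hs 2; linarith
  have hpi := pi_gt_d6
  rcases le_total c 4 with h4 | h4
  · have h := aux_small_sum c hc0 h4
    have hp := aux_poly s hs.le (by nlinarith)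
    rw [← hc] at hp
    have c1 : 0 < 1 + c := by linarith
    have c4 : 0 < 4 + c := by linarith
    have h2 : 2 * s * (1 / (1 + c) + 1 / (4 + c)
      + (0.39495 - 0.01982 * c + 0.00243 * c ^ 2)) ≤ 3.14159 := by
      have : 2 * s * (1 / (1 + c) + 1 / (4 + c)
        + (0.39495 - 0.01982 * c + 0.00243 * c ^ 2)) = 2 * s * ((4 + c) + (1 + c)
        + (1 + c) * (4 + c) * (0.39495 - 0.01982 * c + 0.00243 * c ^ 2)) / ((1 + c) * (4 + c)) := by
        field_simp
      rw [this, div_le_iff₀ (by positivity)]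
      exact hp
    have h3 := mul_le_mul_of_nonneg_left h (by positivity : 0 ≤ 2 * s)
    rw [div_mul_eq_mul_div, div_le_one pi_pos]
    linarith
  · obtain ⟨a, ha, rfl⟩ : ∃ a : ℝ, 2 ≤ a ∧ c = a ^ 2 :=
      ⟨√c, Real.le_sqrt_of_sq_le (by linarith), (Real.sq_sqrt (by linarith)).symm⟩
    have ha0 : 0 < a := by linarith
    rw [aux_coth a ha0]
    set x := π * a with hx
    have hx0 : 0 < x := by positivity
    have hsinh : 0 < Real.sinh x := Real.sinh_pos_iff.2 hx0
    have hcoth : Real.cosh x / Real.sinh x ≤ 1 + 1 / x ^ 2 := by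
      rw [div_le_iff₀ hsinh]
      have e1 : Real.cosh x - Real.sinh x = Real.exp (-x) := Real.cosh_sub_sinh x
      have e2 := Real.sinh_eq x
      have e3 := Real.quadratic_le_exp_of_nonneg (x := 2 * x) (by positivity)
      have e4 : Real.exp x = Real.exp (2 * x) * Real.exp (-x) := by
        rw [← Real.exp_add]; ring_nf
      have e5 := Real.exp_pos (-x)
      have : Real.exp (-x) ≤ 1 / x ^ 2 * Real.sinh x := by
        rw [one_div, inv_mul_eq_div, le_div_iff₀ (by positivity), e2, e4]
        nlinarith [mul_le_mul_of_nonneg_right e3 e5.le, mul_pos hx0 e5]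
      linarith
    have hx2 : 1 / x ^ 2 ≤ 1 / (9 * a ^ 2) := by
      apply one_div_le_one_div_of_le (by positivity)
      rw [hx, mul_pow]
      have : 9 ≤ π ^ 2 := by nlinarith
      nlinarith [sq_nonneg a]
    generalize Real.cosh x / Real.sinh x = C at *
    have e : s / π * (2 * ((π * C - 1 / a) / (2 * a))) = s * (a * C - 1 / π) / a ^ 2 := by
      field_simp
    rw [e, div_le_one (by positivity)]
    have hpinv : 0.318 ≤ 1 / π := by
      rw [le_div_iff₀ pi_pos]; have := pi_lt_d6; linarith
    have hsa : s ≤ a + 0.42 / a := by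
      refine (sq_le_sq₀ hs.le (by positivity)).1 ?_
      have : (a + 0.42 / a) ^ 2 = a ^ 2 + 0.84 + (0.42 / a) ^ 2 := by
        field_simp; ring
      rw [this]
      nlinarith [sq_nonneg (0.42 / a)]
    have hCa : a * C - 1 / π ≤ a + 1 / (9 * a) - 0.318 := by
      have : a * C ≤ a * (1 + 1 / (9 * a ^ 2)) :=
        mul_le_mul_of_nonneg_left (by linarith) ha0.le
      have e : a * (1 + 1 / (9 * a ^ 2)) = a + 1 / (9 * a) := by field_simp
      linarith
    have hpos : 0 ≤ a + 1 / (9 * a) - 0.318 := by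
      have : 0 < 1 / (9 * a) := by positivity
      linarith
    refine (mul_le_mul_of_nonneg_left hCa hs.le).trans
      ((mul_le_mul_of_nonneg_right hsa hpos).trans ?_)
    have hi : (a + 0.42 / a) * (a + 1 / (9 * a) - 0.318)
      = ((a ^ 2 + 0.42) * (a ^ 2 + 1 / 9 - 0.318 * a)) / a ^ 2 := by
      field_simp
    rw [hi, div_le_iff₀ (by positivity)]
    nlinarith [mul_nonneg (sub_nonneg.2 ha) (sq_nonneg a), mul_nonneg (sub_nonneg.2 ha) ha0.le]

lemma aux_lower (s : ℝ) (hs : 0 < s) :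
    1 - 1 / (π * s) ≤ s / π * (2 * ∑' n : ℕ, 1 / (((n : ℝ) + 1) ^ 2 + s ^ 2)) := by
  rw [aux_coth s hs]
  have hx0 : 0 < π * s := by positivity
  have hsinh : 0 < Real.sinh (π * s) := Real.sinh_pos_iff.2 hx0
  have hC : 1 ≤ Real.cosh (π * s) / Real.sinh (π * s) := by
    rw [le_div_iff₀ hsinh]
    linarith [Real.sinh_lt_cosh (π * s)]
  generalize Real.cosh (π * s) / Real.sinh (π * s) = C at *
  have e : s / π * (2 * ((π * C - 1 / s) / (2 * s))) = C - 1 / (π * s) := by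
    field_simp
  rw [e]
  linarith

lemma aux_mono (c d : ℝ) (hc : -1 < c) (h : c ≤ d) :
    ∑' n : ℕ, 1 / (((n : ℝ) + 1) ^ 2 + d) ≤ ∑' n : ℕ, 1 / (((n : ℝ) + 1) ^ 2 + c) := by
  refine (aux_summable d (by linarith)).tsum_le_tsum ?_ (aux_summable c hc)
  intro n
  have : (0 : ℝ) ≤ n := Nat.cast_nonneg n
  apply one_div_le_one_div_of_le
  · nlinarith
  · linarith

theorem stmt_9 (β : ℝ) (hβ0 : 0 ≤ β) (hβ1 : β ≤ 0.839) : K2 β = 1 := by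
  have hF : ∀ l : Set.Ioi (0 : ℝ),
      Real.sqrt l / π * ∑' k : {k : ℤ // k ≠ 0}, 1 / ((k.1 : ℝ) ^ 2 - β + l)
      = Real.sqrt l / π * (2 * ∑' n : ℕ, 1 / (((n : ℝ) + 1) ^ 2 + ((l : ℝ) - β))) := by
    intro l
    have hl : (0 : ℝ) < l := l.2
    rw [← (aux_hasSum ((l : ℝ) - β) (by linarith)).tsum_eq]
    congr 1
    apply tsum_congr
    intro k
    congr 1
    ring
  have hle : ∀ l : Set.Ioi (0 : ℝ),
      Real.sqrt l / π * ∑' k : {k : ℤ // k ≠ 0}, 1 / ((k.1 : ℝ) ^ 2 - β + l) ≤ 1 := by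
    intro l
    have hl : (0 : ℝ) < l := l.2
    rw [hF]
    refine le_trans ?_ (aux_upper (√l) (l - 0.839) (Real.sqrt_pos.2 hl)
      (by rw [Real.sq_sqrt hl.le]))
    have := aux_mono (l - 0.839) (l - β) (by linarith) (by linarith)
    gcongr
  unfold K2
  haveI : Nonempty (Set.Ioi (0 : ℝ)) := ⟨⟨1, Set.mem_Ioi.2 one_pos⟩⟩
  apply le_antisymm
  · exact ciSup_le hle
  · apply le_of_forall_pos_le_add
    intro ε hε
    have hl : (0 : ℝ) < (1 / ε) ^ 2 := by positivity
    have hb := le_ciSup (f := fun l : Set.Ioi (0 : ℝ) =>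
      Real.sqrt l / π * ∑' k : {k : ℤ // k ≠ 0}, 1 / ((k.1 : ℝ) ^ 2 - β + l))
      ⟨1, by rintro _ ⟨l, rfl⟩; exact hle l⟩ ⟨(1 / ε) ^ 2, hl⟩
    refine le_trans ?_ (add_le_add_left hb ε)
    have hF1 := hF ⟨(1 / ε) ^ 2, hl⟩
    simp only [] at hF1 ⊢
    rw [hF1, Real.sqrt_sq (by positivity)]
    have h1 := aux_lower (1 / ε) (by positivity)
    have h2 := aux_mono ((1 / ε) ^ 2 - β) ((1 / ε) ^ 2) (by linarith) (by linarith)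
    have h3 : 1 / ε / π * (2 * ∑' n : ℕ, 1 / (((n : ℝ) + 1) ^ 2 + (1 / ε) ^ 2))
      ≤ 1 / ε / π * (2 * ∑' n : ℕ, 1 / (((n : ℝ) + 1) ^ 2 + ((1 / ε) ^ 2 - β))) := by
      gcongr
    have h4 : 1 / (π * (1 / ε)) ≤ ε := by
      have : 1 / (π * (1 / ε)) = ε / π := by field_simp
      rw [this, div_le_iff₀ pi_pos]
      nlinarith [pi_gt_three]
    linarith
end
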